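/- arXiv:1308.3181 — 4 statements merged into one kernel-verified Lean document; each statement's English description precedes it below -/
import Mathlib

section
/- Every Busemann surface is L1-embeddable: if (S,d) is a Busemann space whose underlying topological space is homeomorphic to ℝ², then there exists a measure space (Ω,𝒜,μ) and a map φ : S → L¹(Ω,𝒜,μ) such that ‖φ(x) − φ(y)‖₁ = d(x,y) for all x,y ∈ S. -/
open Metric Set MeasureTheory

/-- `γ` is a geodesic on the interval `[a, b]`. -/
def IsGeodesicOn {S : Type*} [MetricSpace S] (γ : ℝ → S) (a b : ℝ) : Prop :=
  ∀ s ∈ Set.Icc a b, ∀ t ∈ Set.Icc a b, dist (γ s) (γ t) = |s - t|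

/-- `γ` is a geodesic from `x` to `y`. -/
def IsGeodesicFromTo {S : Type*} [MetricSpace S] (γ : ℝ → S) (x y : S) : Prop :=
  IsGeodesicOn γ 0 (dist x y) ∧ γ 0 = x ∧ γ (dist x y) = y

/-- A geodesic metric space: every pair of points is joined by a geodesic. -/
def IsGeodesicMetricSpace (S : Type*) [MetricSpace S] : Prop :=
  ∀ x y : S, ∃ γ : ℝ → S, IsGeodesicFromTo γ x y

/-- A Busemann space: a geodesic metric space in which the distance function between
any two geodesics is convex. -/
def IsBusemannSpace (S : Type*) [MetricSpace S] : Prop :=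
  IsGeodesicMetricSpace S ∧
    ∀ (γ γ' : ℝ → S) (a b a' b' : ℝ), a ≤ b → a' ≤ b' →
      IsGeodesicOn γ a b → IsGeodesicOn γ' a' b' →
      ConvexOn ℝ (Set.Icc (0 : ℝ) 1)
        (fun t => dist (γ ((1 - t) * a + t * b)) (γ' ((1 - t) * a' + t * b')))

/-- A Busemann surface: a Busemann space homeomorphic to the plane `ℝ²`. -/
def IsBusemannSurface (S : Type*) [MetricSpace S] : Prop :=
  IsBusemannSpace S ∧ Nonempty (S ≃ₜ (ℝ × ℝ))

/-- `G` is the image of a geodesic from `x` to `y`. -/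
def IsGeodesicSegment {S : Type*} [MetricSpace S] (x y : S) (G : Set S) : Prop :=
  ∃ γ : ℝ → S, IsGeodesicFromTo γ x y ∧ G = γ '' Set.Icc 0 (dist x y)

/-- Convexity of a set with respect to a geodesic-segment assignment `seg`. -/
def SegConvex {S : Type*} (seg : S → S → Set S) (R : Set S) : Prop :=
  ∀ p ∈ R, ∀ q ∈ R, seg p q ⊆ R

/-- The convex hull: the smallest `seg`-convex set containing `Q`. -/
def segConvexHull {S : Type*} (seg : S → S → Set S) (Q : Set S) : Set S :=
  ⋂₀ {R : Set S | SegConvex seg R ∧ Q ⊆ R}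

/-- A line of `S`: the image of an isometric embedding of `ℝ` into `S`. -/
def IsLineSet {S : Type*} [MetricSpace S] (L : Set S) : Prop :=
  ∃ ℓ : ℝ → S, Isometry ℓ ∧ L = Set.range ℓ

/-- An open halfplane determined by a line `L`: a connected component of `S \ L`. -/
def IsOpenHalfplane {S : Type*} [MetricSpace S] (L H : Set S) : Prop :=
  ∃ x, x ∉ L ∧ H = connectedComponentIn Lᶜ x

/-- A closed halfplane determined by a line `L`: an open halfplane together with `L`. -/
def IsClosedHalfplane {S : Type*} [MetricSpace S] (L H : Set S) : Prop :=
  ∃ H', IsOpenHalfplane L H' ∧ H = H' ∪ L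

/-- `X` and `Y` are line-separable: they lie in different open halfplanes of some line. -/
def LineSeparable {S : Type*} [MetricSpace S] (X Y : Set S) : Prop :=
  ∃ L H₁ H₂ : Set S, IsLineSet L ∧ IsOpenHalfplane L H₁ ∧ IsOpenHalfplane L H₂ ∧
    H₁ ≠ H₂ ∧ X ⊆ H₁ ∧ Y ⊆ H₂

/-- `X` and `Y` are weakly line-separable: they lie in different closed halfplanes of
some line. -/
def WeaklyLineSeparable {S : Type*} [MetricSpace S] (X Y : Set S) : Prop :=
  ∃ L H₁ H₂ : Set S, IsLineSet L ∧ IsClosedHalfplane L H₁ ∧ IsClosedHalfplane L H₂ ∧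
    H₁ ≠ H₂ ∧ X ⊆ H₁ ∧ Y ⊆ H₂

/-- `Q` is in general position: no three distinct points of `Q` lie on a common line. -/
def InGeneralPosition {S : Type*} [MetricSpace S] (Q : Set S) : Prop :=
  ∀ x ∈ Q, ∀ y ∈ Q, ∀ z ∈ Q, x ≠ y → y ≠ z → x ≠ z →
    ∀ L : Set S, IsLineSet L → ¬(x ∈ L ∧ y ∈ L ∧ z ∈ L)

/-- `L` is a tangent line of the set `K`. -/
def IsTangentLine {S : Type*} [MetricSpace S] (L K : Set S) : Prop :=
  IsLineSet L ∧ (K ∩ L).Nonempty ∧ ∃ H, IsClosedHalfplane L H ∧ K ⊆ H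

/-- `L` is an inner bitangent of `K'` and `K''`. -/
def IsInnerBitangent {S : Type*} [MetricSpace S] (L K' K'' : Set S) : Prop :=
  IsTangentLine L K' ∧ IsTangentLine L K'' ∧
    ∃ H₁ H₂, IsClosedHalfplane L H₁ ∧ IsClosedHalfplane L H₂ ∧ H₁ ≠ H₂ ∧
      K' ⊆ H₁ ∧ K'' ⊆ H₂

/-!
Finite subsets are embedded first. In a Busemann surface geodesics are unique and depend
continuously on their endpoints. Choose a closed topological disc `K` containing all geodesics
between the finitely many given points. Because circles in the plane are not contractible in the
complement of a point they surround, each of these geodesics extends to a chord of `K` with ends on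
the boundary circle. Let `D` be the intrinsic distance of `K`. Exchanging the tails of crossing
paths gives a Monge inequality, by which `s ↦ D s x - D s y` is monotone on each of the two boundary
arcs cut off by the chord through `x` and `y`, with extreme values `± dist x y` at the ends of that
chord. Its total variation along the finitely many chord ends is therefore `4 * dist x y`, so the
increments of `D · x` between consecutive chord ends, divided by `4`, form an `ℓ¹` embedding.

For a dense sequence, the embeddings of its initial segments are encoded as measures of mass at most
`1` on the cube `[-1, 1]^ℕ`. A weak cluster point of these measures gives an `L¹` embedding of the
sequence, which extends to the whole space by completeness.
-/

/-! ### Plane topology -/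

section PlaneTopology

variable {X : Type*} [TopologicalSpace X]

lemma exists_continuous_exp_eq [SimplyConnectedSpace X] [LocallyPathConnectedSpace X]
    {f : X → ℂ} (hf : Continuous f) (hf₀ : ∀ x, f x ≠ 0) :
    ∃ g : X → ℂ, Continuous g ∧ ∀ x, Complex.exp (g x) = f x := by
  obtain ⟨x₀⟩ : Nonempty X := inferInstance
  obtain ⟨g, ⟨-, hg⟩, -⟩ := Complex.isCoveringMapOn_exp.existsUnique_continuousMap_lifts
    ⟨f, hf⟩ (Complex.exp_log (hf₀ x₀)) hf₀
  exact ⟨g, g.continuous, congrFun hg⟩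

lemma eq_of_exp_comp_const [PreconnectedSpace X] {g : X → ℂ} (hg : Continuous g)
    (h : ∀ x y, Complex.exp (g x) = Complex.exp (g y)) (x y : X) : g x = g y :=
  Complex.isCoveringMap_exp.const_of_comp hg (fun x y => Subtype.ext (h x y)) x y

lemma im_sub_eq_arg_sub_arg [PreconnectedSpace X] {g G : X → ℂ} {c : ℂ} (hg : Continuous g)
    (hG : Continuous G) (hslit : ∀ x, G x ∈ Complex.slitPlane)
    (h : ∀ x, Complex.exp (g x) = c * G x) (x y : X) :
    (g x - g y).im = (G x).arg - (G y).arg := by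
  have hexp (z : X) : Complex.exp (g z - Complex.log (G z)) = c := by
    have hGz : G z ≠ 0 := Complex.slitPlane_ne_zero (hslit z)
    rw [Complex.exp_sub, h, Complex.exp_log hGz, mul_div_cancel_right₀ _ hGz]
  have hconst : g x - Complex.log (G x) = g y - Complex.log (G y) :=
    eq_of_exp_comp_const (hg.sub (hG.clog hslit)) (fun z w => (hexp z).trans (hexp w).symm) x y
  have him := congrArg Complex.im hconst
  simp only [Complex.sub_im, Complex.log_im] at him ⊢
  linarith

lemma one_sub_mem_slitPlane {z : ℂ} (hz : ‖z‖ ≤ 1) (hz₁ : z ≠ 1) :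
    1 - z ∈ Complex.slitPlane := by
  by_contra hmem
  simp only [Complex.mem_slitPlane_iff, not_or, not_lt, not_not, Complex.sub_re, Complex.sub_im,
    Complex.one_re, Complex.one_im] at hmem
  have hre : z.re ≤ 1 := (Complex.re_le_norm z).trans hz
  exact hz₁ (Complex.ext (by simp only [Complex.one_re]; linarith)
    (by simp only [Complex.one_im]; linarith))

lemma arg_one_sub_circleExp_of_pos {δ : ℝ} (h₀ : 0 < δ) (h₁ : δ < 2 * Real.pi) :
    (1 - (Circle.exp δ : ℂ)).arg = (δ - Real.pi) / 2 := by
  have hsin : 0 < 2 * Real.sin (δ / 2) :=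
    mul_pos two_pos (Real.sin_pos_of_pos_of_lt_pi (by linarith) (by linarith))
  have hpolar : 1 - (Circle.exp δ : ℂ) =
      (2 * Real.sin (δ / 2) : ℝ) * (Circle.exp ((δ - Real.pi) / 2) : ℂ) := by
    have hδ : (δ : ℂ) * Complex.I = δ / 2 * Complex.I + δ / 2 * Complex.I := by ring
    have hhalf : ((δ : ℂ) - Real.pi) / 2 * Complex.I =
        δ / 2 * Complex.I - Real.pi / 2 * Complex.I := by ring
    have hinv : Complex.exp (δ / 2 * Complex.I) * Complex.exp (-(δ / 2 * Complex.I)) = 1 := by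
      rw [← Complex.exp_add, add_neg_cancel, Complex.exp_zero]
    rw [Circle.coe_exp, Circle.coe_exp]
    push_cast
    rw [Complex.two_sin, hhalf, Complex.exp_sub, Complex.exp_pi_div_two_mul_I, hδ, Complex.exp_add,
      neg_mul, mul_assoc, mul_div_cancel₀ _ Complex.I_ne_zero]
    linear_combination -hinv
  rw [hpolar, Complex.arg_real_mul _ hsin, Circle.arg_exp] <;> linarith [Real.pi_pos]

lemma arg_one_sub_circleExp_of_neg {δ : ℝ} (h₀ : δ < 0) (h₁ : -(2 * Real.pi) < δ) :
    (1 - (Circle.exp δ : ℂ)).arg = (δ + Real.pi) / 2 := by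
  rw [← Circle.exp_add_two_pi, arg_one_sub_circleExp_of_pos (by linarith) (by linarith)]
  ring

lemma im_sub_eq_of_exp_eq_mul_circleExp_sub [PreconnectedSpace X] {g R : X → ℂ} {c : ℂ} {ω : ℝ}
    (hg : Continuous g) (hR : Continuous R) (hR₁ : ∀ x, ‖R x‖ ≤ 1)
    (hRω : ∀ x, R x ≠ Circle.exp ω)
    (h : ∀ x, Complex.exp (g x) = c * (Circle.exp ω - R x)) {x y : X} {θ η : ℝ}
    (hx : R x = Circle.exp θ) (hy : R y = Circle.exp η) :
    (g x - g y).im = (1 - (Circle.exp (θ - ω) : ℂ)).arg - (1 - (Circle.exp (η - ω) : ℂ)).arg := by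
  have hslit (z : X) : 1 - R z / Circle.exp ω ∈ Complex.slitPlane :=
    one_sub_mem_slitPlane (by rw [norm_div, Circle.norm_coe, div_one]; exact hR₁ z)
      fun hz => hRω z ((div_eq_one_iff_eq (Circle.coe_ne_zero _)).1 hz)
  have harg := im_sub_eq_arg_sub_arg (G := fun z => 1 - R z / Circle.exp ω)
    (c := c * Circle.exp ω) hg (continuous_const.sub (hR.div_const _)) hslit (fun z => by
      rw [h z, mul_assoc, mul_one_sub, mul_div_cancel₀ _ (Circle.coe_ne_zero _)]) x y
  simpa only [hx, hy, Circle.exp_sub, Circle.coe_div] using harg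

/-- The four complex numbers lie on the unit circle and are met in the order `a`, `s`, `t`, `b`
(possibly with repetitions) when the circle is traversed once counterclockwise from `a`. -/
def InCircularOrder (a s t b : ℂ) : Prop :=
  ∃ α σ τ β : ℝ, α ≤ σ ∧ σ ≤ τ ∧ τ ≤ β ∧ β ≤ α + 2 * Real.pi ∧
    a = Circle.exp α ∧ s = Circle.exp σ ∧ t = Circle.exp τ ∧ b = Circle.exp β

-- If the paths `P` and `Q` were disjoint, `P u - Q v` would have a continuous logarithm on the
-- square, but its argument changes by `2π` along the boundary of the square.
lemma exists_path_eq_path_of_interleaved {α σ τ β : ℝ} (hασ : α < σ) (hστ : σ < τ) (hτβ : τ < β)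
    (hβα : β < α + 2 * Real.pi) (P : Path (Circle.exp α : ℂ) (Circle.exp τ))
    (Q : Path (Circle.exp σ : ℂ) (Circle.exp β)) (hP : ∀ u, ‖P u‖ ≤ 1) (hQ : ∀ v, ‖Q v‖ ≤ 1) :
    ∃ u v, P u = Q v := by
  by_contra! hne
  have hne' (u v : ℝ) : P.extend u ≠ Q.extend v := hne _ _
  obtain ⟨g, hg, hexp⟩ := exists_continuous_exp_eq
    (f := fun p : ℝ × ℝ => P.extend p.1 - Q.extend p.2)
    ((P.continuous_extend.comp continuous_fst).sub (Q.continuous_extend.comp continuous_snd))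
    fun p => sub_ne_zero.2 (hne' _ _)
  have bottom := im_sub_eq_of_exp_eq_mul_circleExp_sub (g := fun u => g (u, 0)) (c := -1)
    (by fun_prop) P.continuous_extend (fun u => hP _) (fun u => Q.extend_zero ▸ hne' u 0)
    (fun u => by rw [hexp, Q.extend_zero]; ring) P.extend_one P.extend_zero
  have top := im_sub_eq_of_exp_eq_mul_circleExp_sub (g := fun u => g (u, 1)) (c := -1)
    (by fun_prop) P.continuous_extend (fun u => hP _) (fun u => Q.extend_one ▸ hne' u 1)
    (fun u => by rw [hexp, Q.extend_one]; ring) P.extend_one P.extend_zero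
  have left := im_sub_eq_of_exp_eq_mul_circleExp_sub (g := fun v => g (0, v)) (c := 1)
    (by fun_prop) Q.continuous_extend (fun v => hQ _) (fun v => P.extend_zero ▸ (hne' 0 v).symm)
    (fun v => by rw [hexp, P.extend_zero, one_mul]) Q.extend_one Q.extend_zero
  have right := im_sub_eq_of_exp_eq_mul_circleExp_sub (g := fun v => g (1, v)) (c := 1)
    (by fun_prop) Q.continuous_extend (fun v => hQ _) (fun v => P.extend_one ▸ (hne' 1 v).symm)
    (fun v => by rw [hexp, P.extend_one, one_mul]) Q.extend_one Q.extend_zero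
  rw [arg_one_sub_circleExp_of_pos (by linarith) (by linarith),
    arg_one_sub_circleExp_of_neg (by linarith) (by linarith), Complex.sub_im] at bottom right
  rw [arg_one_sub_circleExp_of_neg (by linarith) (by linarith),
    arg_one_sub_circleExp_of_neg (by linarith) (by linarith), Complex.sub_im] at top
  rw [arg_one_sub_circleExp_of_pos (by linarith) (by linarith),
    arg_one_sub_circleExp_of_pos (by linarith) (by linarith), Complex.sub_im] at left
  linarith [Real.pi_pos]

lemma InCircularOrder.inter_nonempty_of_joinedIn {a s t b : ℂ} (h : InCircularOrder a s t b)
    {A B : Set ℂ} (hA : A ⊆ closedBall 0 1) (hB : B ⊆ closedBall 0 1)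
    (hat : JoinedIn A a t) (hsb : JoinedIn B s b) : (A ∩ B).Nonempty := by
  obtain ⟨α, σ, τ, β, hασ, hστ, hτβ, hβα, rfl, rfl, rfl, rfl⟩ := h
  rcases hασ.eq_or_lt with rfl | hασ
  · exact ⟨_, hat.source_mem, hsb.source_mem⟩
  rcases hστ.eq_or_lt with rfl | hστ
  · exact ⟨_, hat.target_mem, hsb.source_mem⟩
  rcases hτβ.eq_or_lt with rfl | hτβ
  · exact ⟨_, hat.target_mem, hsb.target_mem⟩
  rcases hβα.eq_or_lt with rfl | hβα
  · rw [Circle.exp_add_two_pi] at hsb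
    exact ⟨_, hat.source_mem, hsb.target_mem⟩
  obtain ⟨P, hP⟩ := hat
  obtain ⟨Q, hQ⟩ := hsb
  obtain ⟨u, v, huv⟩ := exists_path_eq_path_of_interleaved hασ hστ hτβ hβα P Q
    (fun u => mem_closedBall_zero_iff.1 (hA (hP u)))
    (fun v => mem_closedBall_zero_iff.1 (hB (hQ v)))
  exact ⟨P u, hP u, huv ▸ hQ v⟩

lemma exists_eq_zero_of_homotopy_const_circle {F : Circle × unitInterval → ℂ} {c : ℂ}
    (hF : Continuous F) (h₀ : ∀ z, F (z, 0) = c) (h₁ : ∀ z, F (z, 1) = z) : ∃ p, F p = 0 := by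
  by_contra! hne
  let toCylinder : ℝ × ℝ → Circle × unitInterval :=
    fun p => (Circle.exp p.1, projIcc 0 1 zero_le_one p.2)
  have hcyl : Continuous toCylinder := by fun_prop
  obtain ⟨g, hg, hexp⟩ := exists_continuous_exp_eq (hF.comp hcyl) fun p => hne _
  simp only [Function.comp_apply, toCylinder] at hexp
  have bottom : g (2 * Real.pi, 0) = g (0, 0) :=
    eq_of_exp_comp_const (g := fun u => g (u, 0)) (by fun_prop)
      (fun u v => by simp only [hexp, projIcc_left]; exact (h₀ _).trans (h₀ _).symm) _ _
  have sides : g (2 * Real.pi, 1) - g (0, 1) = g (2 * Real.pi, 0) - g (0, 0) :=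
    eq_of_exp_comp_const (g := fun v => g (2 * Real.pi, v) - g (0, v)) (by fun_prop)
      (fun u v => by simp only [Complex.exp_sub, hexp, Circle.exp_two_pi, Circle.exp_zero,
        div_self (hne _)]) _ _
  have top : g (2 * Real.pi, 1) - (2 * Real.pi : ℝ) * Complex.I = g (0, 1) - (0 : ℝ) * Complex.I :=
    eq_of_exp_comp_const (g := fun u : ℝ => g (u, 1) - u * Complex.I) (by fun_prop)
      (fun u v => by
        have hone (r : ℝ) : Complex.exp (g (r, 1) - r * Complex.I) = 1 := by
          rw [Complex.exp_sub, hexp, projIcc_right]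
          exact (congrArg (· / _) (h₁ _)).trans (div_self (Complex.exp_ne_zero _))
        exact (hone u).trans (hone v).symm) _ _
  have hzero : ((2 * Real.pi : ℝ) : ℂ) * Complex.I = 0 := by
    rw [Complex.ofReal_zero, zero_mul] at top
    linear_combination sides + bottom - top
  simp [Real.pi_ne_zero] at hzero

end PlaneTopology

/-! ### Metric intervals and Lipschitz paths -/

section MetricInterval

variable {X : Type*} [PseudoMetricSpace X] {a b x y z : X}

/-- The set of points lying between `a` and `b`, that is, those for which the triangle inequality
is an equality. In a uniquely geodesic space it is the geodesic segment from `a` to `b`. -/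
def metricInterval (a b : X) : Set X := {z | dist a z + dist z b = dist a b}

lemma mem_metricInterval : z ∈ metricInterval a b ↔ dist a z + dist z b = dist a b := Iff.rfl

lemma metricInterval_comm (a b : X) : metricInterval a b = metricInterval b a := by
  ext z
  rw [mem_metricInterval, mem_metricInterval, dist_comm b z, dist_comm z a, dist_comm b a,
    dist_comm z b, dist_comm a z, add_comm]

lemma left_mem_metricInterval (a b : X) : a ∈ metricInterval a b := by
  rw [mem_metricInterval, dist_self, zero_add]

lemma right_mem_metricInterval (a b : X) : b ∈ metricInterval a b := by
  rw [mem_metricInterval, dist_self, add_zero]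

lemma isClosed_metricInterval (a b : X) : IsClosed (metricInterval a b) :=
  isClosed_eq (by fun_prop) (by fun_prop)

lemma dist_left_le_of_mem_metricInterval (hz : z ∈ metricInterval a b) : dist a z ≤ dist a b := by
  linarith [mem_metricInterval.1 hz, dist_nonneg (x := z) (y := b)]

lemma metricInterval_subset_left (hx : x ∈ metricInterval a b) :
    metricInterval a x ⊆ metricInterval a b := by
  intro z hz
  rw [mem_metricInterval] at *
  linarith [dist_triangle z x b, dist_triangle a z b]

lemma metricInterval_subset_right (hx : x ∈ metricInterval a b) :
    metricInterval x b ⊆ metricInterval a b := by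
  rw [metricInterval_comm a b] at hx ⊢
  rw [metricInterval_comm x b]
  exact metricInterval_subset_left hx

lemma mem_metricInterval_of_mem_left (hx : x ∈ metricInterval a b) (hz : z ∈ metricInterval a x) :
    x ∈ metricInterval z b := by
  rw [mem_metricInterval] at *
  linarith [dist_triangle z x b, dist_triangle a z b]

lemma mem_metricInterval_of_mem_right (hx : x ∈ metricInterval a b)
    (hz : z ∈ metricInterval x b) : x ∈ metricInterval a z := by
  rw [metricInterval_comm] at hx hz ⊢
  exact mem_metricInterval_of_mem_left hx hz

end MetricInterval

section LipschitzPath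

variable {X : Type*} [PseudoMetricSpace X] {K : Set X} {γ : ℝ → X} {ℓ m : ℝ} {p q r : X}

lemma lipschitzOnWith_Icc_of_Icc_of_Icc {C : NNReal} {f : ℝ → X} {a b c : ℝ}
    (hab : LipschitzOnWith C f (Icc a b)) (hbc : LipschitzOnWith C f (Icc b c)) :
    LipschitzOnWith C f (Icc a c) := by
  refine LipschitzOnWith.of_dist_le_mul fun s hs t ht => ?_
  wlog hst : s ≤ t generalizing s t
  · rw [dist_comm, dist_comm s]
    exact this t ht s hs (le_of_not_ge hst)
  rcases le_total t b with htb | htb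
  · exact hab.dist_le_mul s ⟨hs.1, hst.trans htb⟩ t ⟨ht.1, htb⟩
  rcases le_total b s with hbs | hbs
  · exact hbc.dist_le_mul s ⟨hbs, hs.2⟩ t ⟨htb, ht.2⟩
  calc dist (f s) (f t)
      ≤ dist (f s) (f b) + dist (f b) (f t) := dist_triangle _ _ _
    _ ≤ C * dist s b + C * dist b t := add_le_add
        (hab.dist_le_mul s ⟨hs.1, hbs⟩ b ⟨hs.1.trans hbs, le_rfl⟩)
        (hbc.dist_le_mul b ⟨le_rfl, htb.trans ht.2⟩ t ⟨htb, ht.2⟩)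
    _ = C * dist s t := by
        rw [← mul_add, dist_add_dist_of_mem_segment (segment_eq_Icc hst ▸ ⟨hbs, htb⟩)]

/-- `γ`, restricted to `[0, ℓ]`, is a `1`-Lipschitz path in `K` from `p` to `q`. The number `ℓ`
plays the role of the length of the path, which it bounds from above. -/
structure IsLipschitzPath (K : Set X) (γ : ℝ → X) (ℓ : ℝ) (p q : X) : Prop where
  nonneg : 0 ≤ ℓ
  lipschitz : LipschitzOnWith 1 γ (Icc 0 ℓ)
  source : γ 0 = p
  target : γ ℓ = q
  mapsTo : MapsTo γ (Icc 0 ℓ) K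

namespace IsLipschitzPath

lemma dist_le (h : IsLipschitzPath K γ ℓ p q) : dist p q ≤ ℓ := by
  have hle := h.lipschitz.dist_le_mul 0 (left_mem_Icc.2 h.nonneg) ℓ (right_mem_Icc.2 h.nonneg)
  rwa [h.source, h.target, NNReal.coe_one, one_mul, dist_zero_left, Real.norm_of_nonneg h.nonneg]
    at hle

lemma subpath (h : IsLipschitzPath K γ ℓ p q) {u v : ℝ} (hu : 0 ≤ u) (huv : u ≤ v) (hv : v ≤ ℓ) :
    IsLipschitzPath K (fun r => γ (r + u)) (v - u) (γ u) (γ v) := by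
  have hmaps : MapsTo (· + u) (Icc 0 (v - u)) (Icc 0 ℓ) := fun r hr =>
    ⟨by linarith [hr.1], by linarith [hr.2]⟩
  have hshift : LipschitzOnWith 1 (· + u) (Icc 0 (v - u)) :=
    (isometry_add_right u).lipschitz.lipschitzOnWith
  exact ⟨sub_nonneg.2 huv,
    by simpa only [one_mul, Function.comp_def] using h.lipschitz.comp hshift hmaps,
    by rw [zero_add], by rw [sub_add_cancel], h.mapsTo.comp hmaps⟩

lemma initial (h : IsLipschitzPath K γ ℓ p q) {u : ℝ} (hu : u ∈ Icc 0 ℓ) :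
    IsLipschitzPath K γ u p (γ u) := by
  simpa only [add_zero, sub_zero, h.source] using h.subpath le_rfl hu.1 hu.2

lemma trans (h : IsLipschitzPath K γ ℓ p q) {η : ℝ → X} (h' : IsLipschitzPath K η m q r) :
    ∃ σ, IsLipschitzPath K σ (ℓ + m) p r ∧ σ ℓ = q := by
  let σ : ℝ → X := fun u => if u ≤ ℓ then γ u else η (u - ℓ)
  have hleft : ∀ u ∈ Icc 0 ℓ, σ u = γ u := fun u hu => if_pos hu.2
  have hright : ∀ u ∈ Icc ℓ (ℓ + m), σ u = η (u - ℓ) := by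
    intro u hu
    rcases hu.1.eq_or_lt with rfl | hlt
    · rw [hleft _ (right_mem_Icc.2 h.nonneg), h.target, sub_self, h'.source]
    · exact if_neg hlt.not_ge
  have hsub {u : ℝ} (hu : u ∈ Icc ℓ (ℓ + m)) : u - ℓ ∈ Icc 0 m :=
    ⟨by linarith [hu.1], by linarith [hu.2]⟩
  have hlip : LipschitzOnWith 1 σ (Icc 0 (ℓ + m)) := by
    refine lipschitzOnWith_Icc_of_Icc_of_Icc (b := ℓ) ?_ ?_ <;>
      refine LipschitzOnWith.mk_one fun u hu v hv => ?_
    · rw [hleft u hu, hleft v hv]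
      simpa only [NNReal.coe_one, one_mul] using h.lipschitz.dist_le_mul u hu v hv
    · rw [hright u hu, hright v hv]
      simpa only [NNReal.coe_one, one_mul, dist_sub_right] using
        h'.lipschitz.dist_le_mul _ (hsub hu) _ (hsub hv)
  refine ⟨σ, ⟨add_nonneg h.nonneg h'.nonneg, hlip, ?_, ?_, fun u hu => ?_⟩, ?_⟩
  · rw [hleft 0 (left_mem_Icc.2 h.nonneg), h.source]
  · rw [hright _ ⟨le_add_of_nonneg_right h'.nonneg, le_rfl⟩, add_sub_cancel_left, h'.target]
  · rcases le_total u ℓ with hul | hul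
    · exact hleft u ⟨hu.1, hul⟩ ▸ h.mapsTo ⟨hu.1, hul⟩
    · exact hright u ⟨hul, hu.2⟩ ▸ h'.mapsTo (hsub ⟨hul, hu.2⟩)
  · rw [hleft ℓ (right_mem_Icc.2 h.nonneg), h.target]

lemma isPathConnected_image (h : IsLipschitzPath K γ ℓ p q) : IsPathConnected (γ '' Icc 0 ℓ) :=
  ((convex_Icc 0 ℓ).isPathConnected ⟨0, left_mem_Icc.2 h.nonneg⟩).image' h.lipschitz.continuousOn

lemma exists_first_hit (h : IsLipschitzPath K γ ℓ p q) {L : Set X} (hL : IsClosed L) (hq : q ∈ L) :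
    ∃ u ∈ Icc 0 ℓ, γ '' Icc 0 u ∩ L = {γ u} := by
  have hcompact : IsCompact (Icc 0 ℓ ∩ γ ⁻¹' L) := isCompact_Icc.of_isClosed_subset
    (h.lipschitz.continuousOn.preimage_isClosed_of_isClosed isClosed_Icc hL) inter_subset_left
  obtain ⟨u, ⟨hu, huL⟩, hmin⟩ := hcompact.exists_isLeast
    ⟨ℓ, right_mem_Icc.2 h.nonneg, mem_preimage.2 (h.target ▸ hq)⟩
  refine ⟨u, hu, Subset.antisymm ?_ (singleton_subset_iff.2 ⟨⟨u, right_mem_Icc.2 hu.1, rfl⟩, huL⟩)⟩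
  rintro _ ⟨⟨v, hv, rfl⟩, hvL⟩
  rw [le_antisymm hv.2 (hmin ⟨⟨hv.1, hv.2.trans hu.2⟩, hvL⟩), mem_singleton_iff]

end IsLipschitzPath

/-- The lengths of the Lipschitz paths from `p` to `q` inside `K`. -/
def pathLengths (K : Set X) (p q : X) : Set ℝ := {ℓ | ∃ γ, IsLipschitzPath K γ ℓ p q}

lemma dist_le_of_mem_pathLengths (h : ℓ ∈ pathLengths K p q) : dist p q ≤ ℓ :=
  h.choose_spec.dist_le

lemma bddBelow_pathLengths (K : Set X) (p q : X) : BddBelow (pathLengths K p q) :=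
  ⟨dist p q, fun _ => dist_le_of_mem_pathLengths⟩

lemma add_mem_pathLengths (h : ℓ ∈ pathLengths K p q) (h' : m ∈ pathLengths K q r) :
    ℓ + m ∈ pathLengths K p r := by
  obtain ⟨γ, hγ⟩ := h
  obtain ⟨η, hη⟩ := h'
  obtain ⟨σ, hσ, -⟩ := hγ.trans hη
  exact ⟨σ, hσ⟩

lemma sub_mem_pathLengths (h : IsLipschitzPath K γ ℓ p q) {u : ℝ} (hu : u ∈ Icc 0 ℓ) :
    ℓ - u ∈ pathLengths K (γ u) q :=
  ⟨_, h.target ▸ h.subpath hu.1 hu.2 le_rfl⟩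

-- Exchanging the tails of two paths at a common point preserves the total length.
lemma exists_pathLengths_swap {p' q' : X} {η : ℝ → X} (h : IsLipschitzPath K γ ℓ p q)
    (h' : IsLipschitzPath K η m p' q') {u v : ℝ} (hu : u ∈ Icc 0 ℓ) (hv : v ∈ Icc 0 m)
    (huv : γ u = η v) :
    ∃ ℓ' ∈ pathLengths K p q', ∃ m' ∈ pathLengths K p' q, ℓ' + m' = ℓ + m := by
  have hq := sub_mem_pathLengths h hu
  have hq' := sub_mem_pathLengths h' hv
  exact ⟨_, add_mem_pathLengths ⟨γ, h.initial hu⟩ (huv ▸ hq'), _,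
    add_mem_pathLengths ⟨η, h'.initial hv⟩ (huv ▸ hq), by ring⟩

/-- The intrinsic distance from `p` to `q` inside `K`: the infimum of the lengths of Lipschitz
paths. By the convention `sInf ∅ = 0` it is only meaningful when such a path exists. -/
noncomputable def intrinsicDist (K : Set X) (p q : X) : ℝ := sInf (pathLengths K p q)

lemma intrinsicDist_le (h : ℓ ∈ pathLengths K p q) : intrinsicDist K p q ≤ ℓ :=
  csInf_le (bddBelow_pathLengths K p q) h

lemma intrinsicDist_eq_dist (h : dist p q ∈ pathLengths K p q) :
    intrinsicDist K p q = dist p q :=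
  le_antisymm (intrinsicDist_le h) (le_csInf ⟨_, h⟩ fun _ => dist_le_of_mem_pathLengths)

end LipschitzPath

/-! ### Uniquely geodesic spaces -/

section UniquelyGeodesic

variable {S : Type*} [MetricSpace S] {K : Set S} {γ γ' : ℝ → S} {a b p q x x' y y' z z' : S}

/-- A geodesic space in which any two points are joined by only one geodesic. -/
structure IsUniquelyGeodesic (S : Type*) [MetricSpace S] : Prop where
  exists_geodesic : IsGeodesicMetricSpace S
  eqOn : ∀ ⦃x y : S⦄ ⦃γ γ' : ℝ → S⦄, IsGeodesicFromTo γ x y → IsGeodesicFromTo γ' x y →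
    EqOn γ γ' (Icc 0 (dist x y))

/-- A uniquely geodesic space whose geodesics, parametrized proportionally to arc length on
`[0, 1]`, depend continuously on their second endpoint. The geodesics issuing from `p` are given as
a family `σ`, which uniqueness determines. -/
structure HasContinuousGeodesics (S : Type*) [MetricSpace S] : Prop
    extends IsUniquelyGeodesic S where
  continuous_endpoint : ∀ (p : S) (σ : S → ℝ → S), (∀ q, IsGeodesicFromTo (σ q) p q) →
    ∀ t ∈ Icc (0 : ℝ) 1, Continuous fun q => σ q (t * dist p q)

lemma metricInterval_self (x : S) : metricInterval x x = {x} := by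
  ext w
  rw [mem_metricInterval, dist_comm w x, dist_self, ← two_mul, mul_eq_zero_iff_left two_ne_zero,
    dist_eq_zero, mem_singleton_iff, eq_comm]

lemma mul_dist_mem_Icc {t : ℝ} (ht : t ∈ Icc (0 : ℝ) 1) (x y : S) :
    t * dist x y ∈ Icc 0 (dist x y) :=
  ⟨mul_nonneg ht.1 dist_nonneg, mul_le_of_le_one_left dist_nonneg ht.2⟩

namespace IsBusemannSpace

lemma dist_geodesics_le (hS : IsBusemannSpace S) (h : IsGeodesicFromTo γ x y)
    (h' : IsGeodesicFromTo γ' x' y') {t : ℝ} (ht : t ∈ Icc (0 : ℝ) 1) :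
    dist (γ (t * dist x y)) (γ' (t * dist x' y')) ≤ (1 - t) * dist x x' + t * dist y y' := by
  have hconv := (hS.2 γ γ' 0 (dist x y) 0 (dist x' y') dist_nonneg dist_nonneg h.1 h'.1).2
    (left_mem_Icc.2 zero_le_one) (right_mem_Icc.2 zero_le_one) (sub_nonneg.2 ht.2) ht.1
    (sub_add_cancel 1 t)
  simpa only [smul_eq_mul, mul_zero, mul_one, zero_add, sub_zero, one_mul, zero_mul, sub_self,
    h.2.1, h.2.2, h'.2.1, h'.2.2] using hconv

lemma isUniquelyGeodesic (hS : IsBusemannSpace S) : IsUniquelyGeodesic S where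
  exists_geodesic := hS.1
  eqOn x y γ γ' h h' r hr := by
    rcases (dist_nonneg (x := x) (y := y)).eq_or_lt with h₀ | hpos
    · rw [← h₀, Icc_self, mem_singleton_iff] at hr
      rw [hr, h.2.1, h'.2.1]
    · have hle := hS.dist_geodesics_le h h'
        ⟨div_nonneg hr.1 hpos.le, (div_le_one hpos).2 hr.2⟩
      rw [div_mul_cancel₀ _ hpos.ne', dist_self, dist_self, mul_zero, mul_zero, add_zero] at hle
      exact dist_le_zero.1 hle

lemma hasContinuousGeodesics (hS : IsBusemannSpace S) : HasContinuousGeodesics S where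
  toIsUniquelyGeodesic := hS.isUniquelyGeodesic
  continuous_endpoint p σ hσ t ht := by
    refine (LipschitzWith.mk_one fun q q' => ?_).continuous
    have hle := hS.dist_geodesics_le (hσ q) (hσ q') ht
    rw [dist_self, mul_zero, zero_add] at hle
    exact hle.trans (mul_le_of_le_one_left dist_nonneg ht.2)

end IsBusemannSpace

namespace IsGeodesicFromTo

lemma dist_left (h : IsGeodesicFromTo γ a b) {r : ℝ} (hr : r ∈ Icc 0 (dist a b)) :
    dist a (γ r) = r := by
  rw [← h.2.1, h.1 0 (left_mem_Icc.2 dist_nonneg) r hr, zero_sub, abs_neg, abs_of_nonneg hr.1]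

lemma dist_right (h : IsGeodesicFromTo γ a b) {r : ℝ} (hr : r ∈ Icc 0 (dist a b)) :
    dist (γ r) b = dist a b - r := by
  rw [← h.2.2, h.1 r hr _ (right_mem_Icc.2 dist_nonneg), h.2.2, abs_sub_comm,
    abs_of_nonneg (sub_nonneg.2 hr.2)]

lemma apply_mem_metricInterval (h : IsGeodesicFromTo γ a b) {r : ℝ} (hr : r ∈ Icc 0 (dist a b)) :
    γ r ∈ metricInterval a b := by
  rw [mem_metricInterval, h.dist_left hr, h.dist_right hr, add_sub_cancel]

lemma isLipschitzPath (h : IsGeodesicFromTo γ a b) (hK : metricInterval a b ⊆ K) :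
    IsLipschitzPath K γ (dist a b) a b :=
  ⟨dist_nonneg, LipschitzOnWith.mk_one fun s hs t ht => (h.1 s hs t ht).le, h.2.1, h.2.2,
    fun _ hr => hK (h.apply_mem_metricInterval hr)⟩

end IsGeodesicFromTo

lemma IsLipschitzPath.isGeodesicFromTo (h : IsLipschitzPath K γ (dist a b) a b) :
    IsGeodesicFromTo γ a b := by
  refine ⟨fun s hs t ht => ?_, h.source, h.target⟩
  wlog hst : s ≤ t generalizing s t
  · rw [dist_comm, abs_sub_comm]
    exact this t ht s hs (le_of_not_ge hst)
  have hstart := (h.initial hs).dist_le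
  have hmiddle := (h.subpath hs.1 hst ht.2).dist_le
  have hend := h.target ▸ (h.subpath ht.1 ht.2 le_rfl).dist_le
  rw [abs_sub_comm, abs_of_nonneg (sub_nonneg.2 hst)]
  linarith [dist_triangle4 a (γ s) (γ t) b]

namespace IsUniquelyGeodesic

lemma geodesic_dist_left (hS : IsUniquelyGeodesic S) (h : IsGeodesicFromTo γ a b)
    (hz : z ∈ metricInterval a b) : γ (dist a z) = z := by
  obtain ⟨η, hη⟩ := hS.exists_geodesic a z
  obtain ⟨ζ, hζ⟩ := hS.exists_geodesic z b
  obtain ⟨σ, hσ, hσz⟩ := (hη.isLipschitzPath (subset_univ _)).trans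
    (hζ.isLipschitzPath (subset_univ _))
  rw [mem_metricInterval.1 hz] at hσ
  rw [hS.eqOn h hσ.isGeodesicFromTo ⟨dist_nonneg, dist_left_le_of_mem_metricInterval hz⟩, hσz]

lemma metricInterval_eq_image (hS : IsUniquelyGeodesic S) (h : IsGeodesicFromTo γ a b) :
    metricInterval a b = γ '' Icc 0 (dist a b) :=
  Subset.antisymm
    (fun z hz => ⟨dist a z, ⟨dist_nonneg, dist_left_le_of_mem_metricInterval hz⟩,
      hS.geodesic_dist_left h hz⟩)
    (image_subset_iff.2 fun _ hr => h.apply_mem_metricInterval hr)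

lemma isPathConnected_metricInterval (hS : IsUniquelyGeodesic S) (a b : S) :
    IsPathConnected (metricInterval a b) := by
  obtain ⟨γ, h⟩ := hS.exists_geodesic a b
  rw [hS.metricInterval_eq_image h]
  exact (h.isLipschitzPath (subset_univ _)).isPathConnected_image

lemma isCompact_metricInterval (hS : IsUniquelyGeodesic S) (a b : S) :
    IsCompact (metricInterval a b) := by
  obtain ⟨γ, h⟩ := hS.exists_geodesic a b
  rw [hS.metricInterval_eq_image h]
  exact isCompact_Icc.image_of_continuousOn
    (h.isLipschitzPath (subset_univ _)).lipschitz.continuousOn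

lemma dist_eq_abs_sub (hS : IsUniquelyGeodesic S) (hz : z ∈ metricInterval a b)
    (hz' : z' ∈ metricInterval a b) : dist z z' = |dist a z - dist a z'| := by
  obtain ⟨γ, h⟩ := hS.exists_geodesic a b
  have hdist := h.1 _ ⟨dist_nonneg, dist_left_le_of_mem_metricInterval hz⟩
    _ ⟨dist_nonneg, dist_left_le_of_mem_metricInterval hz'⟩
  rwa [hS.geodesic_dist_left h hz, hS.geodesic_dist_left h hz'] at hdist

lemma mem_metricInterval_left_of_dist_le (hS : IsUniquelyGeodesic S) (hx : x ∈ metricInterval a b)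
    (hz : z ∈ metricInterval a b) (h : dist a z ≤ dist a x) : z ∈ metricInterval a x := by
  rw [mem_metricInterval, hS.dist_eq_abs_sub hz hx, abs_sub_comm, abs_of_nonneg (sub_nonneg.2 h),
    add_sub_cancel]

lemma mem_metricInterval_right_of_dist_le (hS : IsUniquelyGeodesic S)
    (hx : x ∈ metricInterval a b) (hz : z ∈ metricInterval a b) (h : dist a x ≤ dist a z) :
    z ∈ metricInterval x b :=
  mem_metricInterval_of_mem_left hz (hS.mem_metricInterval_left_of_dist_le hz hx h)

lemma metricInterval_subset_union (hS : IsUniquelyGeodesic S) (hx : x ∈ metricInterval a b) :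
    metricInterval a b ⊆ metricInterval a x ∪ metricInterval x b := fun _ hz =>
  (le_total _ _).imp (hS.mem_metricInterval_left_of_dist_le hx hz)
    (hS.mem_metricInterval_right_of_dist_le hx hz)

lemma metricInterval_subset (hS : IsUniquelyGeodesic S) (hx : x ∈ metricInterval a b)
    (hy : y ∈ metricInterval a b) : metricInterval x y ⊆ metricInterval a b := by
  rcases hS.metricInterval_subset_union hx hy with hyx | hyx
  · rw [metricInterval_comm x y]
    exact (metricInterval_subset_right hyx).trans (metricInterval_subset_left hx)
  · exact (metricInterval_subset_left hyx).trans (metricInterval_subset_right hx)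

lemma dist_mem_pathLengths (hS : IsUniquelyGeodesic S) (h : metricInterval p q ⊆ K) :
    dist p q ∈ pathLengths K p q :=
  have ⟨γ, hγ⟩ := hS.exists_geodesic p q
  ⟨γ, hγ.isLipschitzPath h⟩

end IsUniquelyGeodesic

/-- The point dividing the geodesic from `p` to `q` in the ratio `t : 1 - t`. -/
noncomputable def geodesicPoint (hS : IsGeodesicMetricSpace S) (p q : S) (t : unitInterval) : S :=
  (hS p q).choose (t * dist p q)

section GeodesicPoint

variable (hS : IsGeodesicMetricSpace S) (p q : S)

lemma geodesicPoint_mem_metricInterval (t : unitInterval) :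
    geodesicPoint hS p q t ∈ metricInterval p q :=
  (hS p q).choose_spec.apply_mem_metricInterval (mul_dist_mem_Icc t.2 p q)

lemma geodesicPoint_zero : geodesicPoint hS p q 0 = p := by
  rw [geodesicPoint, Icc.coe_zero, zero_mul, (hS p q).choose_spec.2.1]

lemma geodesicPoint_one : geodesicPoint hS p q 1 = q := by
  rw [geodesicPoint, Icc.coe_one, one_mul, (hS p q).choose_spec.2.2]

lemma dist_geodesicPoint (s t : unitInterval) :
    dist (geodesicPoint hS p q s) (geodesicPoint hS p q t) = dist s t * dist p q := by
  rw [geodesicPoint, geodesicPoint, (hS p q).choose_spec.1 _ (mul_dist_mem_Icc s.2 p q) _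
    (mul_dist_mem_Icc t.2 p q), ← sub_mul, abs_mul, abs_of_nonneg (dist_nonneg (x := p)),
    Subtype.dist_eq, Real.dist_eq]

end GeodesicPoint

lemma IsUniquelyGeodesic.metricInterval_eq_range_geodesicPoint (hS : IsUniquelyGeodesic S)
    (p q : S) : metricInterval p q = range (geodesicPoint hS.exists_geodesic p q) := by
  refine Subset.antisymm (fun z hz => ?_)
    (range_subset_iff.2 (geodesicPoint_mem_metricInterval hS.exists_geodesic p q))
  have hspec := (hS.exists_geodesic p q).choose_spec
  have hle := dist_left_le_of_mem_metricInterval hz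
  refine ⟨⟨dist p z / dist p q, by positivity, div_le_one_of_le₀ hle dist_nonneg⟩, ?_⟩
  rw [geodesicPoint, div_mul_cancel_of_imp fun h₀ => le_antisymm (h₀ ▸ hle) dist_nonneg,
    hS.geodesic_dist_left hspec hz]

namespace HasContinuousGeodesics

lemma continuous_geodesicPoint_right (hS : HasContinuousGeodesics S) (p : S) (t : unitInterval) :
    Continuous fun q => geodesicPoint hS.exists_geodesic p q t :=
  hS.continuous_endpoint p _ (fun q => (hS.exists_geodesic p q).choose_spec) t t.2

lemma continuous_geodesicPoint (hS : HasContinuousGeodesics S) (p : S) :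
    Continuous fun w : S × unitInterval => geodesicPoint hS.exists_geodesic p w.1 w.2 := by
  refine continuous_iff_continuousAt.2 fun ⟨q, t⟩ => ?_
  have hbound (w : S × unitInterval) :
      dist (geodesicPoint hS.exists_geodesic p w.1 w.2) (geodesicPoint hS.exists_geodesic p q t) ≤
        dist w.2 t * dist p w.1 +
        dist (geodesicPoint hS.exists_geodesic p w.1 t) (geodesicPoint hS.exists_geodesic p q t) :=
    (dist_triangle _ (geodesicPoint hS.exists_geodesic p w.1 t) _).trans_eq
      (by rw [dist_geodesicPoint])
  have hcont : Continuous fun w : S × unitInterval => dist w.2 t * dist p w.1 +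
      dist (geodesicPoint hS.exists_geodesic p w.1 t) (geodesicPoint hS.exists_geodesic p q t) := by
    have := hS.continuous_geodesicPoint_right p t
    fun_prop
  refine tendsto_iff_dist_tendsto_zero.2 (squeeze_zero (fun _ => dist_nonneg) hbound ?_)
  simpa only [dist_self, zero_mul, add_zero] using hcont.tendsto (q, t)

lemma isClosed_setOf_metricInterval_subset (hS : HasContinuousGeodesics S) (p : S)
    (hK : IsClosed K) : IsClosed {q | metricInterval p q ⊆ K} := by
  have heq : {q | metricInterval p q ⊆ K} =
      ⋂ t, (fun q => geodesicPoint hS.exists_geodesic p q t) ⁻¹' K := by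
    ext q
    rw [mem_ofPred_eq, hS.metricInterval_eq_range_geodesicPoint, range_subset_iff, mem_iInter]
    rfl
  exact heq ▸ isClosed_iInter fun t => hK.preimage (hS.continuous_geodesicPoint_right p t)

end HasContinuousGeodesics

end UniquelyGeodesic

/-! ### Extending geodesics to the boundary -/

section Extension

variable {S : Type*} [MetricSpace S] {K : Set S} {a b p q x y : S}

namespace HasContinuousGeodesics

-- Otherwise, contracting a circle around `q` to `p` along geodesics would avoid `q`.
lemma exists_extension (hS : HasContinuousGeodesics S) (e : S ≃ₜ ℂ) (p q : S) :
    ∃ w ≠ q, q ∈ metricInterval p w := by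
  let onCircle (z : Circle) : S := e.symm (e q + z)
  have honCircle : Continuous onCircle := e.symm.continuous.comp (by fun_prop)
  have he (z : Circle) : e (onCircle z) - e q = z := by
    rw [e.apply_symm_apply, add_sub_cancel_left]
  obtain ⟨⟨z, t⟩, hzt⟩ := exists_eq_zero_of_homotopy_const_circle
    (F := fun w => e (geodesicPoint hS.exists_geodesic p (onCircle w.1) w.2) - e q) (c := e p - e q)
    ((e.continuous.comp ((hS.continuous_geodesicPoint p).comp
      ((honCircle.comp continuous_fst).prodMk continuous_snd))).sub continuous_const)
    (fun z => by rw [geodesicPoint_zero]) (fun z => by rw [geodesicPoint_one, he])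
  refine ⟨onCircle z, fun hz => z.coe_ne_zero (by rw [← he, hz, sub_self]), ?_⟩
  rw [← e.injective (sub_eq_zero.1 hzt)]
  exact geodesicPoint_mem_metricInterval hS.exists_geodesic p _ t

lemma exists_extension_lt (hS : HasContinuousGeodesics S) (e : S ≃ₜ ℂ) (p q : S) {r : ℝ}
    (hr : 0 < r) : ∃ w ≠ q, q ∈ metricInterval p w ∧ dist q w < r := by
  obtain ⟨w, hwq, hw⟩ := hS.exists_extension e p q
  obtain ⟨γ, hγ⟩ := hS.exists_geodesic q w
  have hρ : 0 < min (r / 2) (dist q w) := lt_min (half_pos hr) (dist_pos.2 hwq.symm)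
  have hmem : min (r / 2) (dist q w) ∈ Icc 0 (dist q w) := ⟨hρ.le, min_le_right _ _⟩
  refine ⟨γ (min (r / 2) (dist q w)), ?_,
    mem_metricInterval_of_mem_right hw (hγ.apply_mem_metricInterval hmem), ?_⟩
  · exact fun h => hρ.ne' (by rw [← hγ.dist_left hmem, h, dist_self])
  · rw [hγ.dist_left hmem]
    exact (min_le_left _ _).trans_lt (half_lt_self hr)

-- Among the extensions `[p, w]` with `[q, w] ⊆ K`, a longest one must end on the frontier.
lemma exists_extension_frontier (hS : HasContinuousGeodesics S) (e : S ≃ₜ ℂ) (hK : IsCompact K)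
    (p : S) (hq : q ∈ K) :
    ∃ b ∈ frontier K, q ∈ metricInterval p b ∧ metricInterval q b ⊆ K := by
  let W : Set S := {w | metricInterval q w ⊆ K} ∩ {w | q ∈ metricInterval p w}
  have hWcompact : IsCompact W := hK.of_isClosed_subset
    ((hS.isClosed_setOf_metricInterval_subset q hK.isClosed).inter
      (isClosed_eq (by fun_prop) (by fun_prop)))
    fun w hw => hw.1 (right_mem_metricInterval q w)
  have hqW : q ∈ W := ⟨(metricInterval_self q).trans_subset (singleton_subset_iff.2 hq),
    right_mem_metricInterval p q⟩
  obtain ⟨b, ⟨hbK, hqb⟩, hmax⟩ := hWcompact.exists_isMaxOn ⟨q, hqW⟩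
    (continuous_const.dist continuous_id).continuousOn
  refine ⟨b, hK.isClosed.frontier_eq ▸ ⟨hbK (right_mem_metricInterval q b), fun hb => ?_⟩, hqb, hbK⟩
  obtain ⟨r, hr, hball⟩ := Metric.isOpen_iff.1 isOpen_interior b hb
  obtain ⟨w, hwb, hbw, hlt⟩ := hS.exists_extension_lt e p b hr
  have hqbw : b ∈ metricInterval q w := mem_metricInterval_of_mem_left hbw hqb
  have hbwK : metricInterval b w ⊆ K := fun z hz => interior_subset (hball (mem_ball'.2
    ((dist_left_le_of_mem_metricInterval hz).trans_lt hlt)))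
  have hwW : w ∈ W := ⟨(hS.metricInterval_subset_union hqbw).trans (union_subset hbK hbwK),
    metricInterval_subset_left hbw hqb⟩
  have hle : dist q w ≤ dist q b := hmax hwW
  exact hwb (dist_le_zero.1 (by linarith [mem_metricInterval.1 hqbw, dist_comm b w]))

end HasContinuousGeodesics

/-- `[a, b]` is a geodesic chord of `K`, with ends on the frontier, that passes through `x` and then
through `y`. -/
structure IsChordThrough (K : Set S) (a b x y : S) : Prop where
  left_mem : a ∈ frontier K
  right_mem : b ∈ frontier K
  subset : metricInterval a b ⊆ K
  fst_mem : x ∈ metricInterval a b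
  snd_mem_right : y ∈ metricInterval x b

namespace IsChordThrough

lemma symm (h : IsChordThrough K a b x y) : IsChordThrough K b a y x where
  left_mem := h.right_mem
  right_mem := h.left_mem
  subset := metricInterval_comm a b ▸ h.subset
  fst_mem := metricInterval_comm a b ▸ metricInterval_subset_right h.fst_mem h.snd_mem_right
  snd_mem_right := metricInterval_comm a y ▸
    mem_metricInterval_of_mem_right h.fst_mem h.snd_mem_right

lemma snd_mem (h : IsChordThrough K a b x y) : y ∈ metricInterval a b :=
  metricInterval_subset_right h.fst_mem h.snd_mem_right

lemma dist_left_le (h : IsChordThrough K a b x y) : dist a x ≤ dist a y :=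
  dist_left_le_of_mem_metricInterval (mem_metricInterval_of_mem_right h.fst_mem h.snd_mem_right)

end IsChordThrough

lemma HasContinuousGeodesics.exists_isChordThrough (hS : HasContinuousGeodesics S) (e : S ≃ₜ ℂ)
    (hK : IsCompact K) (hxy : metricInterval x y ⊆ K) : ∃ a b, IsChordThrough K a b x y := by
  obtain ⟨b, hb, hyb, hybK⟩ :=
    hS.exists_extension_frontier e hK x (hxy (right_mem_metricInterval x y))
  obtain ⟨a, ha, hxa, hxaK⟩ :=
    hS.exists_extension_frontier e hK b (hxy (left_mem_metricInterval x y))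
  rw [metricInterval_comm] at hxa hxaK
  refine ⟨a, b, ha, hb, (hS.metricInterval_subset_union hxa).trans (union_subset hxaK ?_), hxa, hyb⟩
  exact (hS.metricInterval_subset_union hyb).trans (union_subset hxy hybK)

end Extension

/-! ### The Monge inequality for boundary points -/

section Monge

variable {S : Type*} [MetricSpace S] {K : Set S} {a b s t x y x' y' : S} {ℓ m : ℝ}

/-- The closed topological disc in `S` that the chart `e` maps onto the closed unit disc. -/
abbrev closedDisc {S : Type*} [TopologicalSpace S] (e : S ≃ₜ ℂ) : Set S := e ⁻¹' closedBall 0 1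

lemma abs_sub_add_abs_sub_le_abs_sub_add_abs_sub {u u' v v' : ℝ} (hu : u ≤ u') (hv : v ≤ v') :
    |u - v| + |u' - v'| ≤ |u' - v| + |u - v'| := by
  rcases abs_cases (u - v) with ⟨h₁, _⟩ | ⟨h₁, _⟩ <;>
  rcases abs_cases (u' - v') with ⟨h₂, _⟩ | ⟨h₂, _⟩ <;>
  linarith [le_abs_self (u' - v), neg_abs_le (u' - v), le_abs_self (u - v'), neg_abs_le (u - v')]

namespace IsUniquelyGeodesic

lemma inter_nonempty_of_inCircularOrder (hS : IsUniquelyGeodesic S) (e : S ≃ₜ ℂ) {A B : Set S}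
    (hord : InCircularOrder (e a) (e s) (e t) (e b))
    (hab : metricInterval a b ⊆ closedDisc e) (hA : IsPathConnected A) (hB : IsPathConnected B)
    (hAK : A ⊆ closedDisc e) (hBK : B ⊆ closedDisc e) (ht : t ∈ A) (hs : s ∈ B)
    (hAx : A ∩ metricInterval a b = {x'})
    (hBy : B ∩ metricInterval a b = {y'}) (hle : dist a x' ≤ dist a y') : (A ∩ B).Nonempty := by
  obtain ⟨hxA, hxab⟩ : x' ∈ A ∩ metricInterval a b := hAx ▸ mem_singleton x'
  obtain ⟨hyB, hyab⟩ : y' ∈ B ∩ metricInterval a b := hBy ▸ mem_singleton y'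
  have hax := metricInterval_subset_left hxab
  have hyb := metricInterval_subset_right hyab
  have hA' := (hA.union (hS.isPathConnected_metricInterval a x')
    ⟨x', hxA, right_mem_metricInterval a x'⟩).image e.continuous
  have hB' := (hB.union (hS.isPathConnected_metricInterval y' b)
    ⟨y', hyB, left_mem_metricInterval y' b⟩).image e.continuous
  obtain ⟨_, ⟨w, hwA, rfl⟩, w', hwB, hw'⟩ := hord.inter_nonempty_of_joinedIn
    (image_subset_iff.2 (union_subset hAK (hax.trans hab)))
    (image_subset_iff.2 (union_subset hBK (hyb.trans hab)))
    (hA'.joinedIn _ ⟨a, .inr (left_mem_metricInterval a x'), rfl⟩ _ ⟨t, .inl ht, rfl⟩)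
    (hB'.joinedIn _ ⟨s, .inl hs, rfl⟩ _ ⟨b, .inr (right_mem_metricInterval y' b), rfl⟩)
  rw [e.injective hw'] at hwB
  by_cases hw : w ∈ metricInterval a b
  · have hwx : dist a w ≤ dist a x' := by
      rcases hwA with hwA | hwax
      · rw [mem_singleton_iff.1 (hAx ▸ ⟨hwA, hw⟩ : w ∈ ({x'} : Set S))]
      · exact dist_left_le_of_mem_metricInterval hwax
    have hyw : dist a y' ≤ dist a w := by
      rcases hwB with hwB | hwyb
      · rw [mem_singleton_iff.1 (hBy ▸ ⟨hwB, hw⟩ : w ∈ ({y'} : Set S))]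
      · exact dist_left_le_of_mem_metricInterval (mem_metricInterval_of_mem_right hyab hwyb)
    have hxy : x' = y' := dist_eq_zero.1 (by
      rw [hS.dist_eq_abs_sub hxab hyab, le_antisymm hle (hyw.trans hwx), sub_self, abs_zero])
    exact ⟨x', hxA, hxy ▸ hyB⟩
  · exact ⟨w, hwA.resolve_right fun h => hw (hax h), hwB.resolve_right fun h => hw (hyb h)⟩

-- The total length does not increase, since distances on `[a, b]` are those of a real interval.
lemma exists_pathLengths_reroute (hS : IsUniquelyGeodesic S) (hab : metricInterval a b ⊆ K)
    (hx : x ∈ metricInterval a b) (hy : y ∈ metricInterval a b) (hxy : dist a x ≤ dist a y)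
    {γ η : ℝ → S} (hγ : IsLipschitzPath K γ ℓ t x) (hη : IsLipschitzPath K η m s y) {u v : ℝ}
    (hu : u ∈ Icc 0 ℓ) (hv : v ∈ Icc 0 m) (hγu : γ u ∈ metricInterval a b)
    (hηv : η v ∈ metricInterval a b) (hle : dist a (η v) ≤ dist a (γ u)) :
    ∃ ℓ' ∈ pathLengths K s x, ∃ m' ∈ pathLengths K t y, ℓ' + m' ≤ ℓ + m := by
  have hx' := hS.dist_mem_pathLengths ((hS.metricInterval_subset hηv hx).trans hab)
  have hy' := hS.dist_mem_pathLengths ((hS.metricInterval_subset hγu hy).trans hab)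
  refine ⟨_, add_mem_pathLengths ⟨η, hη.initial hv⟩ hx', _,
    add_mem_pathLengths ⟨γ, hγ.initial hu⟩ hy', ?_⟩
  have hγx := dist_le_of_mem_pathLengths (sub_mem_pathLengths hγ hu)
  have hηy := dist_le_of_mem_pathLengths (sub_mem_pathLengths hη hv)
  have hexchange : dist (η v) x + dist (γ u) y ≤ dist (γ u) x + dist (η v) y := by
    rw [hS.dist_eq_abs_sub hηv hx, hS.dist_eq_abs_sub hγu hy, hS.dist_eq_abs_sub hγu hx,
      hS.dist_eq_abs_sub hηv hy]
    exact abs_sub_add_abs_sub_le_abs_sub_add_abs_sub hle hxy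
  linarith

-- Follow both paths up to their first points on `[a, b]`. If these points come in the order that
-- forces the paths to cross, swap the tails at a crossing; otherwise reroute along `[a, b]`.
lemma exists_pathLengths_exchange (hS : IsUniquelyGeodesic S) (e : S ≃ₜ ℂ)
    (hord : InCircularOrder (e a) (e s) (e t) (e b))
    (h : IsChordThrough (closedDisc e) a b x y) (hℓ : ℓ ∈ pathLengths (closedDisc e) t x)
    (hm : m ∈ pathLengths (closedDisc e) s y) :
    ∃ ℓ' ∈ pathLengths (closedDisc e) s x, ∃ m' ∈ pathLengths (closedDisc e) t y,
      ℓ' + m' ≤ ℓ + m := by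
  obtain ⟨γ, hγ⟩ := hℓ
  obtain ⟨η, hη⟩ := hm
  obtain ⟨u, hu, hγu⟩ := hγ.exists_first_hit (isClosed_metricInterval a b) h.fst_mem
  obtain ⟨v, hv, hηv⟩ := hη.exists_first_hit (isClosed_metricInterval a b) h.snd_mem
  rcases le_total (dist a (γ u)) (dist a (η v)) with hle | hle
  · have hγ' := hγ.initial hu
    have hη' := hη.initial hv
    obtain ⟨_, ⟨u', hu', rfl⟩, v', hv', heq⟩ := hS.inter_nonempty_of_inCircularOrder e hord h.subset
      hγ'.isPathConnected_image hη'.isPathConnected_image hγ'.mapsTo.image_subset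
      hη'.mapsTo.image_subset ⟨0, left_mem_Icc.2 hu.1, hγ.source⟩
      ⟨0, left_mem_Icc.2 hv.1, hη.source⟩ hγu hηv hle
    obtain ⟨m', hm', ℓ', hℓ', hsum⟩ := exists_pathLengths_swap hγ hη
      (Icc_subset_Icc_right hu.2 hu') (Icc_subset_Icc_right hv.2 hv') heq.symm
    exact ⟨ℓ', hℓ', m', hm', by linarith⟩
  · exact hS.exists_pathLengths_reroute h.subset h.fst_mem h.snd_mem h.dist_left_le hγ hη hu hv
      (singleton_subset_iff.1 (hγu.ge.trans inter_subset_right))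
      (singleton_subset_iff.1 (hηv.ge.trans inter_subset_right)) hle

lemma intrinsicDist_sub_le_intrinsicDist_sub (hS : IsUniquelyGeodesic S) (e : S ≃ₜ ℂ)
    (hord : InCircularOrder (e a) (e s) (e t) (e b))
    (h : IsChordThrough (closedDisc e) a b x y)
    (htx : (pathLengths (closedDisc e) t x).Nonempty)
    (hsy : (pathLengths (closedDisc e) s y).Nonempty) :
    intrinsicDist (closedDisc e) s x - intrinsicDist (closedDisc e) s y ≤
      intrinsicDist (closedDisc e) t x - intrinsicDist (closedDisc e) t y := by
  have hexchange : ∀ ℓ ∈ pathLengths (closedDisc e) t x, ∀ m ∈ pathLengths (closedDisc e) s y,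
      intrinsicDist (closedDisc e) s x + intrinsicDist (closedDisc e) t y - ℓ ≤ m := by
    intro ℓ hℓ m hm
    obtain ⟨ℓ', hℓ', m', hm', hle⟩ := hS.exists_pathLengths_exchange e hord h hℓ hm
    linarith [intrinsicDist_le hℓ', intrinsicDist_le hm']
  have hinf := le_csInf htx fun ℓ hℓ => sub_le_comm.1 (le_csInf hsy (hexchange ℓ hℓ))
  unfold intrinsicDist at hinf ⊢
  linarith

end IsUniquelyGeodesic

end Monge

/-! ### Total variation along the boundary circle -/

section CyclicSum

lemma sum_Ico_add_eq_sum_range_of_periodic {M : Type*} [AddCommMonoid M] {f : ℕ → M} {n : ℕ}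
    (hf : Function.Periodic f n) (j : ℕ) :
    ∑ i ∈ Finset.Ico j (j + n), f i = ∑ i ∈ Finset.range n, f i := by
  calc ∑ i ∈ Finset.Ico j (j + n), f i
      = (((Multiset.Ico j (j + n)).map (· % n)).map f).sum := by
        simp only [Multiset.map_map, Function.comp_apply, hf.map_mod_nat]
        rfl
    _ = ∑ i ∈ Finset.range n, f i := by
        rw [Nat.multiset_Ico_map_mod]
        rfl

lemma sum_Ico_abs_sub_of_monotoneOn {h : ℕ → ℝ} {j k : ℕ} (hjk : j ≤ k)
    (hh : MonotoneOn h (Icc j k)) : ∑ i ∈ Finset.Ico j k, |h (i + 1) - h i| = h k - h j := by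
  rw [← Finset.sum_Ico_sub h hjk]
  refine Finset.sum_congr rfl fun i hi => abs_of_nonneg (sub_nonneg.2 ?_)
  rw [Finset.mem_Ico] at hi
  exact hh ⟨hi.1, hi.2.le⟩ ⟨by lia, hi.2⟩ i.le_succ

lemma sum_abs_sub_of_unimodal {h : ℕ → ℝ} {n j k : ℕ} (hper : Function.Periodic h n)
    (hjk : j ≤ k) (hkn : k ≤ j + n) (hmono : MonotoneOn h (Icc j k))
    (hanti : AntitoneOn h (Icc k (j + n))) :
    ∑ i ∈ Finset.range n, |h (i + 1) - h i| = 2 * (h k - h j) := by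
  have hper' : Function.Periodic (fun i => |h (i + 1) - h i|) n := fun i => by
    simp only [add_right_comm i n 1, hper i, hper (i + 1)]
  have hdown := sum_Ico_abs_sub_of_monotoneOn hkn hanti.neg
  simp only [← neg_sub', abs_neg, hper j] at hdown
  rw [← sum_Ico_add_eq_sum_range_of_periodic hper' j, ← Finset.sum_Ico_consecutive _ hjk hkn,
    sum_Ico_abs_sub_of_monotoneOn hjk hmono, hdown]
  ring

end CyclicSum

section CyclicAngles

/-- `c` lists angles in increasing order, and `n` consecutive terms go once around the circle. -/
structure IsCyclicAngleSequence (n : ℕ) (c : ℕ → ℝ) : Prop where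
  monotone : Monotone c
  add_period : ∀ i, c (i + n) = c i + 2 * Real.pi

namespace IsCyclicAngleSequence

variable {n : ℕ} {c : ℕ → ℝ}

lemma inCircularOrder (hc : IsCyclicAngleSequence n c) {i j k l : ℕ} (hij : i ≤ j) (hjk : j ≤ k)
    (hkl : k ≤ l) (hli : l ≤ i + n) :
    InCircularOrder (Circle.exp (c i)) (Circle.exp (c j)) (Circle.exp (c k)) (Circle.exp (c l)) :=
  ⟨_, _, _, _, hc.monotone hij, hc.monotone hjk, hc.monotone hkl,
    hc.add_period i ▸ hc.monotone hli, rfl, rfl, rfl, rfl⟩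

end IsCyclicAngleSequence

lemma exists_monotone_add_period {n : ℕ} (hn : 0 < n) {θ : Fin n → ℝ} (hθ : Monotone θ) {P : ℝ}
    (hP : ∀ i j, θ i ≤ θ j + P) :
    ∃ c : ℕ → ℝ, Monotone c ∧ (∀ i, c (i + n) = c i + P) ∧ (∀ j : Fin n, c j = θ j) ∧
      ∀ i, ∃ (j : Fin n) (m : ℕ), c i = θ j + m * P := by
  let rem (i : ℕ) : Fin n := ⟨i % n, Nat.mod_lt i hn⟩
  have hP₀ : 0 ≤ P := le_add_iff_nonneg_right _ |>.1 (hP (rem 0) (rem 0))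
  refine ⟨fun i => θ (rem i) + (i / n : ℕ) * P, fun i j hij => ?_, fun i => ?_, fun j => ?_,
    fun i => ⟨_, _, rfl⟩⟩
  · rcases (Nat.div_le_div_right (c := n) hij).eq_or_lt with hdiv | hdiv
    · have hrem : rem i ≤ rem j := Fin.mk_le_mk.2 (by
        have hi := Nat.div_add_mod i n
        have hj := Nat.div_add_mod j n
        rw [hdiv] at hi
        lia)
      simp only [hdiv]
      exact add_le_add_left (hθ hrem) _
    · have hdiv' : ((i / n : ℕ) : ℝ) + 1 ≤ (j / n : ℕ) := by exact_mod_cast hdiv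
      calc θ (rem i) + (i / n : ℕ) * P
          ≤ θ (rem j) + P + (i / n : ℕ) * P := add_le_add_left (hP _ _) _
        _ = θ (rem j) + ((i / n : ℕ) + 1) * P := by ring
        _ ≤ θ (rem j) + (j / n : ℕ) * P := by gcongr
  · simp only [rem, Nat.add_mod_right, Nat.add_div_right i hn, Nat.cast_succ]
    ring
  · simp only [rem, Nat.mod_eq_of_lt j.2, Nat.div_eq_of_lt j.2, Nat.cast_zero, zero_mul, add_zero]

lemma exists_isCyclicAngleSequence {T : Finset Circle} (hT : T.Nonempty) :
    ∃ n c, IsCyclicAngleSequence n c ∧ (∀ z ∈ T, ∃ j < n, Circle.exp (c j) = z) ∧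
      ∀ i, Circle.exp (c i) ∈ T := by
  let Θ : Finset ℝ := T.image fun z : Circle => Complex.arg z
  let θ : Fin Θ.card ↪o ℝ := Θ.orderEmbOfFin rfl
  have hθ (j : Fin Θ.card) : ∃ z ∈ T, Complex.arg z = θ j :=
    Finset.mem_image.1 (Θ.orderEmbOfFin_mem rfl j)
  have hspread (i j : Fin Θ.card) : θ i ≤ θ j + 2 * Real.pi := by
    obtain ⟨z, -, hz⟩ := hθ i
    obtain ⟨w, -, hw⟩ := hθ j
    linarith [Complex.arg_le_pi z, Complex.neg_pi_lt_arg w]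
  obtain ⟨c, hmono, hper, hcθ, hc⟩ :=
    exists_monotone_add_period (Finset.card_pos.2 (hT.image _)) θ.monotone hspread
  refine ⟨Θ.card, c, ⟨hmono, hper⟩, fun z hz => ?_, fun i => ?_⟩
  · obtain ⟨j, hj⟩ : Complex.arg z ∈ range θ := by
      rw [Finset.range_orderEmbOfFin]
      exact Finset.mem_image_of_mem _ hz
    exact ⟨j, j.2, by rw [hcθ, hj, Circle.exp_arg]⟩
  · obtain ⟨j, m, hi⟩ := hc i
    obtain ⟨z, hz, hzj⟩ := hθ j
    rwa [hi, Circle.periodic_exp.nat_mul m, ← hzj, Circle.exp_arg]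

end CyclicAngles

/-! ### Embedding finite subsets -/

section FiniteEmbedding

/-- Every finite subset embeds isometrically into some finite-dimensional `ℓ¹`. -/
def IsFinitelyL1Embeddable (X : Type*) [PseudoMetricSpace X] : Prop :=
  ∀ F : Finset X, ∃ (n : ℕ) (φ : X → Fin n → ℝ), ∀ x ∈ F, ∀ y ∈ F,
    ∑ i, |φ x i - φ y i| = dist x y

lemma isCompact_closedDisc {S : Type*} [TopologicalSpace S] (e : S ≃ₜ ℂ) :
    IsCompact (closedDisc e) :=
  e.isCompact_preimage.2 (isCompact_closedBall 0 1)

lemma exists_symm_circle_eq {S : Type*} [TopologicalSpace S] (e : S ≃ₜ ℂ) {a : S}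
    (ha : a ∈ frontier (closedDisc e)) : ∃ z : Circle, e.symm z = a := by
  rw [← e.preimage_frontier, frontier_closedBall _ one_ne_zero] at ha
  exact ⟨⟨e a, ha⟩, e.symm_apply_apply a⟩

lemma exists_homeomorph_subset_closedDisc {S : Type*} [TopologicalSpace S] (e : S ≃ₜ ℂ) {C : Set S}
    (hC : IsCompact C) : ∃ e' : S ≃ₜ ℂ, C ⊆ closedDisc e' := by
  obtain ⟨R, hR, hCR⟩ := (hC.image e.continuous).isBounded.subset_closedBall_lt 0 0
  have hR' : (R : ℂ)⁻¹ ≠ 0 := inv_ne_zero (Complex.ofReal_ne_zero.2 hR.ne')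
  refine ⟨e.trans (Homeomorph.mulLeft₀ _ hR'), fun z hz => ?_⟩
  have hz' : ‖e z‖ ≤ R := mem_closedBall_zero_iff.1 (hCR (mem_image_of_mem e hz))
  rw [mem_preimage, mem_closedBall_zero_iff, Homeomorph.trans_apply, Homeomorph.coe_mulLeft₀,
    norm_mul, norm_inv, Complex.norm_of_nonneg hR.le, inv_mul_le_iff₀ hR, mul_one]
  exact hz'

variable {S : Type*} [MetricSpace S] {x y : S} {n j k : ℕ} {c : ℕ → ℝ} {s : ℕ → S}

namespace IsUniquelyGeodesic

lemma intrinsicDist_eq_dist_of_subset (hS : IsUniquelyGeodesic S) {K : Set S} {p q : S}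
    (h : metricInterval p q ⊆ K) : intrinsicDist K p q = dist p q :=
  intrinsicDist_eq_dist (hS.dist_mem_pathLengths h)

lemma intrinsicDist_sub_of_isChordThrough (hS : IsUniquelyGeodesic S) {K : Set S} {a b : S}
    (h : IsChordThrough K a b x y) : intrinsicDist K a x - intrinsicDist K a y = -dist x y := by
  rw [hS.intrinsicDist_eq_dist_of_subset ((metricInterval_subset_left h.fst_mem).trans h.subset),
    hS.intrinsicDist_eq_dist_of_subset ((metricInterval_subset_left h.snd_mem).trans h.subset)]
  linarith [mem_metricInterval.1 (mem_metricInterval_of_mem_right h.fst_mem h.snd_mem_right)]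

lemma monotoneOn_intrinsicDist_sub (hS : IsUniquelyGeodesic S) (e : S ≃ₜ ℂ)
    (hc : IsCyclicAngleSequence n c) (hs : ∀ i, e (s i) = Circle.exp (c i))
    (hx : ∀ i, (pathLengths (closedDisc e) (s i) x).Nonempty)
    (hy : ∀ i, (pathLengths (closedDisc e) (s i) y).Nonempty) (hkn : k ≤ j + n)
    (h : IsChordThrough (closedDisc e) (s j) (s k) x y) :
    MonotoneOn (fun i => intrinsicDist (closedDisc e) (s i) x -
      intrinsicDist (closedDisc e) (s i) y) (Icc j k) := by
  intro i hi i' hi' hii'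
  refine hS.intrinsicDist_sub_le_intrinsicDist_sub e ?_ h (hx i') (hy i)
  rw [hs, hs, hs, hs]
  exact hc.inCircularOrder hi.1 hii' hi'.2 hkn

lemma sum_abs_intrinsicDist_sub_of_le (hS : IsUniquelyGeodesic S) (e : S ≃ₜ ℂ)
    (hc : IsCyclicAngleSequence n c) (hs : ∀ i, e (s i) = Circle.exp (c i))
    (hx : ∀ i, (pathLengths (closedDisc e) (s i) x).Nonempty)
    (hy : ∀ i, (pathLengths (closedDisc e) (s i) y).Nonempty) (hjk : j ≤ k) (hkn : k ≤ j + n)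
    (h : IsChordThrough (closedDisc e) (s j) (s k) x y) :
    ∑ i ∈ Finset.range n,
      |(intrinsicDist (closedDisc e) (s (i + 1)) x - intrinsicDist (closedDisc e) (s (i + 1)) y) -
        (intrinsicDist (closedDisc e) (s i) x - intrinsicDist (closedDisc e) (s i) y)| =
      4 * dist x y := by
  have hs_per : Function.Periodic s n := fun i => e.injective (by
    rw [hs, hs, hc.add_period, Circle.exp_add_two_pi])
  have hanti : AntitoneOn (fun i => intrinsicDist (closedDisc e) (s i) x -
      intrinsicDist (closedDisc e) (s i) y) (Icc k (j + n)) := by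
    have hmono := hS.monotoneOn_intrinsicDist_sub e hc hs hy hx
      (Nat.add_le_add_right hjk n) (hs_per j ▸ h.symm)
    simpa only [Pi.neg_def, neg_sub] using hmono.neg
  refine (sum_abs_sub_of_unimodal (fun i => by simp only [hs_per i]) hjk hkn
    (hS.monotoneOn_intrinsicDist_sub e hc hs hx hy hkn h) hanti).trans ?_
  have hj := hS.intrinsicDist_sub_of_isChordThrough h
  have hk := hS.intrinsicDist_sub_of_isChordThrough h.symm
  rw [dist_comm y x] at hk
  linarith

lemma sum_abs_intrinsicDist_sub (hS : IsUniquelyGeodesic S) (e : S ≃ₜ ℂ)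
    (hc : IsCyclicAngleSequence n c) (hs : ∀ i, e (s i) = Circle.exp (c i))
    (hx : ∀ i, (pathLengths (closedDisc e) (s i) x).Nonempty)
    (hy : ∀ i, (pathLengths (closedDisc e) (s i) y).Nonempty) (hj : j < n) (hk : k < n)
    (h : IsChordThrough (closedDisc e) (s j) (s k) x y) :
    ∑ i ∈ Finset.range n,
      |(intrinsicDist (closedDisc e) (s (i + 1)) x - intrinsicDist (closedDisc e) (s (i + 1)) y) -
        (intrinsicDist (closedDisc e) (s i) x - intrinsicDist (closedDisc e) (s i) y)| =
      4 * dist x y := by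
  rcases le_total j k with hjk | hkj
  · exact hS.sum_abs_intrinsicDist_sub_of_le e hc hs hx hy hjk (by lia) h
  · rw [dist_comm, ← hS.sum_abs_intrinsicDist_sub_of_le e hc hs hy hx hkj (by lia) h.symm]
    refine Finset.sum_congr rfl fun i _ => ?_
    rw [abs_sub_comm]
    congr 1
    ring

end IsUniquelyGeodesic

namespace HasContinuousGeodesics

lemma exists_finset_chord_ends (hS : HasContinuousGeodesics S) (e : S ≃ₜ ℂ) {F : Finset S}
    (hF : ∀ x ∈ F, ∀ y ∈ F, metricInterval x y ⊆ closedDisc e) :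
    ∃ T : Finset Circle,
      (∀ z ∈ T, ∀ x ∈ F, (pathLengths (closedDisc e) (e.symm z) x).Nonempty) ∧
      ∀ x ∈ F, ∀ y ∈ F, ∃ z ∈ T, ∃ w ∈ T,
        IsChordThrough (closedDisc e) (e.symm z) (e.symm w) x y := by
  classical
  have hchord (p : F × F) : ∃ z w : Circle,
      IsChordThrough (closedDisc e) (e.symm z) (e.symm w) (p.1 : S) p.2 := by
    obtain ⟨a, b, hab⟩ := hS.exists_isChordThrough e (isCompact_closedDisc e)
      (hF p.1 p.1.2 p.2 p.2.2)
    obtain ⟨z, rfl⟩ := exists_symm_circle_eq e hab.left_mem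
    obtain ⟨w, rfl⟩ := exists_symm_circle_eq e hab.right_mem
    exact ⟨z, w, hab⟩
  choose z w hzw using hchord
  have hjoin {a b u v x : S} (h : IsChordThrough (closedDisc e) a b u v) (hu : u ∈ F)
      (hx : x ∈ F) : (pathLengths (closedDisc e) a x).Nonempty :=
    ⟨_, add_mem_pathLengths
      (hS.dist_mem_pathLengths ((metricInterval_subset_left h.fst_mem).trans h.subset))
      (hS.dist_mem_pathLengths (hF u hu x hx))⟩
  refine ⟨Finset.univ.image z ∪ Finset.univ.image w, fun t ht x hx => ?_, fun x hx y hy => ?_⟩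
  · rcases Finset.mem_union.1 ht with ht | ht <;> obtain ⟨p, -, rfl⟩ := Finset.mem_image.1 ht
    · exact hjoin (hzw p) p.1.2 hx
    · exact hjoin (hzw p).symm p.2.2 hx
  · let p : F × F := (⟨x, hx⟩, ⟨y, hy⟩)
    exact ⟨z p, Finset.mem_union_left _ (Finset.mem_image_of_mem z (Finset.mem_univ p)),
      w p, Finset.mem_union_right _ (Finset.mem_image_of_mem w (Finset.mem_univ p)), hzw p⟩

lemma isFinitelyL1Embeddable (hS : HasContinuousGeodesics S) (e : S ≃ₜ ℂ) :
    IsFinitelyL1Embeddable S := by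
  intro F
  rcases F.eq_empty_or_nonempty with rfl | ⟨x₀, hx₀⟩
  · exact ⟨0, fun _ _ => 0, by simp⟩
  obtain ⟨e, he⟩ := exists_homeomorph_subset_closedDisc e
    (C := ⋃ x ∈ F, ⋃ y ∈ F, metricInterval x y)
    (F.isCompact_biUnion fun x _ => F.isCompact_biUnion fun y _ => hS.isCompact_metricInterval x y)
  simp only [iUnion_subset_iff] at he
  obtain ⟨T, hTF, hT⟩ := hS.exists_finset_chord_ends e he
  obtain ⟨z₀, hz₀, -⟩ := hT x₀ hx₀ x₀ hx₀
  obtain ⟨n, c, hc, hTc, hcT⟩ := exists_isCyclicAngleSequence ⟨z₀, hz₀⟩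
  let s (i : ℕ) : S := e.symm (Circle.exp (c i))
  let D := intrinsicDist (closedDisc e)
  refine ⟨n, fun x i => (D (s (i + 1)) x - D (s i) x) / 4, fun x hx y hy => ?_⟩
  obtain ⟨_, hz, _, hw, hchord⟩ := hT x hx y hy
  obtain ⟨j, hj, rfl⟩ := hTc _ hz
  obtain ⟨k, hk, rfl⟩ := hTc _ hw
  have hsum := hS.sum_abs_intrinsicDist_sub e hc (s := s) (fun i => e.apply_symm_apply _)
    (fun i => hTF _ (hcT i) x hx) (fun i => hTF _ (hcT i) y hy) hj hk hchord
  rw [← Finset.sum_range (fun i => |(D (s (i + 1)) x - D (s i) x) / 4 -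
    (D (s (i + 1)) y - D (s i) y) / 4|), ← mul_div_cancel_left₀ (dist x y) four_ne_zero, ← hsum,
    Finset.sum_div]
  refine Finset.sum_congr rfl fun i _ => ?_
  rw [← sub_div, abs_div, abs_of_pos (four_pos (α := ℝ))]
  congr 2
  ring

end HasContinuousGeodesics

end FiniteEmbedding

/-! ### From finite subsets to the whole space -/

section CompactnessOfMeasures

open Filter Topology

lemma exists_finiteMeasure_integral_eq_sum {ι Ω : Type*} [Fintype ι] [MeasurableSpace Ω]
    [MeasurableSingletonClass Ω] {w : ι → ℝ} (hw : ∀ i, 0 ≤ w i) (p : ι → Ω) :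
    ∃ μ : FiniteMeasure Ω, ∀ f : Ω → ℝ, ∫ z, f z ∂(μ : Measure Ω) = ∑ i, w i * f (p i) := by
  let ν (i : ι) : Measure Ω := (w i).toNNReal • Measure.dirac (p i)
  refine ⟨⟨∑ i, ν i, inferInstance⟩, fun f => ?_⟩
  change ∫ z, f z ∂(∑ i, ν i) = _
  rw [integral_finsetSum_measure fun i _ =>
    (integrable_dirac enorm_lt_top).smul_measure_nnreal]
  refine Finset.sum_congr rfl fun i _ => ?_
  rw [integral_smul_nnreal_measure, integral_dirac, NNReal.smul_def, Real.coe_toNNReal _ (hw i),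
    smul_eq_mul]

lemma exists_finiteMeasure_integral_eq_of_tendsto {E : Type*} [TopologicalSpace E] [T2Space E]
    [CompactSpace E] [MeasurableSpace E] [BorelSpace E] {ι : Type*} {l : Filter ι} [l.NeBot]
    {ν : ι → FiniteMeasure E} {C : NNReal} (hν : ∀ i, (ν i).mass ≤ C) :
    ∃ μ : FiniteMeasure E, ∀ (f : C(E, ℝ)) (a : ℝ),
      Tendsto (fun i => ∫ z, f z ∂(ν i : Measure E)) l (𝓝 a) →
        ∫ z, f z ∂(μ : Measure E) = a := by
  have hcompact := isCompact_setOfPred_finiteMeasure_le_of_compactSpace E C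
  obtain ⟨μ, -, hμ⟩ := hcompact.exists_mapClusterPt (f := l) (u := ν)
    (tendsto_principal.2 (Eventually.of_forall hν))
  refine ⟨μ, fun f a ha => ?_⟩
  have hcont := FiniteMeasure.continuous_integral_boundedContinuousFunction
    (BoundedContinuousFunction.mkOfCompact f)
  exact eq_of_nhds_neBot ((hμ.continuousAt_comp hcont.continuousAt).clusterPt.mono ha)

end CompactnessOfMeasures

section DenseExtension

lemma exists_isometry_of_denseRange {ι X Y : Type*} [PseudoMetricSpace X] [MetricSpace Y]
    [CompleteSpace Y] {u : ι → X} (hu : DenseRange u) {φ : ι → Y}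
    (h : ∀ i j, dist (φ i) (φ j) = dist (u i) (u j)) : ∃ ψ : X → Y, Isometry ψ := by
  let _ : PseudoMetricSpace ι := PseudoMetricSpace.induced u inferInstance
  have hu_ind : IsUniformInducing u := ⟨rfl⟩
  have hφ : UniformContinuous φ := (Isometry.of_dist_eq h).uniformContinuous
  let ψ : X → Y := (hu_ind.isDenseInducing hu).extend φ
  have hψ : Continuous ψ := (uniformContinuous_uniformly_extend hu_ind hu hφ).continuous
  have hψu (i : ι) : ψ (u i) = φ i := uniformly_extend_of_ind hu_ind hu hφ i
  refine ⟨ψ, Isometry.of_dist_eq fun x y => ?_⟩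
  refine isClosed_property2 hu (p := fun x y => dist (ψ x) (ψ y) = dist x y)
    (isClosed_eq (by fun_prop) (by fun_prop)) (fun i j => ?_) x y
  rw [hψu, hψu, h]

end DenseExtension

section CubeEmbedding

open Filter Topology

/-- The compact cube `[-1, 1]^ℕ`, whose rescaled coordinate functions are the images of a sequence
of points under the `L¹` embedding. -/
abbrev SignedCube : Type := ℕ → Icc (-1 : ℝ) 1

lemma exists_pos_forall_sum_mul_le_one {d : ℕ → ℝ} (hd : ∀ n, 0 ≤ d n) :
    ∃ c : ℕ → ℝ, (∀ n, 0 < c n) ∧ ∀ s : Finset ℕ, ∑ n ∈ s, c n * d n ≤ 1 := by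
  obtain ⟨ε, hε, hsum⟩ := countable_univ.exists_pos_forall_sum_le (ι := ℕ) one_pos
  have hd' (n : ℕ) : 0 < 1 + d n := add_pos_of_pos_of_nonneg one_pos (hd n)
  refine ⟨fun n => ε n / (1 + d n), fun n => div_pos (hε n) (hd' n), fun s => ?_⟩
  refine (Finset.sum_le_sum fun n _ => ?_).trans (hsum s (subset_univ _))
  rw [div_mul_eq_mul_div, div_le_iff₀ (hd' n)]
  exact mul_le_mul_of_nonneg_left (le_add_of_nonneg_left zero_le_one) (hε n).le

lemma exists_signedCube_mul_div_eq {c : ℕ → ℝ} (hc : ∀ n, 0 < c n) (v : ℕ → ℝ) (s : Finset ℕ) :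
    ∃ p : SignedCube, ∀ n ∈ s, (∑ k ∈ s, c k * |v k|) * ((p n : ℝ) / c n) = v n := by
  set w := ∑ k ∈ s, c k * |v k|
  have hterm (k : ℕ) : 0 ≤ c k * |v k| := mul_nonneg (hc k).le (abs_nonneg _)
  have hw : 0 ≤ w := Finset.sum_nonneg fun k _ => hterm k
  have hle {n : ℕ} (hn : n ∈ s) : |c n * v n| ≤ w := by
    rw [abs_mul, abs_of_pos (hc n)]
    exact Finset.single_le_sum (fun k _ => hterm k) hn
  refine ⟨fun n => projIcc (-1) 1 (by norm_num) (c n * v n / w), fun n hn => ?_⟩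
  have hmem : c n * v n / w ∈ Icc (-1 : ℝ) 1 := by
    rw [mem_Icc, ← abs_le, abs_div, abs_of_nonneg hw]
    exact div_le_one_of_le₀ (hle hn) hw
  have hcancel : w * (c n * v n / w) = c n * v n :=
    mul_div_cancel_of_imp' fun hw₀ => abs_nonpos_iff.1 (hw₀ ▸ hle hn)
  simp only [projIcc_of_mem _ hmem]
  rw [← mul_div_assoc, hcancel, mul_div_cancel_left₀ _ (hc n).ne']

namespace IsFinitelyL1Embeddable

variable {X : Type*} [PseudoMetricSpace X]

lemma exists_finiteMeasure_signedCube (hX : IsFinitelyL1Embeddable X) (u : ℕ → X) {c : ℕ → ℝ}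
    (hc : ∀ n, 0 < c n) {N : ℕ} (hN : 0 < N)
    (hsum : ∑ n ∈ Finset.range N, c n * dist (u n) (u 0) ≤ 1) :
    ∃ μ : FiniteMeasure SignedCube, μ.mass ≤ 1 ∧ ∀ n < N, ∀ m < N,
      ∫ z, |(z n : ℝ) / c n - z m / c m| ∂(μ : Measure SignedCube) = dist (u n) (u m) := by
  classical
  obtain ⟨k, φ, hφ⟩ := hX ((Finset.range N).image u)
  have hφu (n : ℕ) (hn : n < N) (m : ℕ) (hm : m < N) :
      ∑ i, |φ (u n) i - φ (u m) i| = dist (u n) (u m) :=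
    hφ _ (Finset.mem_image_of_mem u (Finset.mem_range.2 hn)) _
      (Finset.mem_image_of_mem u (Finset.mem_range.2 hm))
  let v (i : Fin k) (n : ℕ) : ℝ := φ (u n) i - φ (u 0) i
  let w (i : Fin k) : ℝ := ∑ n ∈ Finset.range N, c n * |v i n|
  have hw (i : Fin k) : 0 ≤ w i :=
    Finset.sum_nonneg fun n _ => mul_nonneg (hc n).le (abs_nonneg _)
  have hw_sum : ∑ i, w i ≤ 1 := by
    refine le_of_eq_of_le ?_ hsum
    rw [Finset.sum_comm]
    refine Finset.sum_congr rfl fun n hn => ?_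
    rw [← Finset.mul_sum, hφu n (Finset.mem_range.1 hn) 0 hN]
  have hpoint (i : Fin k) : ∃ p : SignedCube, ∀ n ∈ Finset.range N,
      w i * ((p n : ℝ) / c n) = v i n := exists_signedCube_mul_div_eq hc (v i) (Finset.range N)
  choose p hp using hpoint
  obtain ⟨μ, hμ⟩ := exists_finiteMeasure_integral_eq_sum hw p
  refine ⟨μ, ?_, fun n hn m hm => ?_⟩
  · have hmass := hμ fun _ => 1
    simp only [integral_const, smul_eq_mul, mul_one] at hmass
    exact NNReal.coe_le_one.1 (hmass.trans_le hw_sum)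
  · rw [hμ, ← hφu n hn m hm]
    refine Finset.sum_congr rfl fun i _ => ?_
    rw [← abs_of_nonneg (hw i), ← abs_mul, mul_sub, hp i n (Finset.mem_range.2 hn),
      hp i m (Finset.mem_range.2 hm), sub_sub_sub_cancel_right]

lemma exists_finiteMeasure_signedCube_forall (hX : IsFinitelyL1Embeddable X) (u : ℕ → X) :
    ∃ (c : ℕ → ℝ) (μ : FiniteMeasure SignedCube), ∀ n m,
      ∫ z, |(z n : ℝ) / c n - z m / c m| ∂(μ : Measure SignedCube) = dist (u n) (u m) := by
  obtain ⟨c, hc, hsum⟩ :=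
    exists_pos_forall_sum_mul_le_one fun n => dist_nonneg (x := u n) (y := u 0)
  choose ν hν hνdist using fun N =>
    hX.exists_finiteMeasure_signedCube u hc N.succ_pos (hsum (Finset.range (N + 1)))
  obtain ⟨μ, hμ⟩ := exists_finiteMeasure_integral_eq_of_tendsto (l := atTop) hν
  refine ⟨c, μ, fun n m => ?_⟩
  refine hμ ⟨fun z => |(z n : ℝ) / c n - z m / c m|, by fun_prop⟩ _ (tendsto_const_nhds.congr' ?_)
  filter_upwards [eventually_ge_atTop n, eventually_ge_atTop m] with N hn hm
  exact (hνdist N n (Nat.lt_succ_of_le hn) m (Nat.lt_succ_of_le hm)).symm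

lemma exists_isometry_Lp_of_seq (hX : IsFinitelyL1Embeddable X) (u : ℕ → X) :
    ∃ (μ : Measure SignedCube) (φ : ℕ → Lp ℝ 1 μ), ∀ n m, dist (φ n) (φ m) = dist (u n) (u m) := by
  obtain ⟨c, μ, hμ⟩ := hX.exists_finiteMeasure_signedCube_forall u
  have hmem (n : ℕ) : MemLp (fun z : SignedCube => (z n : ℝ) / c n) 1 (μ : Measure SignedCube) := by
    have hcont : Continuous fun z : SignedCube => (z n : ℝ) / c n := by fun_prop
    exact memLp_one_iff_integrable.2 (hcont.integrable_of_hasCompactSupport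
      (HasCompactSupport.of_compactSpace _))
  refine ⟨μ, fun n => (hmem n).toLp, fun n m => ?_⟩
  rw [dist_eq_norm, ← MemLp.toLp_sub, L1.norm_eq_integral_norm, ← hμ n m]
  refine integral_congr_ae ?_
  filter_upwards [((hmem n).sub (hmem m)).coeFn_toLp] with z hz
  rw [hz, Real.norm_eq_abs, Pi.sub_apply]

lemma exists_isometry_Lp [TopologicalSpace.SeparableSpace X] [Nonempty X]
    (hX : IsFinitelyL1Embeddable X) :
    ∃ (μ : Measure SignedCube) (φ : X → Lp ℝ 1 μ), Isometry φ := by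
  obtain ⟨μ, φ, hφ⟩ := hX.exists_isometry_Lp_of_seq (TopologicalSpace.denseSeq X)
  exact ⟨μ, exists_isometry_of_denseRange (TopologicalSpace.denseRange_denseSeq X) hφ⟩

end IsFinitelyL1Embeddable

end CubeEmbedding

theorem busemann_surface_L1_embeddable_general {S : Type*} [MetricSpace S]
    (hS : HasContinuousGeodesics S) (e : S ≃ₜ ℝ × ℝ) :
    ∃ (Ω : Type) (m : MeasurableSpace Ω) (μ : @MeasureTheory.Measure Ω m)
      (φ : S → MeasureTheory.Lp ℝ 1 μ),
      ∀ x y : S, ‖φ x - φ y‖ = dist x y := by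
  have : Nonempty S := ⟨e.symm 0⟩
  have : TopologicalSpace.SeparableSpace S :=
    e.symm.surjective.denseRange.separableSpace e.symm.continuous
  have hfin : IsFinitelyL1Embeddable S :=
    hS.isFinitelyL1Embeddable (e.trans Complex.equivRealProdCLM.symm.toHomeomorph)
  obtain ⟨μ, φ, hφ⟩ := hfin.exists_isometry_Lp
  exact ⟨SignedCube, _, μ, φ, fun x y => by rw [← dist_eq_norm, hφ.dist_eq]⟩

/-- Every Busemann surface is `L₁`-embeddable. -/
theorem busemann_surface_L1_embeddable {S : Type} [MetricSpace S]
    (hS : IsBusemannSurface S) :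
    ∃ (Ω : Type) (m : MeasurableSpace Ω) (μ : @MeasureTheory.Measure Ω m)
      (φ : S → MeasureTheory.Lp ℝ 1 μ),
      ∀ x y : S, ‖φ x - φ y‖ = dist x y :=
  busemann_surface_L1_embeddable_general hS.1.hasContinuousGeodesics hS.2.some
end

section
/- Let (S,d) be a Busemann surface and let ℓ be a line of S. Then S \ ℓ has exactly two connected components. -/
open Metric Set MeasureTheory

/-!
A line is a closed embedding of `ℝ` in a plane, and inversion at a point `r` off the line turns its
closure in the Riemann sphere into a Jordan curve `γ` in `ℂ`. Both halves of the count follow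
Eilenberg's idea of studying which nonvanishing functions have a continuous logarithm.

*At least two components.* Cut `γ` at `0` (the image of `∞`) and at a second point `k`. Shrinking
`k` to `0` along either of the two arcs gives a logarithm of `u ↦ 1 - u * k` off the reciprocals of
that arc. The two are both defined on a translate of the complement of the line; were it connected,
they would glue to a logarithm of `1 - u * k` on the complement of `k⁻¹`, contradicting its winding
number.

*At most two components.* Suppose that `p` and `q` lie in distinct bounded components of the
complement of `γ`. Up to homotopy, functions `γ → ℂ \ {0}` are classified by one integer, so some
`(z - p) ^ a * (z - q) ^ b` with `(a, b) ≠ (0, 0)` has a logarithm on `γ`. Inside the component of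
`p` the factor `(z - q) ^ b` does not vanish, so replacing the product by it there and using the
extended logarithm outside leaves `(z - p) ^ (-a)` with winding number zero; thus `a = 0`, and
symmetrically `b = 0`. Taking `r` in a third component of the complement of the line makes the
other two components bounded.
-/

section ContinuousLogarithm

open Complex

/-- `f` has a continuous logarithm on `s`. The logarithm is a function on the whole space, whose
values outside `s` are irrelevant. -/
def HasContinuousLogOn {X : Type*} [TopologicalSpace X] (f : X → ℂ) (s : Set X) : Prop :=
  ∃ g : X → ℂ, ContinuousOn g s ∧ ∀ x ∈ s, exp (g x) = f x

variable {X : Type*} [TopologicalSpace X]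

lemma exists_int_forall_eq_add_of_exp_eq {s : Set X} (hs : IsPreconnected s)
    {g₁ g₂ : X → ℂ} (hg₁ : ContinuousOn g₁ s) (hg₂ : ContinuousOn g₂ s)
    (h : ∀ x ∈ s, exp (g₁ x) = exp (g₂ x)) :
    ∃ n : ℤ, ∀ x ∈ s, g₁ x = g₂ x + n * (2 * Real.pi * I) := by
  rcases s.eq_empty_or_nonempty with rfl | ⟨x₀, hx₀⟩
  · exact ⟨0, by simp⟩
  obtain ⟨n, hn⟩ := exp_eq_exp_iff_exists_int.1 (h x₀ hx₀)
  refine ⟨n, isCoveringMap_exp.eqOn_of_comp_eqOn hs hg₁ (hg₂.add continuousOn_const)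
    (fun x hx => Subtype.ext ?_) hx₀ hn⟩
  simp only [Function.comp_apply, h x hx, exp_add, exp_int_mul_two_pi_mul_I, mul_one]

namespace HasContinuousLogOn

variable {f g : X → ℂ} {s t : Set X}

lemma mono (hf : HasContinuousLogOn f t) (hst : s ⊆ t) : HasContinuousLogOn f s :=
  let ⟨u, hu, hexp⟩ := hf
  ⟨u, hu.mono hst, fun x hx => hexp x (hst hx)⟩

lemma congr (hf : HasContinuousLogOn f s) (hfg : EqOn f g s) : HasContinuousLogOn g s :=
  let ⟨u, hu, hexp⟩ := hf
  ⟨u, hu, fun x hx => (hexp x hx).trans (hfg hx)⟩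

lemma const {c : ℂ} (hc : c ≠ 0) : HasContinuousLogOn (fun _ => c) s :=
  ⟨fun _ => log c, continuousOn_const, fun _ _ => exp_log hc⟩

lemma mul (hf : HasContinuousLogOn f s) (hg : HasContinuousLogOn g s) :
    HasContinuousLogOn (fun x => f x * g x) s :=
  let ⟨u, hu, hexpu⟩ := hf
  let ⟨v, hv, hexpv⟩ := hg
  ⟨fun x => u x + v x, hu.add hv, fun x hx => by rw [exp_add, hexpu x hx, hexpv x hx]⟩

lemma zpow (hf : HasContinuousLogOn f s) (n : ℤ) : HasContinuousLogOn (fun x => f x ^ n) s :=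
  let ⟨u, hu, hexp⟩ := hf
  ⟨fun x => n * u x, continuousOn_const.mul hu, fun x hx => by rw [exp_int_mul, hexp x hx]⟩

lemma of_subtype {u : s → ℂ} (hu : Continuous u) (hexp : ∀ x : s, exp (u x) = f x) :
    HasContinuousLogOn f s := by
  have hext (x : s) : Function.extend Subtype.val u 0 x = u x :=
    Subtype.val_injective.extend_apply u 0 x
  refine ⟨Function.extend Subtype.val u 0, ?_, fun x hx => by rw [hext ⟨x, hx⟩, hexp]⟩
  exact continuousOn_iff_continuous_domRestrict.2 (hu.congr fun x => (hext x).symm)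

lemma range_of_isEmbedding {Y : Type*} [TopologicalSpace Y] {e : X → Y}
    (he : Topology.IsEmbedding e) {f : Y → ℂ} (hf : HasContinuousLogOn (f ∘ e) univ) :
    HasContinuousLogOn f (range e) := by
  obtain ⟨u, hu, hexp⟩ := hf
  refine of_subtype ((continuousOn_univ.1 hu).comp he.toHomeomorph.symm.continuous) fun y => ?_
  obtain ⟨x, rfl⟩ := he.toHomeomorph.surjective y
  simpa using hexp x trivial

lemma of_simplyConnectedSpace [SimplyConnectedSpace X] [LocallyPathConnectedSpace X]
    (hf : Continuous f) (hf₀ : ∀ x, f x ≠ 0) : HasContinuousLogOn f univ := by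
  obtain ⟨x₀⟩ : Nonempty X := inferInstance
  obtain ⟨F, ⟨-, hF⟩, -⟩ := isCoveringMap_exp.existsUnique_continuousMap_lifts
    (⟨fun x => ⟨f x, hf₀ x⟩, hf.subtype_mk _⟩ : C(X, {z : ℂ // z ≠ 0})) x₀ (log (f x₀))
    (Subtype.ext (exp_log (hf₀ x₀)))
  exact ⟨F, F.continuous.continuousOn, fun x _ => congrArg Subtype.val (congrFun hF x)⟩

lemma of_homotopy {H : unitInterval × X → ℂ} (hH : ContinuousOn H (univ ×ˢ s))
    (hH₀ : ∀ r, ∀ x ∈ s, H (r, x) ≠ 0) (h : HasContinuousLogOn (fun x => H (0, x)) s) :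
    HasContinuousLogOn (fun x => H (1, x)) s := by
  obtain ⟨u, hu, hexp⟩ := h
  let H' : C(unitInterval × s, {z : ℂ // z ≠ 0}) :=
    ⟨fun y => ⟨H (y.1, y.2), hH₀ _ _ y.2.2⟩,
      (hH.comp_continuous (by fun_prop) fun y => ⟨mem_univ _, y.2.2⟩).subtype_mk _⟩
  have hH'₀ (x : s) : H' (0, x) = ⟨exp (u x), exp_ne_zero _⟩ :=
    Subtype.ext (hexp x x.2).symm
  let F := isCoveringMap_exp.liftHomotopy H' ⟨s.domRestrict u, hu.domRestrict⟩ hH'₀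
  exact of_subtype (u := fun x => F (1, x)) (by fun_prop) fun x =>
    congrArg Subtype.val (congrFun (isCoveringMap_exp.liftHomotopy_lifts H' _ hH'₀) (1, x))

lemma compl_of_eqOn_frontier [SimplyConnectedSpace X] [LocallyPathConnectedSpace X] {U : Set X}
    (hU : IsOpen U) (hf : ContinuousOn f (closure U)) (hf₀ : ∀ x ∈ closure U, f x ≠ 0)
    (hg : ContinuousOn g Uᶜ) (hg₀ : ∀ x ∈ Uᶜ, g x ≠ 0) (hfg : EqOn f g (frontier U)) :
    HasContinuousLogOn g Uᶜ := by
  classical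
  have hcont : Continuous (U.piecewise f g) :=
    continuous_piecewise hfg hf (hU.isClosed_compl.closure_eq.symm ▸ hg)
  have hne (x : X) : U.piecewise f g x ≠ 0 := by
    by_cases hx : x ∈ U
    · simpa only [U.piecewise_eq_of_mem _ _ hx] using hf₀ x (subset_closure hx)
    · simpa only [U.piecewise_eq_of_notMem _ _ hx] using hg₀ x hx
  exact ((of_simplyConnectedSpace hcont hne).mono (subset_univ _)).congr
    (U.piecewise_eqOn_compl f g)

lemma union (hfs : HasContinuousLogOn f s) (hft : HasContinuousLogOn f t) (hs : IsOpen s)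
    (ht : IsOpen t) (hst : IsPreconnected (s ∩ t)) : HasContinuousLogOn f (s ∪ t) := by
  classical
  obtain ⟨u, hu, hexpu⟩ := hfs
  obtain ⟨v, hv, hexpv⟩ := hft
  obtain ⟨n, hn⟩ := exists_int_forall_eq_add_of_exp_eq hst (hu.mono inter_subset_left)
    (hv.mono inter_subset_right) fun x hx => (hexpu x hx.1).trans (hexpv x hx.2).symm
  let w : X → ℂ := s.piecewise u fun x => v x + n * (2 * Real.pi * I)
  have hws : EqOn w u s := s.piecewise_eqOn _ _
  have hwt : EqOn w (fun x => v x + n * (2 * Real.pi * I)) t := fun x hx => by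
    by_cases hxs : x ∈ s
    · exact (hws hxs).trans (hn x ⟨hxs, hx⟩)
    · exact s.piecewise_eq_of_notMem _ _ hxs
  refine ⟨w, (hu.congr hws).union_of_isOpen ((hv.add continuousOn_const).congr hwt) hs ht, ?_⟩
  rintro x (hx | hx)
  · rw [hws hx, hexpu x hx]
  · rw [hwt hx, exp_add, exp_int_mul_two_pi_mul_I, mul_one, hexpv x hx]

lemma eq_zero_of_sphere {n : ℤ} {p : ℂ} {R : ℝ} (hR : 0 < R)
    (h : HasContinuousLogOn (fun z => (z - p) ^ n) (sphere p R)) : n = 0 := by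
  obtain ⟨g, hg, hexp⟩ := h
  have hmem (θ : ℝ) : circleMap p R θ ∈ sphere p R := circleMap_mem_sphere p hR.le θ
  have hR₀ : (R : ℂ) ≠ 0 := by exact_mod_cast hR.ne'
  obtain ⟨m, hm⟩ := exists_int_forall_eq_add_of_exp_eq isPreconnected_univ
    (g₁ := fun θ => g (circleMap p R θ)) (g₂ := fun θ : ℝ => n * (log R + θ * I))
    (hg.comp (continuous_circleMap p R).continuousOn fun θ _ => hmem θ) (by fun_prop)
    fun θ _ => by
      simp only [hexp _ (hmem θ), exp_int_mul, exp_add, exp_log hR₀, circleMap_sub_center,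
        circleMap_zero]
  have hloop : circleMap p R (2 * Real.pi) = circleMap p R 0 := by
    simpa using periodic_circleMap p R 0
  have hjump : (n : ℂ) * (2 * Real.pi * I) = 0 := by
    have h₀ := hm 0 trivial
    have h₁ := hm (2 * Real.pi) trivial
    simp only [hloop, ofReal_mul, ofReal_ofNat, ofReal_zero] at h₀ h₁
    linear_combination h₀ - h₁
  exact_mod_cast (mul_eq_zero.1 hjump).resolve_right two_pi_I_ne_zero

end HasContinuousLogOn

end ContinuousLogarithm

section Separation

open Complex

/-- The complement in `ℂ` of the set of reciprocals of points of `C`. It is phrased by products so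
that `0 ∈ C`, whose reciprocal is `∞`, imposes no condition: if `C` is compact and contains `0`,
this is the complement of a closed, possibly unbounded set. -/
def reciprocalCompl (C : Set ℂ) : Set ℂ :=
  {u | ∀ c ∈ C, u * c ≠ 1}

lemma reciprocalCompl_union (C D : Set ℂ) :
    reciprocalCompl (C ∪ D) = reciprocalCompl C ∩ reciprocalCompl D := by
  ext u
  simp only [reciprocalCompl, mem_union, or_imp, forall_and, mem_inter_iff, mem_ofPred_eq]

lemma isOpen_reciprocalCompl {C : Set ℂ} (hC : IsCompact C) : IsOpen (reciprocalCompl C) := by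
  refine isOpen_iff_eventually.2 fun u hu => ?_
  refine hC.eventually_forall_of_forall_eventually fun c hc => ?_
  exact (continuous_mul.tendsto (u, c)).eventually_ne (hu c hc)

lemma hasContinuousLogOn_reciprocalCompl {C : Set ℂ} {k : ℂ} (h : JoinedIn C 0 k) :
    HasContinuousLogOn (fun u => 1 - u * k) (reciprocalCompl C) := by
  obtain ⟨α, hα⟩ := h
  have hlog := HasContinuousLogOn.of_homotopy (H := fun x => 1 - x.2 * α x.1)
    (s := reciprocalCompl C) (by fun_prop) (fun r u hu => sub_ne_zero.2 (hu _ (hα r)).symm)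
    (by simpa only [α.source, mul_zero, sub_zero] using HasContinuousLogOn.const one_ne_zero)
  simpa only [α.target] using hlog

lemma setOf_mul_ne_one_subset_reciprocalCompl_union {C D : Set ℂ} {k : ℂ}
    (h : C ∩ D ⊆ {0, k}) :
    {u | u * k ≠ 1} ⊆ reciprocalCompl C ∪ reciprocalCompl D := by
  intro u huk
  by_contra hu
  simp only [reciprocalCompl, mem_union, mem_ofPred_eq, not_or, not_forall, not_not] at hu
  obtain ⟨⟨c, hc, huc⟩, d, hd, hud⟩ := hu
  obtain rfl : c = d := mul_left_cancel₀ (left_ne_zero_of_mul_eq_one huc) (huc.trans hud.symm)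
  rcases h ⟨hc, hd⟩ with rfl | rfl
  · exact zero_ne_one ((mul_zero u).symm.trans huc)
  · exact huk huc

lemma not_hasContinuousLogOn_one_sub_mul {k : ℂ} (hk : k ≠ 0) :
    ¬ HasContinuousLogOn (fun u => 1 - u * k) {u | u * k ≠ 1} := by
  intro h
  have hsub : sphere k⁻¹ 1 ⊆ {u | u * k ≠ 1} := fun u hu huk => by
    simp [eq_inv_of_mul_eq_one_left huk] at hu
  refine one_ne_zero (HasContinuousLogOn.eq_zero_of_sphere (n := 1) (p := k⁻¹) one_pos ?_)
  refine ((h.mono hsub).mul (.const (neg_ne_zero.2 (inv_ne_zero hk)))).congr fun u _ => ?_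
  simp only [zpow_one]
  field_simp
  ring

theorem not_isPreconnected_reciprocalCompl_range {γ : Circle → ℂ} (hγ : Continuous γ)
    (hinj : Function.Injective γ) (h₀ : 0 ∈ range γ) :
    ¬ IsPreconnected (reciprocalCompl (range γ)) := by
  intro hconn
  obtain ⟨x, hx⟩ := h₀
  let y := -x
  have hxy : x ≠ y := (Circle.neg_ne_self x).symm
  let C := γ '' range (Circle.path x y)
  let D := γ '' range (Circle.path y x)
  have hunion : C ∪ D = range γ := by
    rw [← image_union, Circle.range_path_union_range_path hxy, image_univ]
  have hinter : C ∩ D ⊆ {0, γ y} := by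
    rw [← image_inter hinj, Circle.range_path_inter_range_path hxy, image_pair, hx]
  have hjoinC : JoinedIn C 0 (γ y) :=
    hx ▸ ⟨(Circle.path x y).map hγ, fun t => ⟨_, mem_range_self t, rfl⟩⟩
  have hjoinD : JoinedIn D 0 (γ y) :=
    hx ▸ JoinedIn.symm ⟨(Circle.path y x).map hγ, fun t => ⟨_, mem_range_self t, rfl⟩⟩
  have hopen (a b : Circle) : IsOpen (reciprocalCompl (γ '' range (Circle.path a b))) :=
    isOpen_reciprocalCompl ((isCompact_range (Circle.path a b).continuous).image hγ)
  have hlog : HasContinuousLogOn (fun u => 1 - u * γ y) (reciprocalCompl C ∪ reciprocalCompl D) :=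
    (hasContinuousLogOn_reciprocalCompl hjoinC).union (hasContinuousLogOn_reciprocalCompl hjoinD)
      (hopen x y) (hopen y x) (by rwa [← reciprocalCompl_union, hunion])
  exact not_hasContinuousLogOn_one_sub_mul (fun hy => hxy (hinj (hx.trans hy.symm)))
    (hlog.mono (setOf_mul_ne_one_subset_reciprocalCompl_union hinter))

end Separation

section BoundedComponent

open Bornology Complex

lemma eq_zero_of_hasContinuousLogOn_frontier {U : Set ℂ} (hU : IsOpen U) (hbdd : IsBounded U)
    {p : ℂ} (hp : p ∈ U) {n : ℤ} {E : ℂ → ℂ} (hE : ContinuousOn E (closure U))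
    (hE₀ : ∀ z ∈ closure U, E z ≠ 0)
    (h : HasContinuousLogOn (fun z => (z - p) ^ n * E z) (frontier U)) : n = 0 := by
  obtain ⟨g, hg, hexp⟩ := h
  obtain ⟨φ, hφ⟩ := ContinuousMap.exists_restrict_eq isClosed_frontier
    ⟨(frontier U).domRestrict g, hg.domRestrict⟩
  have hφg (z : ℂ) (hz : z ∈ frontier U) : φ z = g z := DFunLike.congr_fun hφ ⟨z, hz⟩
  have hsub (z : ℂ) (hz : z ∉ U) : z - p ≠ 0 := sub_ne_zero.2 fun hzp => hz (hzp ▸ hp)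
  have hcompl : HasContinuousLogOn (fun z => exp (φ z) * (z - p) ^ (-n)) Uᶜ := by
    refine .compl_of_eqOn_frontier hU hE hE₀ ?_ ?_ fun z hz => ?_
    · exact φ.continuous.cexp.continuousOn.mul
        (ContinuousOn.zpow₀ (by fun_prop) _ fun z hz => .inl (hsub z hz))
    · exact fun z hz => mul_ne_zero (exp_ne_zero _) (zpow_ne_zero _ (hsub z hz))
    · have hz₀ := zpow_ne_zero n (hsub z (hU.frontier_eq ▸ hz).2)
      rw [hφg z hz, hexp z hz, zpow_neg]
      field_simp
  obtain ⟨R, hR, hUR⟩ := hbdd.subset_ball_lt 0 p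
  have hsphere : sphere p R ⊆ Uᶜ := fun z hz hzU =>
    sphere_disjoint_ball.ne_of_mem hz (hUR hzU) rfl
  have hexpφ : HasContinuousLogOn (fun z => exp (-φ z)) (sphere p R) :=
    ⟨fun z => -φ z, by fun_prop, fun _ _ => rfl⟩
  refine neg_eq_zero.1 (HasContinuousLogOn.eq_zero_of_sphere hR
    (((hcompl.mono hsphere).mul hexpφ).congr fun z _ => ?_))
  beta_reduce
  rw [mul_right_comm, ← exp_add, add_neg_cancel, exp_zero, one_mul]

lemma exists_zpow_mul_hasContinuousLogOn_circle {f : Circle → ℂ} (hf : Continuous f)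
    (hf₀ : ∀ z, f z ≠ 0) :
    ∃ k : ℤ, HasContinuousLogOn (fun z : Circle => f z * (z : ℂ) ^ (-k)) univ := by
  obtain ⟨u, hu, hexp⟩ := HasContinuousLogOn.of_simplyConnectedSpace
    (hf.comp Circle.exp.continuous) fun t => hf₀ (Circle.exp t)
  rw [continuousOn_univ] at hu
  obtain ⟨k, hk⟩ := exists_int_forall_eq_add_of_exp_eq isPreconnected_univ
    (g₁ := fun t => u (t + 2 * Real.pi)) (g₂ := u) (by fun_prop) (by fun_prop) fun t _ => by
      rw [hexp _ trivial, hexp _ trivial, Function.comp_apply, Circle.periodic_exp,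
        Function.comp_apply]
  let v : C(ℝ, ℂ) := ⟨fun t => u t - k * (t * I), by fun_prop⟩
  have hv : Function.Periodic v (2 * Real.pi) := fun t => by
    simp only [v, ContinuousMap.coe_mk, hk t trivial]
    push_cast
    ring
  have hfactors : Function.FactorsThrough v Circle.exp := fun s t hst => by
    obtain ⟨m, rfl⟩ := Circle.exp_eq_exp.1 hst
    exact hv.int_mul m t
  have hquot := Circle.isCoveringMap_exp.isQuotientMap Circle.exp_surjective
  refine ⟨k, hquot.lift v hfactors, (map_continuous _).continuousOn, fun z _ => ?_⟩
  obtain ⟨t, rfl⟩ := Circle.exp_surjective z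
  have hlift : hquot.lift v hfactors (Circle.exp t) = v t :=
    DFunLike.congr_fun (hquot.lift_comp v hfactors) t
  simp only [hlift, v, ContinuousMap.coe_mk]
  rw [exp_sub, hexp t trivial, exp_int_mul, Circle.coe_exp, zpow_neg]
  rfl

lemma exists_zpow_mul_zpow_hasContinuousLogOn_circle {f g : Circle → ℂ} (hf : Continuous f)
    (hg : Continuous g) (hf₀ : ∀ z, f z ≠ 0) (hg₀ : ∀ z, g z ≠ 0) :
    ∃ a b : ℤ, (a ≠ 0 ∨ b ≠ 0) ∧ HasContinuousLogOn (fun z => f z ^ a * g z ^ b) univ := by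
  obtain ⟨k, hk⟩ := exists_zpow_mul_hasContinuousLogOn_circle hf hf₀
  obtain ⟨l, hl⟩ := exists_zpow_mul_hasContinuousLogOn_circle hg hg₀
  by_cases hkl : k = 0
  · exact ⟨1, 0, .inl one_ne_zero, by simpa [hkl] using hk⟩
  · refine ⟨l, -k, .inr (neg_ne_zero.2 hkl),
      ((hk.zpow l).mul (hl.zpow (-k))).congr fun z _ => ?_⟩
    have hz : (z : ℂ) ≠ 0 := z.coe_ne_zero
    simp only [mul_zpow, ← zpow_mul]
    rw [mul_mul_mul_comm, ← zpow_add₀ hz, show -k * l + -l * -k = 0 by ring, zpow_zero, mul_one]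

lemma frontier_connectedComponentIn_subset_compl {X : Type*} [TopologicalSpace X]
    [LocallyConnectedSpace X] {F : Set X} (hF : IsOpen F) (x : X) :
    frontier (connectedComponentIn F x) ⊆ Fᶜ := by
  intro y hy hyF
  rw [hF.connectedComponentIn.frontier_eq] at hy
  obtain ⟨z, hzy, hzx⟩ := mem_closure_iff.1 hy.1 _ hF.connectedComponentIn
    (mem_connectedComponentIn hyF)
  rw [connectedComponentIn_eq hzx, ← connectedComponentIn_eq hzy] at hy
  exact hy.2 (mem_connectedComponentIn hyF)

lemma eq_zero_of_hasContinuousLogOn_of_connectedComponentIn_ne {K : Set ℂ} (hK : IsClosed K)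
    {p q : ℂ} (hp : p ∉ K) (hq : q ∉ K) (hbdd : IsBounded (connectedComponentIn Kᶜ p))
    (hne : connectedComponentIn Kᶜ p ≠ connectedComponentIn Kᶜ q) {a b : ℤ}
    (h : HasContinuousLogOn (fun z => (z - p) ^ a * (z - q) ^ b) K) : a = 0 := by
  have hfrontier : frontier (connectedComponentIn Kᶜ p) ⊆ K := by
    simpa only [compl_compl] using frontier_connectedComponentIn_subset_compl hK.isOpen_compl p
  have hsub : ∀ z ∈ closure (connectedComponentIn Kᶜ p), z - q ≠ 0 := by
    rintro z hz hzq
    rw [sub_eq_zero.1 hzq, closure_eq_self_union_frontier] at hz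
    rcases hz with hz | hz
    · exact hne (connectedComponentIn_eq hz)
    · exact hq (hfrontier hz)
  exact eq_zero_of_hasContinuousLogOn_frontier hK.isOpen_compl.connectedComponentIn hbdd
    (mem_connectedComponentIn hp)
    (ContinuousOn.zpow₀ (by fun_prop) b fun z hz => .inl (hsub z hz))
    (fun z hz => zpow_ne_zero b (hsub z hz)) (h.mono hfrontier)

theorem connectedComponentIn_compl_range_circle_eq_of_isBounded {γ : Circle → ℂ} (hγ : Continuous γ)
    (hinj : Function.Injective γ) {p q : ℂ} (hp : p ∉ range γ) (hq : q ∉ range γ)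
    (hpb : IsBounded (connectedComponentIn (range γ)ᶜ p))
    (hqb : IsBounded (connectedComponentIn (range γ)ᶜ q)) :
    connectedComponentIn (range γ)ᶜ p = connectedComponentIn (range γ)ᶜ q := by
  by_contra hne
  have hemb : Topology.IsClosedEmbedding γ := hγ.isClosedEmbedding hinj
  have hsub {c : ℂ} (hc : c ∉ range γ) (z : Circle) : γ z - c ≠ 0 :=
    sub_ne_zero.2 fun hz => hc ⟨z, hz⟩
  obtain ⟨a, b, hab, hlog⟩ := exists_zpow_mul_zpow_hasContinuousLogOn_circle
    (f := fun z => γ z - p) (g := fun z => γ z - q) (by fun_prop) (by fun_prop) (hsub hp) (hsub hq)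
  have hlogγ : HasContinuousLogOn (fun z => (z - p) ^ a * (z - q) ^ b) (range γ) :=
    .range_of_isEmbedding hemb.isEmbedding hlog
  refine hab.elim (· ?_) (· ?_)
  · exact eq_zero_of_hasContinuousLogOn_of_connectedComponentIn_ne hemb.isClosed_range hp hq hpb
      hne hlogγ
  · exact eq_zero_of_hasContinuousLogOn_of_connectedComponentIn_ne hemb.isClosed_range hq hp hqb
      (Ne.symm hne) (hlogγ.congr fun z _ => mul_comm _ _)

end BoundedComponent

section Inversion

open Filter Topology Bornology

/-- The image of `L ∪ {∞}` under the inversion `z ↦ 1 / (z - r)` of the Riemann sphere, which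
sends `∞` to `0`. The center `r` is meant to lie outside `L`. -/
def inversionImage (r : ℂ) (L : Set ℂ) : Set ℂ :=
  insert 0 ((fun z => (z - r)⁻¹) '' L)

variable {r : ℂ} {L : Set ℂ}

lemma notMem_inversionImage_iff {w : ℂ} :
    w ∉ inversionImage r L ↔ w ≠ 0 ∧ r + w⁻¹ ∉ L := by
  simp only [inversionImage, mem_insert_iff, mem_image, not_or, inv_eq_iff_eq_inv,
    sub_eq_iff_eq_add', exists_eq_right]

lemma reciprocalCompl_inversionImage (hr : r ∉ L) :
    reciprocalCompl (inversionImage r L) = (· - r) '' Lᶜ := by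
  have hmul {u z : ℂ} (hz : z ∈ L) : u * (z - r)⁻¹ = 1 ↔ z = u + r := by
    have hzr : z ≠ r := ne_of_mem_of_not_mem hz hr
    rw [mul_inv_eq_one₀ (sub_ne_zero.2 hzr), eq_sub_iff_add_eq, eq_comm]
  ext u
  simp only [reciprocalCompl, inversionImage, forall_mem_insert, mul_zero, forall_mem_image,
    mem_ofPred_eq, image_sub_right]
  constructor
  · exact fun h hu => h.2 hu ((hmul hu).2 rfl)
  · exact fun h => ⟨zero_ne_one, fun z hz huz => h (mem_of_eq_of_mem ((hmul hz).1 huz).symm hz)⟩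

lemma tendsto_inv_sub_cocompact (r : ℂ) : Tendsto (fun z => (z - r)⁻¹) (cocompact ℂ) (𝓝 0) := by
  have hsub := (Homeomorph.subRight r).isClosedEmbedding.tendsto_cocompact
  rw [← cobounded_eq_cocompact] at hsub ⊢
  exact tendsto_inv₀_cobounded.comp hsub

lemma nonempty_circle_homeomorph_onePoint_real : Nonempty (Circle ≃ₜ OnePoint ℝ) := by
  have hfinrank : Module.finrank ℝ (Submodule.span ℝ {(1 : ℂ)})ᗮ = Module.finrank ℝ ℝ := by
    have : Fact (Module.finrank ℝ ℂ = 1 + 1) := ⟨Complex.finrank_real_complex⟩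
    rw [Submodule.finrank_orthogonal_span_singleton (n := 1) one_ne_zero, Module.finrank_self]
  obtain ⟨φ⟩ := FiniteDimensional.nonempty_continuousLinearEquiv_of_finrank_eq hfinrank
  exact ⟨(onePointHyperplaneHomeoUnitSphere (norm_one (α := ℂ))).symm.trans
    φ.toHomeomorph.onePointCongr⟩

lemma exists_circle_range_eq_inversionImage {J : ℝ → ℂ} (hJ : IsClosedEmbedding J)
    (hr : r ∉ range J) :
    ∃ γ : Circle → ℂ, Continuous γ ∧ Function.Injective γ ∧
      range γ = inversionImage r (range J) := by
  have hsub (t : ℝ) : J t - r ≠ 0 := sub_ne_zero.2 fun ht => hr ⟨t, ht⟩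
  have hcont : Continuous fun t => (J t - r)⁻¹ := (hJ.continuous.sub continuous_const).inv₀ hsub
  let γ : C(OnePoint ℝ, ℂ) := OnePoint.continuousMapMk ⟨_, hcont⟩ 0 <| by
    rw [coclosedCompact_eq_cocompact]
    exact (tendsto_inv_sub_cocompact r).comp hJ.tendsto_cocompact
  have hinj : Function.Injective γ := Option.injective_iff.2
    ⟨fun s t hst => hJ.injective (sub_left_injective (inv_injective hst)),
      fun ⟨t, ht⟩ => inv_ne_zero (hsub t) ht⟩
  have hrange : range γ = inversionImage r (range J) :=
    (Option.range_eq γ).trans (congrArg (insert 0) (range_comp (fun z => (z - r)⁻¹) J))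
  obtain ⟨φ⟩ := nonempty_circle_homeomorph_onePoint_real
  exact ⟨γ ∘ φ, γ.continuous.comp φ.continuous, hinj.comp φ.injective,
    (φ.surjective.range_comp γ).trans hrange⟩

lemma range_ne_univ_of_isEmbedding {E : Type*} [AddCommGroup E] [Module ℝ E] [TopologicalSpace E]
    [ContinuousAdd E] [ContinuousSMul ℝ E] (hE : 1 < Module.rank ℝ E) {J : ℝ → E}
    (hJ : IsEmbedding J) : range J ≠ univ := by
  intro hsurj
  have hconn : IsPreconnected (J '' {0}ᶜ) := by
    rw [image_compl_eq ⟨hJ.injective, range_eq_univ.1 hsurj⟩, image_singleton]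
    exact (isConnected_compl_singleton_of_one_lt_rank hE (J 0)).isPreconnected
  have hord : OrdConnected ({0}ᶜ : Set ℝ) :=
    (hJ.isInducing.isPreconnected_image.1 hconn).ordConnected
  exact hord.out (x := -1) (y := 1) (by simp) (by simp) (by simp) rfl

theorem not_isPreconnected_compl_range {J : ℝ → ℂ} (hJ : IsClosedEmbedding J) :
    ¬ IsPreconnected (range J)ᶜ := by
  intro hconn
  have hrank : 1 < Module.rank ℝ ℂ := by simp
  obtain ⟨r, hr⟩ := (ne_univ_iff_exists_notMem _).1
    (range_ne_univ_of_isEmbedding hrank hJ.isEmbedding)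
  obtain ⟨γ, hγ, hinj, hrange⟩ := exists_circle_range_eq_inversionImage hJ hr
  refine not_isPreconnected_reciprocalCompl_range hγ hinj (hrange ▸ mem_insert 0 _) ?_
  rw [hrange, reciprocalCompl_inversionImage hr]
  exact hconn.image _ (by fun_prop)

lemma inv_sub_notMem_inversionImage {p : ℂ} (hpr : p ≠ r) (hp : p ∉ L) :
    (p - r)⁻¹ ∉ inversionImage r L :=
  notMem_inversionImage_iff.2
    ⟨inv_ne_zero (sub_ne_zero.2 hpr), by rwa [inv_inv, add_sub_cancel]⟩

lemma mapsTo_connectedComponentIn_compl_inversionImage {p : ℂ} (hpr : p ≠ r) (hp : p ∉ L) :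
    MapsTo (fun w => r + w⁻¹) (connectedComponentIn (inversionImage r L)ᶜ (p - r)⁻¹)
      (connectedComponentIn Lᶜ p) := by
  have hcont : ContinuousOn (fun w => r + w⁻¹) (inversionImage r L)ᶜ :=
    continuousOn_const.add (continuousOn_inv₀.mono fun w hw => (notMem_inversionImage_iff.1 hw).1)
  have himage : (fun w => r + w⁻¹) '' (inversionImage r L)ᶜ ⊆ Lᶜ :=
    image_subset_iff.2 fun w hw => (notMem_inversionImage_iff.1 hw).2
  have hmaps := hcont.mapsTo_connectedComponentIn (inv_sub_notMem_inversionImage hpr hp)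
  rw [inv_inv, add_sub_cancel] at hmaps
  exact hmaps.mono_right (connectedComponentIn_mono p himage)

lemma isBounded_connectedComponentIn_compl_inversionImage (hL : IsClosed L) {p : ℂ} (hp : p ∉ L)
    (hr : r ∉ L) (hne : connectedComponentIn Lᶜ p ≠ connectedComponentIn Lᶜ r) :
    IsBounded (connectedComponentIn (inversionImage r L)ᶜ (p - r)⁻¹) := by
  obtain ⟨ε, hε, hball⟩ := Metric.isOpen_iff.1 (hL.isOpen_compl.connectedComponentIn (x := r)) r
    (mem_connectedComponentIn hr)
  have hpr : p ≠ r := ne_of_apply_ne _ hne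
  refine isBounded_iff_forall_norm_le.2 ⟨ε⁻¹, fun w hw => ?_⟩
  by_contra! hlt
  have hwr : r + w⁻¹ ∈ connectedComponentIn Lᶜ r := hball <| by
    simpa [dist_eq_norm] using inv_lt_of_inv_lt₀ hε hlt
  have hwp := mapsTo_connectedComponentIn_compl_inversionImage hpr hp hw
  exact hne ((connectedComponentIn_eq hwp).trans (connectedComponentIn_eq hwr).symm)

theorem connectedComponentIn_compl_range_eq_of_ne_of_ne {J : ℝ → ℂ} (hJ : IsClosedEmbedding J)
    {p q : ℂ} (hp : p ∉ range J) (hq : q ∉ range J) (hr : r ∉ range J)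
    (hpr : connectedComponentIn (range J)ᶜ p ≠ connectedComponentIn (range J)ᶜ r)
    (hqr : connectedComponentIn (range J)ᶜ q ≠ connectedComponentIn (range J)ᶜ r) :
    connectedComponentIn (range J)ᶜ p = connectedComponentIn (range J)ᶜ q := by
  obtain ⟨γ, hγ, hinj, hrange⟩ := exists_circle_range_eq_inversionImage hJ hr
  have hp_ne : p ≠ r := ne_of_apply_ne _ hpr
  have hq_ne : q ≠ r := ne_of_apply_ne _ hqr
  have hpK := inv_sub_notMem_inversionImage hp_ne hp
  have hqK := inv_sub_notMem_inversionImage hq_ne hq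
  have hpb := isBounded_connectedComponentIn_compl_inversionImage hJ.isClosed_range hp hr hpr
  have hqb := isBounded_connectedComponentIn_compl_inversionImage hJ.isClosed_range hq hr hqr
  have hmem : (p - r)⁻¹ ∈ connectedComponentIn (inversionImage r (range J))ᶜ (q - r)⁻¹ := by
    rw [← hrange] at hpK hqK hpb hqb ⊢
    rw [← connectedComponentIn_compl_range_circle_eq_of_isBounded hγ hinj hpK hqK hpb hqb]
    exact mem_connectedComponentIn hpK
  have hpq := mapsTo_connectedComponentIn_compl_inversionImage hq_ne hq hmem
  simp only [inv_inv, add_sub_cancel] at hpq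
  exact (connectedComponentIn_eq hpq).symm

end Inversion

section ComponentCount

lemma exists_connectedComponentIn_ne {X : Type*} [TopologicalSpace X] {F : Set X}
    (hF : ¬ IsPreconnected F) :
    ∃ x ∈ F, ∃ y ∈ F, connectedComponentIn F x ≠ connectedComponentIn F y := by
  contrapose! hF
  refine isPreconnected_of_forall_pair fun x hx y hy => ?_
  exact ⟨connectedComponentIn F x, connectedComponentIn_subset F x, mem_connectedComponentIn hx,
    hF x hx y hy ▸ mem_connectedComponentIn hy, isPreconnected_connectedComponentIn⟩

theorem encard_connectedComponentIn_compl_range {J : ℝ → ℂ} (hJ : Topology.IsClosedEmbedding J) :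
    (connectedComponentIn (range J)ᶜ '' (range J)ᶜ).encard = 2 := by
  obtain ⟨p, hp, q, hq, hpq⟩ := exists_connectedComponentIn_ne (not_isPreconnected_compl_range hJ)
  refine encard_eq_two.2 ⟨_, _, hpq, Subset.antisymm ?_ ?_⟩
  · rintro _ ⟨x, hx, rfl⟩
    by_contra! h
    simp only [mem_insert_iff, mem_singleton_iff, not_or] at h
    exact hpq (connectedComponentIn_compl_range_eq_of_ne_of_ne hJ hp hq hx (Ne.symm h.1)
      (Ne.symm h.2))
  · exact pair_subset (mem_image_of_mem _ hp) (mem_image_of_mem _ hq)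

lemma encard_connectedComponentIn_image {X Y : Type*} [TopologicalSpace X] [TopologicalSpace Y]
    (e : X ≃ₜ Y) (F : Set X) :
    (connectedComponentIn (e '' F) '' (e '' F)).encard = (connectedComponentIn F '' F).encard := by
  have himage : connectedComponentIn (e '' F) '' (e '' F) =
      image e '' (connectedComponentIn F '' F) := by
    rw [image_image, image_image]
    exact image_congr fun x hx => (e.image_connectedComponentIn hx).symm
  rw [himage, e.injective.image_injective.encard_image]

end ComponentCount

theorem busemann_surface_line_separates_general {X : Type*} [TopologicalSpace X]
    (e : X ≃ₜ ℝ × ℝ) {J : ℝ → X} (hJ : Topology.IsClosedEmbedding J) :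
    (connectedComponentIn (range J)ᶜ '' (range J)ᶜ).encard = 2 := by
  let φ : X ≃ₜ ℂ := e.trans Complex.equivRealProdCLM.symm.toHomeomorph
  have hrange : φ '' (range J)ᶜ = (range (φ ∘ J))ᶜ := by
    rw [range_comp, image_compl_eq φ.bijective]
  rw [← encard_connectedComponentIn_image φ, hrange]
  exact encard_connectedComponentIn_compl_range (φ.isClosedEmbedding.comp hJ)

/-- In a Busemann surface, the complement of any line has exactly two
connected components. -/
theorem busemann_surface_line_separates {S : Type*} [MetricSpace S]
    (hS : IsBusemannSurface S) (L : Set S) (hL : IsLineSet L) :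
    {H : Set S | IsOpenHalfplane L H}.encard = 2 := by
  obtain ⟨_, ⟨e⟩⟩ := hS
  obtain ⟨ℓ, hℓ, rfl⟩ := hL
  simpa only [IsOpenHalfplane, image, mem_compl_iff, eq_comm] using
    busemann_surface_line_separates_general e hℓ.isClosedEmbedding
end

section
/- Let (S,d) be a Busemann surface and let ℓ be a line of S. Then each of the two closed halfplanes determined by ℓ is a convex subset of S. -/
open Metric Set MeasureTheory

/-!
If a geodesic between two points of a closed halfplane left it, it would cross the line both before
and after leaving. Geodesics of a Busemann space are determined by their endpoints, so the piece
between the two crossings lies on the line, hence in the closed halfplane.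
-/

/-- Geodesic convexity without a choice of segments: `R` contains every geodesic whose endpoints
lie in `R`. It quantifies over all geodesics, so it makes sense where they are not unique. -/
def GeodesicallyConvex {S : Type*} [MetricSpace S] (R : Set S) : Prop :=
  ∀ ⦃γ : ℝ → S⦄ ⦃a b : ℝ⦄, a ≤ b → IsGeodesicOn γ a b → γ a ∈ R → γ b ∈ R →
    γ '' Icc a b ⊆ R

section

variable {S : Type*} [MetricSpace S] {γ γ' : ℝ → S} {a b a' b' : ℝ} {L R : Set S}

theorem IsGeodesicOn.mono (hγ : IsGeodesicOn γ a b) (hsub : Icc a' b' ⊆ Icc a b) :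
    IsGeodesicOn γ a' b' :=
  fun s hs t ht => hγ s (hsub hs) t (hsub ht)

theorem IsGeodesicOn.continuousOn (hγ : IsGeodesicOn γ a b) : ContinuousOn γ (Icc a b) :=
  (LipschitzOnWith.of_dist_le' (K := 1) fun s hs t ht => by
    rw [hγ s hs t ht, Real.dist_eq, one_mul]).continuousOn

theorem isGeodesicOn_of_isometry {ℓ : ℝ → S} (hℓ : Isometry ℓ) (a b : ℝ) : IsGeodesicOn ℓ a b :=
  fun s _ t _ => by rw [hℓ.dist_eq, Real.dist_eq]

theorem IsBusemannSpace.image_Icc_eq_of_endpoints_eq (hS : IsBusemannSpace S)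
    (hab : a ≤ b) (hab' : a' ≤ b') (hγ : IsGeodesicOn γ a b) (hγ' : IsGeodesicOn γ' a' b')
    (hleft : γ a = γ' a') (hright : γ b = γ' b') :
    γ '' Icc a b = γ' '' Icc a' b' := by
  have eq_param : ∀ t ∈ Icc (0 : ℝ) 1,
      γ ((1 - t) * a + t * b) = γ' ((1 - t) * a' + t * b') := by
    intro t ht
    have hconv := (hS.2 γ γ' a b a' b' hab hab' hγ hγ').2 (left_mem_Icc.2 zero_le_one)
      (right_mem_Icc.2 zero_le_one) (sub_nonneg.2 ht.2) ht.1 (sub_add_cancel 1 t)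
    simpa [hleft, hright] using hconv
  rw [← segment_eq_Icc hab, ← segment_eq_Icc hab', segment_eq_image, segment_eq_image,
    image_image, image_image]
  exact image_congr eq_param

theorem IsLineSet.exists_isGeodesicOn (hL : IsLineSet L) {x y : S} (hx : x ∈ L) (hy : y ∈ L) :
    ∃ (ℓ : ℝ → S) (a b : ℝ), a ≤ b ∧ IsGeodesicOn ℓ a b ∧ ℓ a = x ∧ ℓ b = y ∧
      ℓ '' Icc a b ⊆ L := by
  obtain ⟨ℓ, hℓ, rfl⟩ := hL
  obtain ⟨s, rfl⟩ := hx
  obtain ⟨t, rfl⟩ := hy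
  rcases le_total s t with hst | hts
  · exact ⟨ℓ, s, t, hst, isGeodesicOn_of_isometry hℓ s t, rfl, rfl, image_subset_range _ _⟩
  · have hrev : Isometry (ℓ ∘ Neg.neg) := hℓ.comp (IsometryEquiv.neg ℝ).isometry
    exact ⟨ℓ ∘ Neg.neg, -s, -t, neg_le_neg hts, isGeodesicOn_of_isometry hrev _ _, by simp, by simp,
      (image_subset_range _ _).trans (range_comp_subset_range _ _)⟩

theorem IsLineSet.geodesicallyConvex (hL : IsLineSet L) (hS : IsBusemannSpace S) :
    GeodesicallyConvex L := by
  intro γ a b hab hγ ha hb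
  obtain ⟨ℓ, s, t, hst, hℓ, hs, ht, hsub⟩ := hL.exists_isGeodesicOn ha hb
  rwa [hS.image_Icc_eq_of_endpoints_eq hab hst hγ hℓ hs.symm ht.symm]

theorem inter_nonempty_of_not_subset_connectedComponentIn_compl_union {X : Type*}
    [TopologicalSpace X] {L T : Set X} {x y : X} (hT : IsPreconnected T) (hyT : y ∈ T)
    (hy : y ∈ connectedComponentIn Lᶜ x ∪ L) (hsub : ¬ T ⊆ connectedComponentIn Lᶜ x ∪ L) :
    (T ∩ L).Nonempty := by
  by_contra hempty
  have hTL : T ⊆ Lᶜ := fun z hzT hzL => hempty ⟨z, hzT, hzL⟩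
  have hyC : y ∈ connectedComponentIn Lᶜ x := hy.resolve_right (hTL hyT)
  have hTC : T ⊆ connectedComponentIn Lᶜ x :=
    connectedComponentIn_eq hyC ▸ hT.subset_connectedComponentIn hyT hTL
  exact hsub (hTC.trans subset_union_left)

theorem GeodesicallyConvex.connectedComponentIn_compl_union (hL : GeodesicallyConvex L) (x : S) :
    GeodesicallyConvex (connectedComponentIn Lᶜ x ∪ L) := by
  rintro γ a b - hγ ha hb _ ⟨t, ht, rfl⟩
  by_contra hout
  have crossing : ∀ {c d e : ℝ}, Icc c d ⊆ Icc a b → e ∈ Icc c d → t ∈ Icc c d →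
      γ e ∈ connectedComponentIn Lᶜ x ∪ L → ∃ r ∈ Icc c d, γ r ∈ L := by
    intro c d e hsub he htcd hin
    obtain ⟨_, ⟨r, hr, rfl⟩, hrL⟩ := inter_nonempty_of_not_subset_connectedComponentIn_compl_union
      (isPreconnected_Icc.image γ (hγ.mono hsub).continuousOn) (mem_image_of_mem γ he) hin
      (fun hall => hout (hall (mem_image_of_mem γ htcd)))
    exact ⟨r, hr, hrL⟩
  obtain ⟨r, hr, hrL⟩ := crossing (Icc_subset_Icc_right ht.2) (left_mem_Icc.2 ht.1)
    (right_mem_Icc.2 ht.1) ha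
  obtain ⟨r', hr', hrL'⟩ := crossing (Icc_subset_Icc_left ht.1) (right_mem_Icc.2 ht.2)
    (left_mem_Icc.2 ht.2) hb
  have hpiece : γ '' Icc r r' ⊆ L :=
    hL (hr.2.trans hr'.1) (hγ.mono (Icc_subset_Icc hr.1 hr'.2)) hrL hrL'
  exact hout (Or.inr (hpiece (mem_image_of_mem γ ⟨hr.2, hr'.1⟩)))

theorem GeodesicallyConvex.segConvex (hR : GeodesicallyConvex R) {seg : S → S → Set S}
    (hseg : ∀ x y : S, IsGeodesicSegment x y (seg x y)) : SegConvex seg R := by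
  intro p hp q hq
  obtain ⟨γ, ⟨hγ, hleft, hright⟩, himage⟩ := hseg p q
  rw [himage]
  exact hR dist_nonneg hγ (hleft.symm ▸ hp) (hright.symm ▸ hq)

end

theorem busemann_surface_closed_halfplane_convex_general {S : Type*} [MetricSpace S]
    (hS : IsBusemannSpace S)
    (seg : S → S → Set S) (hseg : ∀ x y : S, IsGeodesicSegment x y (seg x y))
    (L : Set S) (hL : IsLineSet L) (H : Set S) (hH : IsClosedHalfplane L H) :
    SegConvex seg H := by
  obtain ⟨_, ⟨x, -, rfl⟩, rfl⟩ := hH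
  have hconvex : GeodesicallyConvex (connectedComponentIn Lᶜ x ∪ L) :=
    (hL.geodesicallyConvex hS).connectedComponentIn_compl_union x
  exact hconvex.segConvex hseg

/-- In a Busemann surface, the closed halfplanes determined by a line are
convex. -/
theorem busemann_surface_closed_halfplane_convex {S : Type*} [MetricSpace S]
    (hS : IsBusemannSurface S)
    (seg : S → S → Set S) (hseg : ∀ x y : S, IsGeodesicSegment x y (seg x y))
    (L : Set S) (hL : IsLineSet L) (H : Set S) (hH : IsClosedHalfplane L H) :
    SegConvex seg H :=
  busemann_surface_closed_halfplane_convex_general hS.1 seg hseg L hL H hH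
end

section
/- Let (S,d) be a Busemann surface, let ℓ, ℓ' : ℝ → S be geodesic lines such that the image of ℓ' is contained in one of the closed halfplanes determined by the line ℓ(ℝ), and let x = ℓ(s) = ℓ'(s') be a common point. Denote the four rays emanating from x by r₁ = ℓ((−∞,s]), r₄ = ℓ([s,∞)), r₂ = ℓ'((−∞,s']), r₃ = ℓ'([s',∞)). Then, after possibly exchanging the labels of r₂ and r₃, both r₁ ∪ r₃ and r₂ ∪ r₄ are lines of S (i.e., images of geodesic lines). -/
open Metric Set MeasureTheory

/-!
Suppose the four rays issuing from `x` meet only at `x`; otherwise a shared point already makes the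
required pairs of rays opposite. Each ray is a slit of the plane, off which a branch of the
logarithm exists, and the differences of these branches tell on which side of two slits a point
lies. As the plane punctured at `x` carries no logarithm, a point is separated from one of three
slits by the other two, and two slits on the same side of two others have the latter on the same
side of them. As `ℓ'` stays in a halfplane of `ℓ`, in each pair of opposite rays both rays therefore
lie on the same side of the other pair.

Let `b` be one of the rays, `b'` its opposite and `a`, `a'` the other pair. If `b` were opposite to
neither `a` nor `a'`, then the geodesic segments joining `b` to `a` and to `a'` would avoid the
rays opposite to their endpoints, and `b` would not be separated from any of `a`, `a'`, `b'`
by the other two. So each of the four rays is opposite to a ray of the other line.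
-/

section Logarithms

open Filter Topology unitInterval

variable {X Y : Type*} [TopologicalSpace X] [TopologicalSpace Y]

/-- `f` is at `p` a continuous branch of the logarithm of `F`. -/
def IsLogAt (F f : X → ℂ) (p : X) : Prop :=
  ContinuousAt f p ∧ Complex.exp (f p) = F p

namespace IsLogAt

variable {F f g : X → ℂ} {p q : X}

theorem congr (hf : IsLogAt F f p) (hfg : g =ᶠ[𝓝 p] f) : IsLogAt F g p :=
  ⟨hf.1.congr hfg.symm, hfg.self_of_nhds ▸ hf.2⟩

theorem add_const (hf : IsLogAt F f p) {c : ℂ} (hc : Complex.exp c = 1) :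
    IsLogAt F (fun q => f q + c) p :=
  ⟨hf.1.add continuousAt_const, by rw [Complex.exp_add, hc, mul_one, hf.2]⟩

theorem comp {u : Y → X} {y : Y} (hf : IsLogAt F f (u y)) (hu : ContinuousAt u y) :
    IsLogAt (F ∘ u) (f ∘ u) y :=
  ⟨hf.1.comp hu, hf.2⟩

theorem exp_sub_eq_one (hf : IsLogAt F f p) (hg : IsLogAt F g p) :
    Complex.exp (f p - g p) = 1 := by
  rw [Complex.exp_sub, hf.2, ← hg.2, div_self (Complex.exp_ne_zero _)]

end IsLogAt

theorem isLocallyInjective_cexp : IsLocallyInjective Complex.exp :=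
  Complex.isCoveringMap_exp.isLocalHomeomorph.isLocallyInjective.comp_left
    Subtype.val_injective

theorem sub_eq_sub_of_isLogAt_of_isPreconnected {F f g : X → ℂ} {C : Set X}
    (hC : IsPreconnected C) (hf : ∀ p ∈ C, IsLogAt F f p) (hg : ∀ p ∈ C, IsLogAt F g p)
    {p q : X} (hp : p ∈ C) (hq : q ∈ C) : f p - g p = f q - g q :=
  (T2Space.isSeparatedMap Complex.exp).constOn_of_comp isLocallyInjective_cexp hC
    (g := fun p => f p - g p)
    (fun p hp => ((hf p hp).1.sub (hg p hp).1).continuousWithinAt)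
    (fun p hp q hq => ((hf p hp).exp_sub_eq_one (hg p hp)).trans
      ((hf q hq).exp_sub_eq_one (hg q hq)).symm) hp hq

theorem eventually_sub_eq_of_isLogAt {F f g : X → ℂ} {p : X}
    (hf : ∀ᶠ q in 𝓝 p, IsLogAt F f q) (hg : ∀ᶠ q in 𝓝 p, IsLogAt F g q) :
    ∀ᶠ q in 𝓝 p, f q - g q = f p - g p := by
  obtain ⟨V, hV, hinj⟩ := isLocallyInjective_iff_nhds.1 isLocallyInjective_cexp (f p - g p)
  have hcont : ContinuousAt (fun q => f q - g q) p := hf.self_of_nhds.1.sub hg.self_of_nhds.1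
  filter_upwards [hf, hg, hcont hV] with q hfq hgq hq
  exact hinj hq (mem_of_mem_nhds hV) ((hfq.exp_sub_eq_one hgq).trans
    (hf.self_of_nhds.exp_sub_eq_one hg.self_of_nhds).symm)

theorem not_exists_isLogAt_homeomorph_complex (Φ : X ≃ₜ ℂ) {x : X} (hx : Φ x = 0) :
    ¬ ∃ g, ∀ p ≠ x, IsLogAt Φ g p := by
  rintro ⟨g, hg⟩
  let circle : ℝ → X := fun t => Φ.symm (Complex.exp (t * Complex.I))
  have circle_ne (t : ℝ) : circle t ≠ x := fun h =>
    Complex.exp_ne_zero _ (by rw [← hx, ← h, Φ.apply_symm_apply])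
  have log_circle (t : ℝ) : IsLogAt (Φ ∘ circle) (g ∘ circle) t :=
    (hg _ (circle_ne t)).comp (by fun_prop)
  have log_angle (t : ℝ) : IsLogAt (Φ ∘ circle) (fun t : ℝ => t * Complex.I) t :=
    ⟨by fun_prop, by simp [circle]⟩
  have h := sub_eq_sub_of_isLogAt_of_isPreconnected isPreconnected_univ
    (fun t _ => log_circle t) (fun t _ => log_angle t) (mem_univ 0) (mem_univ (2 * Real.pi))
  have hclosed : circle (2 * Real.pi) = circle 0 := by simp [circle, Complex.exp_two_pi_mul_I]
  simp only [Function.comp_apply, hclosed, sub_right_inj] at h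
  exact Complex.two_pi_I_ne_zero (by simpa using h.symm)

theorem exists_continuous_log_of_homotopy {H : I × X → ℂ} (hH : Continuous H)
    (hne : ∀ z, H z ≠ 0) (hzero : ∀ p, H (0, p) = 1) :
    ∃ L : X → ℂ, Continuous L ∧ ∀ p, Complex.exp (L p) = H (1, p) := by
  let H' : C(I × X, {z : ℂ // z ≠ 0}) := ⟨fun z => ⟨H z, hne z⟩, hH.subtype_mk _⟩
  have hstart (p : X) : H' (0, p) = ⟨_, Complex.exp_ne_zero (ContinuousMap.const X (0 : ℂ) p)⟩ :=
    Subtype.ext (by simp [H', hzero])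
  let K := Complex.isCoveringMap_exp.liftHomotopy H' (ContinuousMap.const X 0) hstart
  have hK : _ ∘ K = H' := Complex.isCoveringMap_exp.liftHomotopy_lifts H' _ hstart
  exact ⟨fun p => K (1, p), by fun_prop, fun p => congrArg Subtype.val (congrFun hK (1, p))⟩

theorem exists_path_of_tendsto_atTop {φ : ℝ → X} {y : X} (hφ : ContinuousOn φ (Ici 0))
    (hlim : Tendsto φ atTop (𝓝 y)) : ∃ κ : Path y (φ 0), ∀ u ≠ 0, κ u ∈ φ '' Ici 0 := by
  let κ : ℝ → X := Function.update (fun u => φ (u⁻¹ - 1)) 0 y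
  have hpos {u : ℝ} (hu : u ∈ Icc (0 : ℝ) 1 \ {0}) : 0 < u := hu.1.1.lt_of_ne (Ne.symm hu.2)
  have hnonneg : MapsTo (fun u : ℝ => u⁻¹ - 1) (Icc 0 1 \ {0}) (Ici 0) :=
    fun u hu => sub_nonneg.2 ((one_le_inv₀ (hpos hu)).2 hu.1.2)
  have hκ : ContinuousOn κ (Icc 0 1) := by
    refine continuousOn_update_iff.2 ⟨hφ.comp ?_ hnonneg, fun _ => hlim.comp ?_⟩
    · exact (continuousOn_inv₀.mono fun u hu => hu.2).sub continuousOn_const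
    · exact (tendsto_atTop_add_const_right _ _ tendsto_inv_nhdsGT_zero).mono_left
        (nhdsWithin_mono _ fun u hu => hpos hu)
  refine ⟨⟨⟨fun u => κ u, continuousOn_iff_continuous_domRestrict.1 hκ⟩, by simp [κ],
    by simp [κ]⟩, fun u hu => ?_⟩
  have hu' : (u : ℝ) ≠ 0 := fun h => hu (Subtype.ext h)
  exact ⟨_, hnonneg ⟨u.2, hu'⟩, (Function.update_of_ne hu' y fun u : ℝ => φ (u⁻¹ - 1)).symm⟩

/-- With `c` a value of `F`, the maps `(F - ρ t) / (c - ρ t)` deform `(F - ρ 0) / (c - ρ 0)` to `1`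
as `t → ∞`. -/
theorem exists_continuous_log_of_notMem_image_Ici {ρ : ℝ → ℂ} (hρ : ContinuousOn ρ (Ici 0))
    (hlim : Tendsto ρ atTop (cocompact ℂ)) {F : X → ℂ} (hF : Continuous F)
    (hFρ : ∀ p, F p ∉ ρ '' Ici 0) :
    ∃ L : X → ℂ, Continuous L ∧ ∀ p, Complex.exp (L p) = F p - ρ 0 := by
  rcases isEmpty_or_nonempty X with _ | ⟨⟨o⟩⟩
  · exact ⟨0, continuous_zero, isEmptyElim⟩
  have hne (p : X) {t : ℝ} (ht : 0 ≤ t) : F p - ρ t ≠ 0 :=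
    fun h => hFρ p ⟨t, ht, (sub_eq_zero.1 h).symm⟩
  have hinv : Tendsto (fun t => (F o - ρ t)⁻¹) atTop (𝓝 0) := by
    rw [← Metric.cobounded_eq_cocompact] at hlim
    exact tendsto_inv₀_cobounded.comp ((tendsto_const_sub_cobounded (F o)).comp hlim)
  obtain ⟨κ, hκ⟩ := exists_path_of_tendsto_atTop (φ := fun t => (F o - ρ t)⁻¹)
    ((continuousOn_const.sub hρ).inv₀ fun t ht => hne o ht) hinv
  have hratio (p : X) {t : ℝ} (ht : 0 ≤ t) :
      1 + (F p - F o) * (F o - ρ t)⁻¹ = (F p - ρ t) / (F o - ρ t) := by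
    have := hne o ht
    field_simp
    ring
  obtain ⟨L, hL, hexpL⟩ := exists_continuous_log_of_homotopy
    (H := fun z : I × X => 1 + (F z.2 - F o) * κ z.1) (by fun_prop)
    (fun ⟨u, p⟩ => by
      rcases eq_or_ne u 0 with rfl | hu
      · simp
      · obtain ⟨t, ht, hκt⟩ := hκ u hu
        simpa only [← hκt, hratio p ht] using div_ne_zero (hne p ht) (hne o ht))
    (by simp)
  refine ⟨fun p => L p + Complex.log (F o - ρ 0), by fun_prop, fun p => ?_⟩
  rw [Complex.exp_add, hexpL, Complex.exp_log (hne o le_rfl), κ.target, hratio p le_rfl,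
    div_mul_cancel₀ _ (hne o le_rfl)]

theorem exists_isLogAt_of_continuous_log_compl {A : Set X} (hA : IsClosed A) {F : X → ℂ}
    {L : ↥Aᶜ → ℂ} (hL : Continuous L) (hLF : ∀ p, Complex.exp (L p) = F p) :
    ∃ f, ∀ p ∉ A, IsLogAt F f p := by
  have hext (p : ↥Aᶜ) : Function.extend Subtype.val L 0 p = L p :=
    Subtype.val_injective.extend_apply L 0 p
  have hcont : ContinuousOn (Function.extend Subtype.val L 0) Aᶜ :=
    continuousOn_iff_continuous_domRestrict.2 (hL.congr fun p => (hext p).symm)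
  exact ⟨_, fun p hp => ⟨hcont.continuousAt (hA.isOpen_compl.mem_nhds hp),
    by rw [hext ⟨p, hp⟩, hLF]⟩⟩

end Logarithms

section Slits

open Filter Topology

variable {X : Type*} [TopologicalSpace X]

/-- A slit issuing from `x`, modelled on a ray from the origin of the complex plane: a closed set,
connected apart from `x`, with a branch of the logarithm of `F` off it and a chosen point `pt` other
than `x`. -/
structure Slit (F : X → ℂ) (x : X) where
  /-- The points of the slit. -/
  carrier : Set X
  /-- The branch of `log F`, with junk values on the slit. -/
  branch : X → ℂ
  /-- A point marking the slit. -/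
  pt : X
  isClosed : IsClosed carrier
  isPreconnected_diff : IsPreconnected (carrier \ {x})
  isLogAt : ∀ p ∉ carrier, IsLogAt F branch p
  pt_mem : pt ∈ carrier \ {x}

namespace Slit

variable {F : X → ℂ} {x p q : X} {k : ℂ} {A B C D : Slit F x}

/-- The difference of the branches of two slits. It is locally constant off the slits, and its
values there tell the sides of `A ∪ B` apart. -/
def gap (A B : Slit F x) (p : X) : ℂ :=
  A.branch p - B.branch p

/-- The side of `A ∪ B` labelled by the value `k` of `A.gap B`. -/
def side (A B : Slit F x) (k : ℂ) : Set X :=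
  {p | p ∉ A.carrier ∧ p ∉ B.carrier ∧ A.gap B p = k}

theorem exp_gap_eq_one (hA : p ∉ A.carrier) (hB : p ∉ B.carrier) :
    Complex.exp (A.gap B p) = 1 :=
  (A.isLogAt p hA).exp_sub_eq_one (B.isLogAt p hB)

theorem gap_eq_gap_of_isPreconnected {K : Set X} (hK : IsPreconnected K)
    (hA : Disjoint K A.carrier) (hB : Disjoint K B.carrier) (hp : p ∈ K) (hq : q ∈ K) :
    A.gap B p = A.gap B q :=
  sub_eq_sub_of_isLogAt_of_isPreconnected hK
    (fun r hr => A.isLogAt r (hA.notMem_of_mem_left hr))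
    (fun r hr => B.isLogAt r (hB.notMem_of_mem_left hr)) hp hq

theorem eventually_notMem (hp : p ∉ A.carrier) : ∀ᶠ q in 𝓝 p, q ∉ A.carrier :=
  A.isClosed.isOpen_compl.mem_nhds hp

theorem eventually_gap_eq (hA : p ∉ A.carrier) (hB : p ∉ B.carrier) :
    ∀ᶠ q in 𝓝 p, A.gap B q = A.gap B p :=
  eventually_sub_eq_of_isLogAt ((eventually_notMem hA).mono A.isLogAt)
    ((eventually_notMem hB).mono B.isLogAt)

theorem notMem_of_inter_subset (hAC : A.carrier ∩ C.carrier ⊆ {x}) (hp : p ∈ C.carrier \ {x}) :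
    p ∉ A.carrier :=
  fun h => hp.2 (hAC ⟨h, hp.1⟩)

theorem gap_eq_gap_pt (hAC : A.carrier ∩ C.carrier ⊆ {x}) (hBC : B.carrier ∩ C.carrier ⊆ {x})
    (hp : p ∈ C.carrier \ {x}) : A.gap B p = A.gap B C.pt :=
  gap_eq_gap_of_isPreconnected C.isPreconnected_diff
    (disjoint_left.2 fun _ hr => notMem_of_inter_subset hAC hr)
    (disjoint_left.2 fun _ hr => notMem_of_inter_subset hBC hr) hp C.pt_mem

theorem eventually_gap_eq_gap_pt (hAC : A.carrier ∩ C.carrier ⊆ {x})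
    (hBC : B.carrier ∩ C.carrier ⊆ {x}) (hp : p ∈ C.carrier \ {x}) :
    ∀ᶠ q in 𝓝 p, A.gap B q = A.gap B C.pt :=
  gap_eq_gap_pt hAC hBC hp ▸
    eventually_gap_eq (notMem_of_inter_subset hAC hp) (notMem_of_inter_subset hBC hp)

theorem exp_gap_pt_eq_one (hAC : A.carrier ∩ C.carrier ⊆ {x})
    (hBC : B.carrier ∩ C.carrier ⊆ {x}) : Complex.exp (A.gap B C.pt) = 1 :=
  exp_gap_eq_one (notMem_of_inter_subset hAC C.pt_mem) (notMem_of_inter_subset hBC C.pt_mem)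

theorem isOpen_side : IsOpen (A.side B k) := by
  refine isOpen_iff_mem_nhds.2 fun p ⟨hpA, hpB, hpk⟩ => ?_
  filter_upwards [eventually_notMem hpA, eventually_notMem hpB, eventually_gap_eq hpA hpB]
    with q hqA hqB hq
  exact ⟨hqA, hqB, hq.trans hpk⟩

theorem eventually_notMem_side (hA : p ∉ A.carrier) (hB : p ∉ B.carrier)
    (hk : p ∉ A.side B k) : ∀ᶠ q in 𝓝 p, q ∉ A.side B k := by
  filter_upwards [eventually_gap_eq hA hB] with q hq hqk
  exact hk ⟨hA, hB, hq.symm.trans hqk.2.2⟩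

theorem notMem_of_notMem_side_gap_pt (hAC : A.carrier ∩ C.carrier ⊆ {x})
    (hBC : B.carrier ∩ C.carrier ⊆ {x}) (hpx : p ≠ x) (hp : p ∉ A.side B (A.gap B C.pt)) :
    p ∉ C.carrier :=
  fun hpC => hp ⟨notMem_of_inter_subset hAC ⟨hpC, hpx⟩, notMem_of_inter_subset hBC ⟨hpC, hpx⟩,
    gap_eq_gap_pt hAC hBC ⟨hpC, hpx⟩⟩

/-- The branch of `A` near `B` and the branch of `B` plus `k` near `A` continue each other across
`A.side B k`. If `h` continued them into each other across the rest of the plane, then all of these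
would make up a logarithm off `x`. -/
theorem false_of_isLogAt_compl_side (hF : ¬ ∃ g, ∀ p ≠ x, IsLogAt F g p) {h : X → ℂ}
    (hlog : ∀ p ≠ x, p ∉ A.side B k → IsLogAt F h p)
    (hA : ∀ p ∈ A.carrier \ {x}, ∀ᶠ q in 𝓝 p, h q = B.branch q + k)
    (hB : ∀ p ∈ B.carrier \ {x}, ∀ᶠ q in 𝓝 p, h q = A.branch q) : False := by
  classical
  refine hF ⟨(A.side B k).piecewise A.branch h, fun p hpx => ?_⟩
  by_cases hpk : p ∈ A.side B k
  · refine (A.isLogAt p hpk.1).congr ?_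
    filter_upwards [isOpen_side.mem_nhds hpk] with q hq
    exact piecewise_eq_of_mem _ _ _ hq
  have hagree : ∀ᶠ q in 𝓝 p, q ∈ A.side B k → A.branch q = h q := by
    by_cases hpA : p ∈ A.carrier
    · filter_upwards [hA p ⟨hpA, hpx⟩] with q hq hqk
      rw [hq, ← hqk.2.2, gap, add_sub_cancel]
    by_cases hpB : p ∈ B.carrier
    · exact (hB p ⟨hpB, hpx⟩).mono fun q hq _ => hq.symm
    · exact (eventually_notMem_side hpA hpB hpk).mono fun q hq hqk => absurd hqk hq
  refine (hlog p hpx hpk).congr ?_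
  filter_upwards [hagree] with q hq
  by_cases hqk : q ∈ A.side B k
  · rw [piecewise_eq_of_mem _ _ _ hqk, hq hqk]
  · exact piecewise_eq_of_notMem _ _ _ hqk

theorem gap_pt_add_gap_pt_add_gap_pt_ne_zero (hF : ¬ ∃ g, ∀ p ≠ x, IsLogAt F g p)
    (hAB : A.carrier ∩ B.carrier ⊆ {x}) (hBC : B.carrier ∩ C.carrier ⊆ {x})
    (hCA : C.carrier ∩ A.carrier ⊆ {x}) :
    A.gap B C.pt + B.gap C A.pt + C.gap A B.pt ≠ 0 := by
  intro hsum
  have hBA := inter_comm _ _ ▸ hAB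
  have hCB := inter_comm _ _ ▸ hBC
  have hAC := inter_comm _ _ ▸ hCA
  refine false_of_isLogAt_compl_side hF (A := A) (B := B) (k := A.gap B C.pt)
    (h := fun q => C.branch q + A.gap C B.pt) (fun p hpx hp => ?_) (fun p hp => ?_) fun p hp => ?_
  · exact (C.isLogAt p (notMem_of_notMem_side_gap_pt hAC hBC hpx hp)).add_const
      (exp_gap_pt_eq_one hAB hCB)
  · filter_upwards [eventually_gap_eq_gap_pt hBA hCA hp] with q hq
    simp only [gap] at hq hsum ⊢
    linear_combination -hq - hsum
  · filter_upwards [eventually_gap_eq_gap_pt hAB hCB hp] with q hq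
    simp only [gap] at hq ⊢
    linear_combination -hq

theorem not_forall_gap_eq_gap_pt (hF : ¬ ∃ g, ∀ p ≠ x, IsLogAt F g p)
    (hAB : A.carrier ∩ B.carrier ⊆ {x}) (hBC : B.carrier ∩ C.carrier ⊆ {x})
    (hCA : C.carrier ∩ A.carrier ⊆ {x}) (p : X) :
    ¬ (A.gap B p = A.gap B C.pt ∧ B.gap C p = B.gap C A.pt ∧ C.gap A p = C.gap A B.pt) := by
  rintro ⟨hC, hA, hB⟩
  refine gap_pt_add_gap_pt_add_gap_pt_ne_zero hF hAB hBC hCA ?_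
  rw [← hC, ← hA, ← hB]
  simp only [gap]
  ring

/-- If `C` and `D` separated `A` from `B`, then the logarithm could be continued independently near
`A` and near `B` on the side of `A ∪ B` that avoids `C` and `D`. -/
theorem gap_pt_eq_gap_pt_comm (hF : ¬ ∃ g, ∀ p ≠ x, IsLogAt F g p)
    (hAB : A.carrier ∩ B.carrier ⊆ {x}) (hAC : A.carrier ∩ C.carrier ⊆ {x})
    (hAD : A.carrier ∩ D.carrier ⊆ {x}) (hBC : B.carrier ∩ C.carrier ⊆ {x})
    (hBD : B.carrier ∩ D.carrier ⊆ {x}) (hside : A.gap B C.pt = A.gap B D.pt) :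
    C.gap D A.pt = C.gap D B.pt := by
  classical
  by_contra hsep
  have hBA := inter_comm _ _ ▸ hAB
  have hCA := inter_comm _ _ ▸ hAC
  have hDA := inter_comm _ _ ▸ hAD
  have hCB := inter_comm _ _ ▸ hBC
  have hDB := inter_comm _ _ ▸ hBD
  let nearA : ℂ := A.gap B C.pt - C.gap B A.pt
  let nearB : ℂ := A.gap C B.pt
  have hnearA : Complex.exp nearA = 1 := by
    rw [Complex.exp_sub, exp_gap_pt_eq_one hAC hBC, exp_gap_pt_eq_one hCA hBA, div_one]
  have hnearB : Complex.exp nearB = 1 := exp_gap_pt_eq_one hAB hCB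
  refine false_of_isLogAt_compl_side hF (A := A) (B := B) (k := A.gap B C.pt)
    (h := fun q => C.branch q + if C.gap D q = C.gap D A.pt then nearA else nearB)
    (fun p hpx hp => ?_) (fun p hp => ?_) fun p hp => ?_
  · have hpC := notMem_of_notMem_side_gap_pt hAC hBC hpx hp
    have hpD := notMem_of_notMem_side_gap_pt hAD hBD hpx (hside ▸ hp)
    have hconst : Complex.exp (if C.gap D p = C.gap D A.pt then nearA else nearB) = 1 := by
      split_ifs <;> assumption
    refine ((C.isLogAt p hpC).add_const hconst).congr ?_
    filter_upwards [eventually_gap_eq hpC hpD] with q hq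
    rw [hq]
  · filter_upwards [eventually_gap_eq_gap_pt hCA hDA hp, eventually_gap_eq_gap_pt hCA hBA hp]
      with q hqCD hqCB
    rw [if_pos hqCD]
    simp only [nearA, gap] at hqCB ⊢
    linear_combination hqCB
  · filter_upwards [eventually_gap_eq_gap_pt hCB hDB hp, eventually_gap_eq_gap_pt hAB hCB hp]
      with q hqCD hqAC
    rw [if_neg (hqCD ▸ Ne.symm hsep)]
    simp only [nearB, gap] at hqAC ⊢
    linear_combination -hqAC

end Slit

end Slits

section Rays

open Filter

variable {S : Type*} [MetricSpace S] {x z : S} {r r' : ℝ → S} {t : ℝ}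

/-- A geodesic ray issuing from `x`, parametrized by `[0, ∞)`; the values of `r` at negative reals
are irrelevant. -/
structure IsRayFrom (x : S) (r : ℝ → S) : Prop where
  map_zero : r 0 = x
  dist_eq : ∀ a b : ℝ, 0 ≤ a → 0 ≤ b → dist (r a) (r b) = |a - b|

namespace IsRayFrom

theorem dist_base (hr : IsRayFrom x r) (ht : 0 ≤ t) : dist x (r t) = t := by
  rw [← hr.map_zero, hr.dist_eq 0 t le_rfl ht, zero_sub, abs_neg, abs_of_nonneg ht]

theorem eq_base_iff (hr : IsRayFrom x r) (ht : 0 ≤ t) : r t = x ↔ t = 0 := by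
  rw [eq_comm, ← dist_eq_zero, hr.dist_base ht]

theorem isGeodesicOn (hr : IsRayFrom x r) : IsGeodesicOn r 0 t :=
  fun a ha b hb => hr.dist_eq a b ha.1 hb.1

theorem isometry_domRestrict (hr : IsRayFrom x r) : Isometry ((Ici 0).domRestrict r) :=
  Isometry.of_dist_eq fun a b => hr.dist_eq a b a.2 b.2

theorem continuousOn (hr : IsRayFrom x r) : ContinuousOn r (Ici 0) :=
  continuousOn_iff_continuous_domRestrict.2 hr.isometry_domRestrict.continuous

theorem isClosed_image (hr : IsRayFrom x r) : IsClosed (r '' Ici 0) := by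
  have : CompleteSpace (Ici (0 : ℝ)) := isClosed_Ici.completeSpace_coe
  rw [← range_domRestrict]
  exact hr.isometry_domRestrict.isClosedEmbedding.isClosed_range

theorem tendsto_cocompact (hr : IsRayFrom x r) : Tendsto r atTop (cocompact S) := by
  refine tendsto_cocompact_of_tendsto_dist_comp_atTop x (tendsto_id.congr' ?_)
  filter_upwards [eventually_ge_atTop 0] with t ht
  rw [dist_comm, hr.dist_base ht, id]

theorem image_diff_base (hr : IsRayFrom x r) : r '' Ici 0 \ {x} = r '' Ioi 0 := by
  ext p
  constructor
  · rintro ⟨⟨t, ht, rfl⟩, hp⟩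
    exact ⟨t, lt_of_le_of_ne ht fun h => hp ((hr.eq_base_iff ht).2 h.symm), rfl⟩
  · rintro ⟨t, ht, rfl⟩
    have ht' : 0 ≤ t := Ioi_subset_Ici_self ht
    exact ⟨⟨t, ht', rfl⟩, fun h => ne_of_gt ht ((hr.eq_base_iff ht').1 h)⟩

theorem apply_one_mem_image_diff_base (hr : IsRayFrom x r) : r 1 ∈ r '' Ici 0 \ {x} :=
  hr.image_diff_base ▸ mem_image_of_mem r (mem_Ioi.2 one_pos)

theorem apply_one_mem_of_image_subset (hr : IsRayFrom x r) {A B C : Set S}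
    (hrC : r '' Ici 0 ⊆ C ∪ (A ∪ B)) (hA : A ∩ r '' Ici 0 ⊆ {x}) (hB : B ∩ r '' Ici 0 ⊆ {x}) :
    r 1 ∈ C := by
  obtain ⟨hmem, hne⟩ := hr.apply_one_mem_image_diff_base
  rcases hrC hmem with h | h | h
  · exact h
  · exact absurd (hA ⟨h, hmem⟩) hne
  · exact absurd (hB ⟨h, hmem⟩) hne

theorem isPreconnected_image_diff_base (hr : IsRayFrom x r) :
    IsPreconnected (r '' Ici 0 \ {x}) := by
  rw [hr.image_diff_base]
  exact isPreconnected_Ioi.image r (hr.continuousOn.mono Ioi_subset_Ici_self)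

theorem exists_isLogAt (hr : IsRayFrom x r) (Φ : S ≃ₜ ℂ) (hΦ : Φ x = 0) :
    ∃ f, ∀ p ∉ r '' Ici 0, IsLogAt Φ f p := by
  obtain ⟨L, hL, hexpL⟩ := exists_continuous_log_of_notMem_image_Ici (ρ := Φ ∘ r)
    (F := fun p : ↥(r '' Ici 0)ᶜ => Φ p) (Φ.continuous.comp_continuousOn hr.continuousOn)
    (Φ.isClosedEmbedding.tendsto_cocompact.comp hr.tendsto_cocompact) (by fun_prop)
    fun p hp => p.2 (by rwa [image_comp, Φ.injective.mem_set_image] at hp)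
  exact exists_isLogAt_of_continuous_log_compl hr.isClosed_image hL fun p => by
    rw [hexpL, Function.comp_apply, hr.map_zero, hΦ, sub_zero]

/-- The slit along a ray, for the logarithm of a chart `Φ` centred at the origin of the ray. -/
noncomputable def slit (hr : IsRayFrom x r) (Φ : S ≃ₜ ℂ) (hΦ : Φ x = 0) : Slit Φ x where
  carrier := r '' Ici 0
  branch := (hr.exists_isLogAt Φ hΦ).choose
  pt := r 1
  isClosed := hr.isClosed_image
  isPreconnected_diff := hr.isPreconnected_image_diff_base
  isLogAt := (hr.exists_isLogAt Φ hΦ).choose_spec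
  pt_mem := hr.apply_one_mem_image_diff_base

end IsRayFrom

/-- Two rays issuing from `x` that together form a geodesic line. -/
structure AreOppositeRays (x : S) (r r' : ℝ → S) : Prop where
  left : IsRayFrom x r
  right : IsRayFrom x r'
  dist_eq : ∀ a b : ℝ, 0 ≤ a → 0 ≤ b → dist (r a) (r' b) = a + b

theorem image_comp_const_sub_Ici_zero {α : Type*} (m : ℝ → α) (s : ℝ) :
    (fun t => m (s - t)) '' Ici 0 = m '' Iic s := by
  rw [← image_image m, image_const_sub_Ici, sub_zero]

theorem image_comp_const_add_Ici_zero {α : Type*} (m : ℝ → α) (s : ℝ) :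
    (fun t => m (s + t)) '' Ici 0 = m '' Ici s := by
  rw [← image_image m, image_const_add_Ici, add_zero]

theorem image_comp_const_sub_union_image_comp_const_add {α : Type*} (m : ℝ → α) (s : ℝ) :
    (fun t => m (s - t)) '' Ici 0 ∪ (fun t => m (s + t)) '' Ici 0 = range m := by
  rw [image_comp_const_sub_Ici_zero, image_comp_const_add_Ici_zero, ← image_union, Iic_union_Ici,
    image_univ]

theorem areOppositeRays_of_isometry {ℓ : ℝ → S} (hℓ : Isometry ℓ) (s : ℝ) :
    AreOppositeRays (ℓ s) (fun t => ℓ (s - t)) (fun t => ℓ (s + t)) where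
  left := ⟨by simp, fun a b _ _ => by
    rw [hℓ.dist_eq, Real.dist_eq, sub_sub_sub_cancel_left, abs_sub_comm]⟩
  right := ⟨by simp, fun a b _ _ => by rw [hℓ.dist_eq, Real.dist_eq, add_sub_add_left_eq_sub]⟩
  dist_eq a b ha hb := by
    rw [hℓ.dist_eq, Real.dist_eq, abs_sub_comm, abs_of_nonneg] <;> linarith

namespace AreOppositeRays

theorem symm (h : AreOppositeRays x r r') : AreOppositeRays x r' r :=
  ⟨h.right, h.left, fun a b ha hb => by rw [dist_comm, h.dist_eq b a hb ha, add_comm]⟩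

theorem inter_subset (h : AreOppositeRays x r r') : r '' Ici 0 ∩ r' '' Ici 0 ⊆ {x} := by
  rintro _ ⟨⟨a, ha, rfl⟩, b, hb, hab⟩
  rw [mem_Ici] at ha hb
  have hdist := h.dist_eq a b ha hb
  rw [hab, dist_self] at hdist
  exact (h.left.eq_base_iff ha).2 (by linarith)

theorem notMem_of_dist_add_dist_eq (h : AreOppositeRays x r r') (ht : 0 ≤ t) {q : S}
    (hlt : dist (r t) q < t + dist x q) (hz : dist (r t) z + dist z q = dist (r t) q) :
    z ∉ r' '' Ici 0 := by
  rintro ⟨c, hc, rfl⟩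
  have htriangle := dist_triangle x (r' c) q
  rw [h.right.dist_base hc] at htriangle
  rw [h.dist_eq t c ht hc] at hz
  linarith

theorem isLineSet_union (h : AreOppositeRays x r r') : IsLineSet (r '' Ici 0 ∪ r' '' Ici 0) := by
  let ℓ : ℝ → S := fun t => if t ≤ 0 then r (-t) else r' t
  have hℓ_nonpos {t : ℝ} (ht : t ≤ 0) : ℓ t = r (-t) := if_pos ht
  have hℓ_nonneg {t : ℝ} (ht : 0 ≤ t) : ℓ t = r' t := by
    rcases ht.eq_or_lt with rfl | hpos
    · rw [hℓ_nonpos le_rfl, neg_zero, h.left.map_zero, h.right.map_zero]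
    · exact if_neg hpos.not_ge
  have hdist {a b : ℝ} (hab : a ≤ b) : dist (ℓ a) (ℓ b) = |a - b| := by
    rcases le_total a 0 with ha | ha <;> rcases le_total b 0 with hb | hb
    · rw [hℓ_nonpos ha, hℓ_nonpos hb, h.left.dist_eq _ _ (by linarith) (by linarith),
        neg_sub_neg, abs_sub_comm]
    · rw [hℓ_nonpos ha, hℓ_nonneg hb, h.dist_eq _ _ (by linarith) hb, abs_of_nonpos (by linarith)]
      ring
    · rw [hℓ_nonneg ha, hℓ_nonneg (ha.trans hab), h.right.dist_eq _ _ ha (ha.trans hab)]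
    · rw [hℓ_nonneg ha, hℓ_nonneg hb, h.right.dist_eq _ _ ha hb]
  refine ⟨ℓ, Isometry.of_dist_eq fun a b => ?_, ?_⟩
  · rcases le_total a b with hab | hba
    · exact hdist hab
    · rw [dist_comm, hdist hba, dist_comm, Real.dist_eq]
  · have hleft : ℓ '' Iic 0 = r '' Ici 0 := by
      have hcongr : ℓ '' Iic 0 = (fun t => r (-t)) '' Iic 0 := image_congr fun t ht => hℓ_nonpos ht
      rw [hcongr, ← image_image r, image_neg_Iic, neg_zero]
    have hright : ℓ '' Ici 0 = r' '' Ici 0 := image_congr fun t ht => hℓ_nonneg ht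
    rw [← hleft, ← hright, ← image_union, Iic_union_Ici, image_univ]

end AreOppositeRays

theorem areOppositeRays_comm : AreOppositeRays x r r' ↔ AreOppositeRays x r' r :=
  ⟨.symm, .symm⟩

end Rays

section Busemann

open Filter Topology

variable {S : Type*} [MetricSpace S] {x : S}

theorem IsGeodesicMetricSpace.exists_isPreconnected_forall_dist_add_dist_eq
    (hS : IsGeodesicMetricSpace S) (p q : S) :
    ∃ C, IsPreconnected C ∧ p ∈ C ∧ q ∈ C ∧ ∀ z ∈ C, dist p z + dist z q = dist p q := by
  obtain ⟨γ, hγ, hγp, hγq⟩ := hS p q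
  have hp : (0 : ℝ) ∈ Icc 0 (dist p q) := left_mem_Icc.2 dist_nonneg
  have hq : dist p q ∈ Icc 0 (dist p q) := right_mem_Icc.2 dist_nonneg
  have hcont : ContinuousOn γ (Icc 0 (dist p q)) := by
    have hiso : Isometry ((Icc 0 (dist p q)).domRestrict γ) :=
      Isometry.of_dist_eq fun a b => hγ a a.2 b b.2
    exact continuousOn_iff_continuous_domRestrict.2 hiso.continuous
  refine ⟨γ '' Icc 0 (dist p q), isPreconnected_Icc.image γ hcont, ⟨0, hp, hγp⟩, ⟨_, hq, hγq⟩, ?_⟩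
  rintro _ ⟨t, ht, rfl⟩
  have hpt := hγ 0 hp t ht
  have htq := hγ t ht _ hq
  rw [hγp, zero_sub, abs_neg, abs_of_nonneg ht.1] at hpt
  rw [hγq, abs_of_nonpos (sub_nonpos.2 ht.2)] at htq
  rw [hpt, htq]
  ring

theorem IsBusemannSurface.exists_homeomorph_complex (hS : IsBusemannSurface S) (x : S) :
    ∃ Φ : S ≃ₜ ℂ, Φ x = 0 := by
  obtain ⟨-, ⟨φ⟩⟩ := hS
  let Ψ : S ≃ₜ ℂ := φ.trans Complex.equivRealProdCLM.symm.toHomeomorph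
  exact ⟨Ψ.trans (Homeomorph.addRight (-Ψ x)), by simp⟩

namespace IsBusemannSpace

theorem dist_mul_mul_le (hS : IsBusemannSpace S) {r r' : ℝ → S} (hr : IsRayFrom x r)
    (hr' : IsRayFrom x r') {a b τ : ℝ} (ha : 0 ≤ a) (hb : 0 ≤ b) (hτ : τ ∈ Icc (0 : ℝ) 1) :
    dist (r (τ * a)) (r' (τ * b)) ≤ τ * dist (r a) (r' b) := by
  have hconv := hS.2 r r' 0 a 0 b ha hb hr.isGeodesicOn hr'.isGeodesicOn
  have h := hconv.2 (left_mem_Icc.2 zero_le_one) (right_mem_Icc.2 zero_le_one)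
    (sub_nonneg.2 hτ.2) hτ.1 (by ring)
  simpa [hr.map_zero, hr'.map_zero] using h

/-- By the triangle inequality `r` and `r'` are opposite near `x`; by convexity of the distance this
extends to all of the rays. -/
theorem areOppositeRays_of_dist_eq (hS : IsBusemannSpace S) {r r' : ℝ → S} (hr : IsRayFrom x r)
    (hr' : IsRayFrom x r') {a b : ℝ} (ha : 0 < a) (hb : 0 < b) (hab : dist (r a) (r' b) = a + b) :
    AreOppositeRays x r r' := by
  have hnear {c d : ℝ} (hc : c ∈ Icc 0 a) (hd : d ∈ Icc 0 b) : c + d ≤ dist (r c) (r' d) := by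
    have htriangle := dist_triangle4 (r a) (r c) (r' d) (r' b)
    rw [hab, hr.dist_eq a c ha.le hc.1, hr'.dist_eq d b hd.1 hb.le,
      abs_of_nonneg (sub_nonneg.2 hc.2), abs_of_nonpos (sub_nonpos.2 hd.2)] at htriangle
    linarith
  refine ⟨hr, hr', fun c d hc hd => le_antisymm ?_ ?_⟩
  · have htriangle := dist_triangle_left (r c) (r' d) x
    rwa [hr.dist_base hc, hr'.dist_base hd] at htriangle
  have hsmall (e : ℝ) {δ : ℝ} (hδ : 0 < δ) : ∀ᶠ τ in 𝓝[>] (0 : ℝ), τ * e ≤ δ := by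
    have hlim : Tendsto (fun τ : ℝ => τ * e) (𝓝 0) (𝓝 0) := by
      simpa only [zero_mul, id] using (tendsto_id (x := 𝓝 (0 : ℝ))).mul_const e
    exact nhdsWithin_le_nhds (hlim.eventually_le_const hδ)
  obtain ⟨τ, hτc, hτd, hτ1, hτ0⟩ := ((hsmall c ha).and ((hsmall d hb).and
    ((hsmall 1 one_pos).and self_mem_nhdsWithin))).exists
  rw [mul_one] at hτ1
  refine le_of_mul_le_mul_left ?_ hτ0
  calc τ * (c + d) = τ * c + τ * d := mul_add τ c d
    _ ≤ dist (r (τ * c)) (r' (τ * d)) := hnear ⟨by positivity, hτc⟩ ⟨by positivity, hτd⟩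
    _ ≤ τ * dist (r c) (r' d) := hS.dist_mul_mul_le hr hr' hc hd ⟨hτ0.le, hτ1⟩

theorem areOppositeRays_of_not_inter_subset (hS : IsBusemannSpace S) {a b b' : ℝ → S}
    (ha : IsRayFrom x a) (hb : AreOppositeRays x b b')
    (hab : ¬ a '' Ici 0 ∩ b '' Ici 0 ⊆ {x}) : AreOppositeRays x a b' := by
  obtain ⟨_, ⟨⟨t, ht, rfl⟩, u, hu, htu⟩, hne⟩ := not_subset.1 hab
  have hut : u = t := by rw [← hb.left.dist_base hu, htu, ha.dist_base ht]
  subst hut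
  refine hS.areOppositeRays_of_dist_eq ha hb.right (a := u) (b := 1) ?_ one_pos ?_
  · exact lt_of_le_of_ne ht fun h => hne ((ha.eq_base_iff ht).2 h.symm)
  · rw [← htu, hb.dist_eq u 1 ht zero_le_one]

theorem areOppositeRays_and_of_not_inter_subset (hS : IsBusemannSpace S) {a a' b b' : ℝ → S}
    (ha : AreOppositeRays x a a') (hb : AreOppositeRays x b b')
    (hab : ¬ a '' Ici 0 ∩ b '' Ici 0 ⊆ {x}) : AreOppositeRays x a b' ∧ AreOppositeRays x b a' :=
  ⟨hS.areOppositeRays_of_not_inter_subset ha.left hb hab,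
    hS.areOppositeRays_of_not_inter_subset hb.left ha (inter_comm _ _ ▸ hab)⟩

theorem dist_lt_add_of_not_areOppositeRays (hS : IsBusemannSpace S) {r r' : ℝ → S}
    (hr : IsRayFrom x r) (hr' : IsRayFrom x r') {a b : ℝ} (ha : 0 < a) (hb : 0 < b)
    (h : ¬ AreOppositeRays x r r') : dist (r a) (r' b) < a + b := by
  have htriangle := dist_triangle_left (r a) (r' b) x
  rw [hr.dist_base ha.le, hr'.dist_base hb.le] at htriangle
  exact htriangle.lt_of_ne fun hab => h (hS.areOppositeRays_of_dist_eq hr hr' ha hb hab)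

variable (Φ : S ≃ₜ ℂ) (hΦ : Φ x = 0) {a a' b b' : ℝ → S}

theorem gap_slit_eq_of_not_areOppositeRays (hS : IsBusemannSpace S) (ha : AreOppositeRays x a a')
    (hb : AreOppositeRays x b b') (hab : ¬ AreOppositeRays x a b) :
    (ha.right.slit Φ hΦ).gap (hb.right.slit Φ hΦ) (a 1) =
      (ha.right.slit Φ hΦ).gap (hb.right.slit Φ hΦ) (b 1) := by
  obtain ⟨K, hK, haK, hbK, hbetween⟩ :=
    hS.1.exists_isPreconnected_forall_dist_add_dist_eq (a 1) (b 1)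
  have hlt := hS.dist_lt_add_of_not_areOppositeRays ha.left hb.left one_pos one_pos hab
  refine Slit.gap_eq_gap_of_isPreconnected hK (disjoint_left.2 fun z hz => ?_)
    (disjoint_left.2 fun z hz => ?_) haK hbK
  · refine ha.notMem_of_dist_add_dist_eq zero_le_one ?_ (hbetween z hz)
    rwa [hb.left.dist_base zero_le_one]
  · refine hb.notMem_of_dist_add_dist_eq zero_le_one (q := a 1) ?_ ?_
    · rwa [ha.left.dist_base zero_le_one, dist_comm]
    · rw [dist_comm (b 1) z, dist_comm z (a 1), add_comm, hbetween z hz, dist_comm]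

theorem areOppositeRays_or_areOppositeRays_of_gap_slit_eq (hS : IsBusemannSpace S)
    (ha : AreOppositeRays x a a') (hb : AreOppositeRays x b b')
    (hab' : a '' Ici 0 ∩ b' '' Ici 0 ⊆ {x}) (ha'b' : a' '' Ici 0 ∩ b' '' Ici 0 ⊆ {x})
    (hside : (ha.left.slit Φ hΦ).gap (ha.right.slit Φ hΦ) (b 1) =
      (ha.left.slit Φ hΦ).gap (ha.right.slit Φ hΦ) (b' 1)) :
    AreOppositeRays x a b ∨ AreOppositeRays x b a' := by
  by_contra! hnot
  exact Slit.not_forall_gap_eq_gap_pt (not_exists_isLogAt_homeomorph_complex Φ hΦ)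
    (A := ha.left.slit Φ hΦ) (B := ha.right.slit Φ hΦ) (C := hb.right.slit Φ hΦ)
    ha.inter_subset ha'b' (inter_comm _ _ ▸ hab') (b 1)
    ⟨hside, (hS.gap_slit_eq_of_not_areOppositeRays Φ hΦ ha hb hnot.1).symm,
      hS.gap_slit_eq_of_not_areOppositeRays Φ hΦ hb ha.symm hnot.2⟩

theorem areOppositeRays_or_of_inter_subset (hS : IsBusemannSpace S) (ha : AreOppositeRays x a a')
    (hb : AreOppositeRays x b b') (hab : a '' Ici 0 ∩ b '' Ici 0 ⊆ {x})
    (hab' : a '' Ici 0 ∩ b' '' Ici 0 ⊆ {x}) (ha'b : a' '' Ici 0 ∩ b '' Ici 0 ⊆ {x})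
    (ha'b' : a' '' Ici 0 ∩ b' '' Ici 0 ⊆ {x})
    (hside : (ha.left.slit Φ hΦ).gap (ha.right.slit Φ hΦ) (b 1) =
      (ha.left.slit Φ hΦ).gap (ha.right.slit Φ hΦ) (b' 1)) :
    AreOppositeRays x a b' ∧ AreOppositeRays x b a' ∨
      AreOppositeRays x a b ∧ AreOppositeRays x b' a' := by
  have hside' : (hb.left.slit Φ hΦ).gap (hb.right.slit Φ hΦ) (a 1) =
      (hb.left.slit Φ hΦ).gap (hb.right.slit Φ hΦ) (a' 1) :=
    Slit.gap_pt_eq_gap_pt_comm (not_exists_isLogAt_homeomorph_complex Φ hΦ)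
      (A := ha.left.slit Φ hΦ) (B := ha.right.slit Φ hΦ) (C := hb.left.slit Φ hΦ)
      (D := hb.right.slit Φ hΦ) ha.inter_subset hab hab' ha'b ha'b' hside
  have hopp_b : AreOppositeRays x a b ∨ AreOppositeRays x b a' :=
    hS.areOppositeRays_or_areOppositeRays_of_gap_slit_eq Φ hΦ ha hb hab' ha'b' hside
  have hopp_b' : AreOppositeRays x a b' ∨ AreOppositeRays x b' a' :=
    hS.areOppositeRays_or_areOppositeRays_of_gap_slit_eq Φ hΦ ha hb.symm hab ha'b hside.symm
  have hopp_a : AreOppositeRays x b a ∨ AreOppositeRays x a b' :=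
    hS.areOppositeRays_or_areOppositeRays_of_gap_slit_eq Φ hΦ hb ha (inter_comm _ _ ▸ ha'b)
      (inter_comm _ _ ▸ ha'b') hside'
  have hopp_a' : AreOppositeRays x b a' ∨ AreOppositeRays x a' b' :=
    hS.areOppositeRays_or_areOppositeRays_of_gap_slit_eq Φ hΦ hb ha.symm (inter_comm _ _ ▸ hab)
      (inter_comm _ _ ▸ hab') hside'.symm
  rw [areOppositeRays_comm (r := b) (r' := a)] at hopp_a
  rw [areOppositeRays_comm (r := a') (r' := b')] at hopp_a'
  tauto

end IsBusemannSpace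

theorem IsBusemannSurface.areOppositeRays_or_of_image_subset (hS : IsBusemannSurface S)
    {a a' b b' : ℝ → S} (ha : AreOppositeRays x a a') (hb : AreOppositeRays x b b') {C : Set S}
    (hC : IsPreconnected C) (hCa : Disjoint C (a '' Ici 0 ∪ a' '' Ici 0))
    (hbC : b '' Ici 0 ∪ b' '' Ici 0 ⊆ C ∪ (a '' Ici 0 ∪ a' '' Ici 0)) :
    AreOppositeRays x a b' ∧ AreOppositeRays x b a' ∨
      AreOppositeRays x a b ∧ AreOppositeRays x b' a' := by
  by_cases hab : a '' Ici 0 ∩ b '' Ici 0 ⊆ {x}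
  swap
  · exact .inl (hS.1.areOppositeRays_and_of_not_inter_subset ha hb hab)
  by_cases hab' : a '' Ici 0 ∩ b' '' Ici 0 ⊆ {x}
  swap
  · exact .inr (hS.1.areOppositeRays_and_of_not_inter_subset ha hb.symm hab')
  by_cases ha'b : a' '' Ici 0 ∩ b '' Ici 0 ⊆ {x}
  swap
  · have h := hS.1.areOppositeRays_and_of_not_inter_subset ha.symm hb ha'b
    exact .inr ⟨h.2.symm, h.1.symm⟩
  by_cases ha'b' : a' '' Ici 0 ∩ b' '' Ici 0 ⊆ {x}
  swap
  · have h := hS.1.areOppositeRays_and_of_not_inter_subset ha.symm hb.symm ha'b'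
    exact .inl ⟨h.2.symm, h.1.symm⟩
  obtain ⟨Φ, hΦ⟩ := hS.exists_homeomorph_complex x
  rw [disjoint_union_right] at hCa
  rw [union_subset_iff] at hbC
  have hside := Slit.gap_eq_gap_of_isPreconnected (A := ha.left.slit Φ hΦ)
    (B := ha.right.slit Φ hΦ) hC hCa.1 hCa.2
    (hb.left.apply_one_mem_of_image_subset hbC.1 hab ha'b)
    (hb.right.apply_one_mem_of_image_subset hbC.2 hab' ha'b')
  exact hS.1.areOppositeRays_or_of_inter_subset Φ hΦ ha hb hab hab' ha'b ha'b' hside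

end Busemann

/-- If `ℓ'` is a geodesic line contained in a closed halfplane of the line
`ℓ` and `x = ℓ s = ℓ' s'` is a common point, then, denoting the four rays from `x` by
`r₁ = ℓ((-∞,s])`, `r₄ = ℓ([s,∞))`, `r₂ = ℓ'((-∞,s'])`, `r₃ = ℓ'([s',∞))`, after possibly
exchanging the labels of `r₂` and `r₃`, both `r₁ ∪ r₃` and `r₂ ∪ r₄` are lines. -/
theorem busemann_surface_two_lines {S : Type*} [MetricSpace S]
    (hS : IsBusemannSurface S)
    (ℓ ℓ' : ℝ → S) (hℓ : Isometry ℓ) (hℓ' : Isometry ℓ')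
    (hhalf : ∃ H : Set S, IsClosedHalfplane (Set.range ℓ) H ∧ Set.range ℓ' ⊆ H)
    (s s' : ℝ) (hx : ℓ s = ℓ' s') :
    (IsLineSet (ℓ '' Set.Iic s ∪ ℓ' '' Set.Ici s') ∧
       IsLineSet (ℓ' '' Set.Iic s' ∪ ℓ '' Set.Ici s)) ∨
    (IsLineSet (ℓ '' Set.Iic s ∪ ℓ' '' Set.Iic s') ∧
       IsLineSet (ℓ' '' Set.Ici s' ∪ ℓ '' Set.Ici s)) := by
  obtain ⟨_, ⟨_, ⟨z, -, rfl⟩, rfl⟩, hℓ'_sub⟩ := hhalf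
  have hopp := areOppositeRays_of_isometry hℓ s
  have hopp' := hx ▸ areOppositeRays_of_isometry hℓ' s'
  have hpairs := hS.areOppositeRays_or_of_image_subset hopp hopp'
    (C := connectedComponentIn (range ℓ)ᶜ z) isPreconnected_connectedComponentIn
  simp only [image_comp_const_sub_union_image_comp_const_add] at hpairs
  have hdisj : Disjoint (connectedComponentIn (range ℓ)ᶜ z) (range ℓ) :=
    disjoint_compl_left.mono_left (connectedComponentIn_subset _ _)
  rw [← image_comp_const_sub_Ici_zero ℓ, ← image_comp_const_sub_Ici_zero ℓ',
    ← image_comp_const_add_Ici_zero ℓ, ← image_comp_const_add_Ici_zero ℓ']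
  exact (hpairs hdisj hℓ'_sub).imp (fun h => h.imp (·.isLineSet_union) (·.isLineSet_union))
    fun h => h.imp (·.isLineSet_union) (·.isLineSet_union)
end
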